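/- Every self-conformal measure on ℝ^d is tangent-regular: if μ is a self-conformal measure associated to a conformal iterated function system Φ on ℝ^d, then for μ-almost every x, every tangent distribution P of μ at x satisfies dim η = dim μ for P-almost every η. -/

import Mathlib

/-!
Write `α = dim μ`. The maps of a conformal system have compositions of uniformly bounded
distortion (`dist_distortion`: Hölder continuity of the derivatives and exponential contraction
make the scaling factors of a word comparable at all points, and an injective map with controlled
derivative expands balls, `le_mul_dist_of_injOn`). Hence `μ` is the stationary measure of a
quasi-self-similar system (`QSS`, `exists_qss`), and everything else is proved for such systems; no
separation condition is used.

*Upper local dimension.* For almost every `x`, `μ (B(x, 2 ^ (-k))) ≥ 2 ^ (-k β)` for all large `k`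
whenever `β > α` (`QSS.eventually_heavy`). The points where this fails for infinitely many `k` form
an essentially invariant set, so by a zero-one law they would have full measure. Then a typical
infinite word parses into blocks whose pieces lie in light balls, up to a small proportion of
single letters (`QSS.parse_nbad`, `QSS.exists_few_bad`), and an induction over the blocks
(`QSS.T_le`) gives a Frostman bound with an exponent above `α` (`QSS.le_mdim_of_light`),
which is absurd. It follows that balls around typical points are doubling at most scales
(`QSS.ball_doubling`).

*Lower bound for tangent measures.* For `s < α` the measure is `s`-Frostman on a set of almost full
mass; copying this set into all pieces of size about `R` gives the same bound relative to the
scale `R`, with uniform constants (`QSS.local_frostman`). At a doubling time the magnification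
`μ_{x,t}` inherits it in the form `ContentLE`, a weakly closed condition. A closed condition which
holds outside a set of times of density `q` holds with `P`-probability at least `1 - q` for every
tangent distribution `P` (`tangent_compl_le`), so `dim η ≥ s` for `P`-almost every `η`.

*Upper bound for tangent measures.* In a dyadic grid with a random shift, cells around typical
points contain balls of comparable size at most times (`exists_shift`). The local
Frostman bound shows that over `n` generations the mass of the cell rarely decreases by less than
`2 ^ (-n s)`, `s < α`; since its total decrease over `T` generations is at most `2 ^ (-T β)`,
`β > α`, it also rarely decreases by more than `2 ^ (-n (α + κ))` (`QSS.freq_light_le`). By a law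
of large numbers along the refining grid partitions (`lln_sets`), for most `t` a large part of
the cell of time `t` then consists of points with heavy balls of radius about `2 ^ (-(t + n))`.
This passes to tangent measures as a closed condition, and gives `dim η ≤ α + κ`
(`QSS.tangent_upper`).
-/

open MeasureTheory Metric Filter Set Topology
open scoped ENNReal NNReal Pointwise

noncomputable section

/-- `ℝ^d` with the maximum metric, so that `ball 0 1 = (-1,1)^d`. -/
abbrev Euc (d : ℕ) : Type := Fin d → ℝ

/-- The (lower Hausdorff) dimension of a measure:
`dim μ = inf { dim_H A : A Borel, μ A > 0 }`. -/
def mdim {X : Type*} [EMetricSpace X] [MeasurableSpace X] (μ : Measure X) : ℝ≥0∞ :=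
  ⨅ (A : Set X) (_ : MeasurableSet A) (_ : 0 < μ A), dimH A

/-- The topological support of a measure. -/
def msupport {X : Type*} [TopologicalSpace X] [MeasurableSpace X] (μ : Measure X) : Set X :=
  {x | ∀ U : Set X, IsOpen U → x ∈ U → 0 < μ U}

/-- The matrix of the derivative of `f` at `x`. -/
def Dmat {d : ℕ} (f : Euc d → Euc d) (x : Euc d) : Matrix (Fin d) (Fin d) ℝ :=
  LinearMap.toMatrix' (fderiv ℝ f x : Euc d →ₗ[ℝ] Euc d)

/-- The conformal scaling factor `‖Df(x)‖ = |det Df(x)|^{1/d}` of a conformal map. -/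
def confScale {d : ℕ} (f : Euc d → Euc d) (x : Euc d) : ℝ :=
  |LinearMap.det (fderiv ℝ f x : Euc d →ₗ[ℝ] Euc d)| ^ ((d : ℝ)⁻¹)

/-- The special orthogonal group `SO(d)`, as a set of matrices. -/
def SOset (d : ℕ) : Set (Matrix (Fin d) (Fin d) ℝ) :=
  {O | O ∈ Matrix.orthogonalGroup (Fin d) ℝ ∧ O.det = 1}

/-- The conformal orthogonal group `CO(d) = {rO : r > 0, O ∈ SO(d)}`, as a set of matrices. -/
def COset (d : ℕ) : Set (Matrix (Fin d) (Fin d) ℝ) :=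
  {A | ∃ r : ℝ, 0 < r ∧ ∃ O ∈ SOset d, A = r • O}

/-- `⟨A⟩`: the closure of the set of finite (nonempty) products of elements of `A`. -/
def genClosure {G : Type*} [Monoid G] [TopologicalSpace G] (A : Set G) : Set G :=
  closure {g | ∃ l : List G, l ≠ [] ∧ (∀ x ∈ l, x ∈ A) ∧ l.prod = g}

/-- `f` is a conformal map on `U`: injective on `U`, `closure (f '' U) ⊆ U`, differentiable
with conformal derivative `Df(x) = c • O`, `O` orthogonal, and `Df` Hölder continuous. -/
def IsConformalMapOn (d : ℕ) (f : Euc d → Euc d) (U : Set (Euc d)) : Prop :=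
  Set.InjOn f U ∧ closure (f '' U) ⊆ U ∧ (∀ x ∈ U, DifferentiableAt ℝ f x) ∧
    (∀ x ∈ U, ∃ c : ℝ, 0 < c ∧ ∃ O ∈ Matrix.orthogonalGroup (Fin d) ℝ,
      (fderiv ℝ f x : Euc d →ₗ[ℝ] Euc d) = c • O.mulVecLin) ∧
    (∃ C α : ℝ≥0, 0 < α ∧ HolderOnWith C α (fun x => fderiv ℝ f x) U)

/-- A conformal iterated function system on `(-1,1)^d`: at least two contractive
conformal maps. -/
structure ConformalIFS (d : ℕ) where
  n : ℕ
  two_le : 2 ≤ n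
  funs : Fin n → Euc d → Euc d
  conf : ∀ i, IsConformalMapOn d (funs i) (Metric.ball 0 1)
  contr : ∀ i, ∃ r : ℝ, r < 1 ∧ ∀ x ∈ Metric.ball (0 : Euc d) 1, confScale (funs i) x ≤ r

/-- `μ` is a self-conformal measure associated to `Φ`: a Borel probability measure on
`(-1,1)^d` with `μ = Σ_i p_i • (f_i)_* μ` for a strictly positive probability vector `p`. -/
def IsSelfConformal {d : ℕ} (Φ : ConformalIFS d) (μ : Measure (Euc d)) : Prop :=
  IsProbabilityMeasure μ ∧ μ (Metric.ball (0 : Euc d) 1)ᶜ = 0 ∧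
    ∃ p : Fin Φ.n → ℝ≥0∞, (∀ i, 0 < p i) ∧ (∑ i, p i) = 1 ∧
      μ = ∑ i, p i • μ.map (Φ.funs i)

/-- `K` is the attractor of `Φ`: the unique nonempty compact set with `K = ⋃ i, f_i(K)`. -/
def IsAttractor {d : ℕ} (Φ : ConformalIFS d) (K : Set (Euc d)) : Prop :=
  K.Nonempty ∧ IsCompact K ∧ K ⊆ Metric.ball 0 1 ∧ K = ⋃ i, Φ.funs i '' K

/-- `Φ` is totally non-linear: for every conformal map `g` of `(-1,1)^d` there is `f ∈ Φ`
such that `g ∘ f ∘ g⁻¹` is not (the restriction of) an affine map. -/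
def TotallyNonLinear {d : ℕ} (Φ : ConformalIFS d) : Prop :=
  ∀ g : Euc d → Euc d, IsConformalMapOn d g (Metric.ball 0 1) →
    ∃ i, ¬ ∃ A : Euc d →ᵃ[ℝ] Euc d, ∀ x ∈ Metric.ball (0 : Euc d) 1, g (Φ.funs i x) = A (g x)

/-- All maps of `Φ` are orientation-preserving. -/
def OrientationPreserving {d : ℕ} (Φ : ConformalIFS d) : Prop :=
  ∀ i, ∀ x ∈ Metric.ball (0 : Euc d) 1,
    0 < LinearMap.det (fderiv ℝ (Φ.funs i) x : Euc d →ₗ[ℝ] Euc d)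

instance {X : Type*} [MeasurableSpace X] : MeasurableSpace (ProbabilityMeasure X) :=
  inferInstanceAs (MeasurableSpace {μ : Measure X // IsProbabilityMeasure μ})

section Scenery

variable {X : Type*} [NormedAddCommGroup X] [NormedSpace ℝ X] [MeasurableSpace X] [BorelSpace X]

/-- The rescaled measure `μ_{x,t}`, with `μ_{x,t}(A) = μ(2^{-t}A + x)/μ(B(x,2^{-t}))`,
viewed as a measure on `B(0,1)`. -/
def resc (μ : Measure X) (x : X) (t : ℝ) : Measure X :=
  (μ (closedBall x ((2 : ℝ) ^ (-t))))⁻¹ •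
    ((μ.map (fun y => (2 : ℝ) ^ t • (y - x))).restrict (closedBall (0 : X) 1))

open Classical in
/-- `μ_{x,t}` as a probability measure (junk value if the normalization fails). -/
def rescPM (μ : Measure X) (x : X) (t : ℝ) : ProbabilityMeasure X :=
  if h : IsProbabilityMeasure (resc μ x t) then ⟨resc μ x t, h⟩
  else ⟨Measure.dirac 0, Measure.dirac.isProbabilityMeasure⟩

/-- `P` is a tangent distribution of `μ` at `x`: a weak-* accumulation point, as `T → ∞`,
of the sceneries `⟨μ⟩_{x,T} = (1/T)∫_0^T δ_{μ_{x,t}} dt`. -/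
def IsTangentDistribution (μ : Measure X) (x : X) (P : Measure (ProbabilityMeasure X)) : Prop :=
  IsProbabilityMeasure P ∧
    ∃ T : ℕ → ℝ, (∀ n, 1 ≤ T n) ∧ Tendsto T atTop atTop ∧
      ∀ F : BoundedContinuousFunction (ProbabilityMeasure X) ℝ,
        Tendsto (fun n => (T n)⁻¹ * ∫ t in Set.Ioc (0 : ℝ) (T n), F (rescPM μ x t))
          atTop (𝓝 (∫ η, F η ∂P))

/-- `μ` is tangent-regular: at `μ`-a.e. `x`, every tangent distribution `P` of `μ` at `x`
satisfies `dim η = dim μ` for `P`-a.e. `η`. -/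
def TangentRegular (μ : Measure X) : Prop :=
  ∀ᵐ x ∂μ, ∀ P : Measure (ProbabilityMeasure X), IsTangentDistribution μ x P →
    ∀ᵐ η : ProbabilityMeasure X ∂P, mdim η.toMeasure = mdim μ

/-- The magnification semiflow `S_t : μ ↦ μ_{0,t}` on probability measures. -/
def stMap (t : ℝ) (η : ProbabilityMeasure X) : ProbabilityMeasure X :=
  rescPM η.toMeasure 0 t

/-- `P` is a fractal distribution: an `S_t`-invariant, quasi-Palm probability
distribution on measures. -/
def IsFractalDistribution (P : Measure (ProbabilityMeasure X)) : Prop :=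
  IsProbabilityMeasure P ∧
    (∀ t : ℝ, 0 ≤ t → P.map (stMap t) = P) ∧
    ∀ A : Set (ProbabilityMeasure X), MeasurableSet A → P Aᶜ = 0 →
      ∀ᵐ η : ProbabilityMeasure X ∂P, ∀ᵐ x ∂η.toMeasure, ∀ t : ℝ, 0 ≤ t →
        closedBall x ((2 : ℝ) ^ (-t)) ⊆ closedBall (0 : X) 1 → rescPM η.toMeasure x t ∈ A

/-- `P` is an ergodic fractal distribution. -/
def IsErgodicFD (P : Measure (ProbabilityMeasure X)) : Prop :=
  IsFractalDistribution P ∧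
    ∀ A : Set (ProbabilityMeasure X), MeasurableSet A →
      (∀ t : ℝ, 0 ≤ t → stMap t ⁻¹' A = A) → P A = 0 ∨ P Aᶜ = 0

/-- `μ` is exact-dimensional: the local dimension exists `μ`-a.e. and equals `dim μ`. -/
def ExactDimensional (μ : Measure X) : Prop :=
  ∀ᵐ x ∂μ, Tendsto (fun r : ℝ => Real.log (μ (closedBall x r)).toReal / Real.log r)
    (𝓝[>] (0 : ℝ)) (𝓝 (mdim μ).toReal)

end Scenery

/-- `M` is a `C^k` hypersurface: locally the zero set of a `C^k` real-valued function
with non-vanishing derivative. -/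
def IsCkHypersurface {X : Type*} [NormedAddCommGroup X] [NormedSpace ℝ X]
    (k : ℕ∞) (M : Set X) : Prop :=
  ∀ x ∈ M, ∃ (U : Set X) (F : X → ℝ), IsOpen U ∧ x ∈ U ∧ ContDiffOn ℝ k F U ∧
    (∀ y ∈ U, fderiv ℝ F y ≠ 0) ∧ M ∩ U = {y ∈ U | F y = 0}

/-- An analytic curve: the image of a non-constant real-analytic map defined on an
open interval. -/
def IsAnalyticCurve {d : ℕ} (C : Set (Euc d)) : Prop :=
  ∃ (I : Set ℝ) (γ : ℝ → Euc d), IsOpen I ∧ I.OrdConnected ∧ I.Nonempty ∧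
    AnalyticOnNhd ℝ γ I ∧ (∃ s ∈ I, ∃ t ∈ I, γ s ≠ γ t) ∧ C = γ '' I

/-- An affine hyperplane in `ℝ^d`. -/
def IsAffineHyperplane {d : ℕ} (H : Set (Euc d)) : Prop :=
  ∃ (v : Euc d) (c : ℝ), v ≠ 0 ∧ H = {x : Euc d | (∑ i, v i * x i) = c}

/-- A (d-1)-dimensional (Euclidean) sphere in `ℝ^d`. -/
def IsEucSphere {d : ℕ} (S : Set (Euc d)) : Prop :=
  ∃ (z : Euc d) (r : ℝ), 0 < r ∧ S = {x : Euc d | (∑ i, (x i - z i) ^ 2) = r ^ 2}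

/-- `ν` is `s`-Ahlfors-regular. -/
def IsAhlforsRegular {d : ℕ} (ν : Measure (Euc d)) (s : ℝ) : Prop :=
  ν ≠ 0 ∧ ∃ C : ℝ≥0∞, 1 ≤ C ∧ C ≠ ∞ ∧ ∀ x ∈ msupport ν, ∀ r : ℝ, 0 < r →
    r ≤ Metric.diam (msupport ν) →
      ENNReal.ofReal (r ^ s) / C ≤ ν (closedBall x r) ∧
        ν (closedBall x r) ≤ C * ENNReal.ofReal (r ^ s)

/-- `xf` assigns to each map of `Φ` its fixed point in `(-1,1)^d`. -/
def IsFixedPoints {d : ℕ} (Φ : ConformalIFS d) (xf : Fin Φ.n → Euc d) : Prop :=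
  ∀ i, xf i ∈ Metric.ball (0 : Euc d) 1 ∧ Φ.funs i (xf i) = xf i

/-- `λ(f_i)`: the contraction ratio of `f_i` at its fixed point. -/
def fixLam {d : ℕ} (Φ : ConformalIFS d) (xf : Fin Φ.n → Euc d) (i : Fin Φ.n) : ℝ :=
  confScale (Φ.funs i) (xf i)

/-- `O(f_i)`: the rotation part of `Df_i` at the fixed point of `f_i`. -/
def fixO {d : ℕ} (Φ : ConformalIFS d) (xf : Fin Φ.n → Euc d) (i : Fin Φ.n) :
    Matrix (Fin d) (Fin d) ℝ :=
  (fixLam Φ xf i)⁻¹ • Dmat (Φ.funs i) (xf i)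

/-- `O(Φ) = {O(f), O(f)⁻¹ : f ∈ Φ}`. -/
def OsetOf {d : ℕ} (Φ : ConformalIFS d) (xf : Fin Φ.n → Euc d) :
    Set (Matrix (Fin d) (Fin d) ℝ) :=
  {M | ∃ i, M = fixO Φ xf i ∨ M = (fixO Φ xf i)⁻¹}

/-- `S_t (L, I)`: push a measure on `ℝ^d × ℝ^d` forward by `(u,v) ↦ (Lu, v)` and
magnify by `S_t`. -/
def StLI {d : ℕ} (L : Matrix (Fin d) (Fin d) ℝ) (t : ℝ)
    (η : ProbabilityMeasure (Euc d × Euc d)) : ProbabilityMeasure (Euc d × Euc d) :=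
  rescPM (η.toMeasure.map (fun p => (L.mulVec p.1, p.2))) 0 t

/-- The matrix of `D(h ∘ f ∘ h⁻¹)` at `h z`, computed by the chain rule. -/
def DfhMat {d : ℕ} (h f : Euc d → Euc d) (z : Euc d) : Matrix (Fin d) (Fin d) ℝ :=
  Dmat h (f z) * Dmat f z * (Dmat h z)⁻¹

/-- The space of conformal maps of `(-1,1)^d`, with the topology of uniform convergence. -/
abbrev ConfMaps (d : ℕ) :=
  {g : UniformFun (Euc d) (Euc d) //
    IsConformalMapOn d (UniformFun.toFun g) (Metric.ball 0 1)}

noncomputable instance (d : ℕ) : MeasurableSpace (ConfMaps d) := borel (ConfMaps d)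

end

namespace TangentReg

/-! ### Frequencies and a law of large numbers -/

open Classical in
/-- `FreqLE S q`: eventually (in `T`) at most `q * T` of the integers `t < T` lie in `S`, so the
upper density of `S` is at most `q`. -/
def FreqLE (S : Set ℕ) (q : ℝ) : Prop :=
  ∀ᶠ T : ℕ in atTop, (((Finset.range T).filter (fun t => t ∈ S)).card : ℝ) ≤ q * T

lemma FreqLE.mono {S S' : Set ℕ} {q q' : ℝ} (h : FreqLE S q) (hS : S' ⊆ S) (hq : q ≤ q') :
    FreqLE S' q' := by
  filter_upwards [h] with T hT
  refine le_trans ?_ (hT.trans (mul_le_mul_of_nonneg_right hq (Nat.cast_nonneg T)))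
  exact_mod_cast Finset.card_le_card fun t ht => by
    simp only [Finset.mem_filter] at ht ⊢
    exact ⟨ht.1, hS ht.2⟩

lemma FreqLE.union {S S' : Set ℕ} {q q' : ℝ} (h : FreqLE S q) (h' : FreqLE S' q') :
    FreqLE (S ∪ S') (q + q') := by
  filter_upwards [h, h'] with T hT hT'
  rw [add_mul]
  refine le_trans ?_ (add_le_add hT hT')
  norm_cast
  refine le_trans (Finset.card_le_card ?_) (Finset.card_union_le _ _)
  intro t ht
  simp only [Finset.mem_filter, Finset.mem_union] at ht ⊢
  rcases ht.2 with h1 | h1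
  · exact Or.inl ⟨ht.1, h1⟩
  · exact Or.inr ⟨ht.1, h1⟩

lemma FreqLE.iUnion {ι : Type*} (s : Finset ι) {S : ι → Set ℕ} {q : ℝ}
    (h : ∀ i ∈ s, FreqLE (S i) q) : FreqLE (⋃ i ∈ s, S i) (s.card * q) := by
  classical
  induction s using Finset.induction_on with
  | empty => simp [FreqLE]
  | insert a s ha ih =>
    rw [Finset.set_biUnion_insert, Finset.card_insert_of_notMem ha]
    have := (h a (by simp)).union (ih fun i hi => h i (by simp [hi]))
    refine this.mono le_rfl ?_
    push_cast
    linarith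

open Classical in
/-- A set of density `≤ q`, shifted to the left by one, has density `≤ q + ε`. -/
lemma FreqLE.succ {S : Set ℕ} {q : ℝ} (h : FreqLE S q) {ε : ℝ} (hε : 0 < ε) :
    FreqLE {t | t + 1 ∈ S} (q + ε) := by
  have h1 := (tendsto_add_atTop_nat 1).eventually h
  have h2 : ∀ᶠ T : ℕ in atTop, |q| / ε ≤ T := by
    obtain ⟨N, hN⟩ := exists_nat_ge (|q| / ε)
    filter_upwards [eventually_ge_atTop N] with T hT
    exact hN.trans (by exact_mod_cast hT)
  filter_upwards [h1, h2] with T hT hT2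
  rw [div_le_iff₀ hε] at hT2
  have hc : ((Finset.range T).filter (fun t => t ∈ {t | t + 1 ∈ S})).card ≤
      ((Finset.range (T + 1)).filter (fun t => t ∈ S)).card := by
    refine Finset.card_le_card_of_injOn (fun t => t + 1) ?_ ?_
    · intro t ht
      simp only [Finset.coe_filter, Finset.mem_range, Set.mem_ofPred_eq] at ht ⊢
      exact ⟨by omega, ht.2⟩
    · intro a _ b _ hab
      simpa using hab
  have hc' : (((Finset.range T).filter (fun t => t ∈ {t | t + 1 ∈ S})).card : ℝ) ≤
      ((Finset.range (T + 1)).filter (fun t => t ∈ S)).card := by exact_mod_cast hc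
  push_cast at hT
  have := le_abs_self q
  simp only [mem_ofPred_eq] at hc' ⊢
  nlinarith

section LLN

variable {Ω : Type*} [MeasurableSpace Ω] (P : Measure Ω) [IsProbabilityMeasure P]

/-- Only the `2 n T` products of variables with indices less than `n` apart contribute. -/
lemma second_moment (Z : ℕ → Ω → ℝ) (hZ : ∀ t, Measurable (Z t)) (hb : ∀ t ω, |Z t ω| ≤ 1)
    (n : ℕ) (hort : ∀ s t, s + n ≤ t → ∫ ω, Z s ω * Z t ω ∂P = 0) (T : ℕ) :
    ∫ ω, (∑ t ∈ Finset.range T, Z t ω) ^ 2 ∂P ≤ 2 * n * T := by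
  have hintg : ∀ s t, Integrable (fun ω => Z s ω * Z t ω) P := fun s t => by
    refine Integrable.of_bound ((hZ s).mul (hZ t)).aestronglyMeasurable 1 ?_
    filter_upwards with ω
    rw [Real.norm_eq_abs, abs_mul]
    exact mul_le_one₀ (hb s ω) (abs_nonneg _) (hb t ω)
  have hb1 : ∀ s t, ∫ ω, Z s ω * Z t ω ∂P ≤
      if s + n ≤ t ∨ t + n ≤ s then (0 : ℝ) else 1 := by
    intro s t
    split_ifs with h
    · rcases h with h | h
      · exact (hort s t h).le
      · simp_rw [mul_comm (Z s _)]
        exact (hort t s h).le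
    · calc ∫ ω, Z s ω * Z t ω ∂P ≤ ∫ _, (1 : ℝ) ∂P := by
            refine integral_mono (hintg s t) (integrable_const _) fun ω => ?_
            refine (le_abs_self _).trans ?_
            rw [abs_mul]
            exact mul_le_one₀ (hb s ω) (abs_nonneg _) (hb t ω)
        _ = 1 := by simp
  simp_rw [sq, Finset.sum_mul_sum]
  rw [integral_finsetSum _ fun s _ => integrable_finsetSum _ fun t _ => hintg s t]
  simp_rw [integral_finsetSum _ fun t _ => hintg _ t]
  have hrow : ∀ s, ∑ t ∈ Finset.range T, ∫ ω, Z s ω * Z t ω ∂P ≤ 2 * n := by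
    intro s
    refine (Finset.sum_le_sum fun t _ => hb1 s t).trans ?_
    have : ∑ t ∈ Finset.range T, (if s + n ≤ t ∨ t + n ≤ s then (0 : ℝ) else 1) =
        ((Finset.range T).filter (fun t => ¬ (s + n ≤ t ∨ t + n ≤ s))).card := by
      rw [Finset.card_filter]
      push_cast
      exact Finset.sum_congr rfl fun t _ => by split_ifs <;> simp_all
    rw [this]
    have hc : ((Finset.range T).filter (fun t => ¬ (s + n ≤ t ∨ t + n ≤ s))).card ≤ 2 * n := by
      refine (Finset.card_le_card (t := Finset.Ico (s + 1 - n) (s + n)) ?_).trans ?_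
      · intro t ht
        simp only [Finset.mem_filter, Finset.mem_Ico] at ht ⊢
        omega
      · simp only [Nat.card_Ico]
        omega
    exact_mod_cast hc
  calc _ ≤ ∑ s ∈ Finset.range T, (2 * n : ℝ) := Finset.sum_le_sum fun s _ => hrow s
    _ = 2 * n * T := by simp; ring

/-- Strong law of large numbers for bounded variables which are orthogonal as soon as their
indices are `n` apart. -/
theorem lln_core (Z : ℕ → Ω → ℝ) (hZ : ∀ t, Measurable (Z t)) (hb : ∀ t ω, |Z t ω| ≤ 1)
    (n : ℕ) (hort : ∀ s t, s + n ≤ t → ∫ ω, Z s ω * Z t ω ∂P = 0) :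
    ∀ᵐ ω ∂P, Tendsto (fun T : ℕ => (∑ t ∈ Finset.range T, Z t ω) / T) atTop (𝓝 0) := by
  set S : ℕ → Ω → ℝ := fun T ω => ∑ t ∈ Finset.range T, Z t ω with hS
  have hSm : ∀ T, Measurable (S T) := fun T => Finset.measurable_fun_sum _ fun t _ => hZ t
  have hSb : ∀ T ω, |S T ω| ≤ T := fun T ω => by
    refine (Finset.abs_sum_le_sum_abs _ _).trans ?_
    refine (Finset.sum_le_sum fun t _ => hb t ω).trans ?_
    simp
  -- along the squares the second moments are summable
  set Y : ℕ → Ω → ℝ := fun k ω => (S ((k + 1) ^ 2) ω / ((k + 1 : ℝ) ^ 2)) ^ 2 with hY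
  have hYm : ∀ k, Measurable (Y k) := fun k => ((hSm _).div_const _).pow_const 2
  have hYi : ∀ k, ∫⁻ ω, ENNReal.ofReal (Y k ω) ∂P ≤
      ENNReal.ofReal (2 * n * (1 / ((k : ℝ) + 1) ^ 2)) := by
    intro k
    have hintg : Integrable (fun ω => (S ((k + 1) ^ 2) ω) ^ 2) P := by
      refine Integrable.of_bound ((hSm _).pow_const 2).aestronglyMeasurable
        ((((k + 1) ^ 2 : ℕ) : ℝ) ^ 2) ?_
      filter_upwards with ω
      rw [Real.norm_eq_abs, abs_pow]
      exact pow_le_pow_left₀ (abs_nonneg _) (hSb _ ω) 2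
    have hYe : Y k = fun ω => (S ((k + 1) ^ 2) ω) ^ 2 * (1 / ((k + 1 : ℝ) ^ 4)) := by
      funext ω
      simp only [hY]
      rw [div_pow]
      ring
    rw [← ofReal_integral_eq_lintegral_ofReal (show Integrable (Y k) P by rw [hYe]; exact hintg.mul_const _)
      (Eventually.of_forall fun ω => sq_nonneg _)]
    refine ENNReal.ofReal_le_ofReal ?_
    change ∫ ω, Y k ω ∂P ≤ _
    rw [hYe, integral_mul_const]
    have := second_moment P Z hZ hb n hort ((k + 1) ^ 2)
    calc _ ≤ (2 * n * (((k + 1) ^ 2 : ℕ) : ℝ)) * (1 / ((k + 1 : ℝ) ^ 4)) :=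
          mul_le_mul_of_nonneg_right this (by positivity)
      _ = _ := by
          push_cast
          field_simp
  have hfin : ∫⁻ ω, ∑' k, ENNReal.ofReal (Y k ω) ∂P ≠ ∞ := by
    rw [lintegral_tsum fun k => (hYm k).ennreal_ofReal.aemeasurable]
    refine ne_top_of_le_ne_top ?_ (ENNReal.tsum_le_tsum hYi)
    have hsum : Summable fun k : ℕ => 2 * (n : ℝ) * (1 / ((k : ℝ) + 1) ^ 2) := by
      refine Summable.mul_left _ ?_
      have := (summable_nat_add_iff 1).2 (Real.summable_one_div_nat_pow.2 (one_lt_two))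
      simpa using this
    rw [← ENNReal.ofReal_tsum_of_nonneg (fun k => by positivity) hsum]
    exact ENNReal.ofReal_ne_top
  have hae := ae_lt_top (Measurable.tsum fun k => (hYm k).ennreal_ofReal) hfin
  filter_upwards [hae] with ω hω
  have h0 := ENNReal.tendsto_atTop_zero_of_tsum_ne_top hω.ne
  have h1 : Tendsto (fun k => Y k ω) atTop (𝓝 0) := by
    have := (ENNReal.tendsto_toReal ENNReal.zero_ne_top).comp h0
    refine this.congr fun k => ?_
    simp only [Function.comp]
    exact ENNReal.toReal_ofReal (sq_nonneg _)
  have h2 : Tendsto (fun k : ℕ => |S ((k + 1) ^ 2) ω| / ((k + 1 : ℝ) ^ 2)) atTop (𝓝 0) := by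
    have := h1.sqrt
    rw [Real.sqrt_zero] at this
    refine this.congr fun k => ?_
    simp only [hY]
    rw [Real.sqrt_sq_eq_abs, abs_div, abs_of_pos (by positivity : (0 : ℝ) < (k + 1) ^ 2)]
  have h3 : Tendsto (fun k : ℕ => |S ((k + 1) ^ 2) ω| / ((k + 1 : ℝ) ^ 2) + 2 * (1 / ((k : ℝ) + 1)))
      atTop (𝓝 0) := by
    have := h2.add ((tendsto_one_div_add_atTop_nhds_zero_nat (𝕜 := ℝ)).const_mul 2)
    simpa using this
  have hsq : Tendsto (fun T : ℕ => Nat.sqrt T - 1) atTop atTop := by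
    refine tendsto_atTop.2 fun b => ?_
    filter_upwards [eventually_ge_atTop ((b + 1) * (b + 1))] with T hT
    have := Nat.le_sqrt.2 hT
    omega
  have h4 := h3.comp hsq
  refine squeeze_zero_norm' ?_ h4
  filter_upwards [eventually_ge_atTop 1] with T hT
  simp only [Function.comp]
  obtain ⟨k, hk⟩ : ∃ k, Nat.sqrt T = k + 1 := ⟨Nat.sqrt T - 1, by
    have := Nat.le_sqrt.2 (show 1 * 1 ≤ T by omega)
    omega⟩
  have hk1 : (k + 1) ^ 2 ≤ T := by rw [← hk]; exact Nat.sqrt_le' T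
  have hk2 : T ≤ (k + 1) ^ 2 + 2 * (k + 1) := by
    have := Nat.sqrt_le_add T
    rw [hk] at this
    nlinarith
  rw [hk, Nat.add_sub_cancel]
  have hdiff : |S T ω - S ((k + 1) ^ 2) ω| ≤ 2 * (k + 1) := by
    have : S T ω - S ((k + 1) ^ 2) ω = ∑ t ∈ Finset.Ico ((k + 1) ^ 2) T, Z t ω := by
      simp only [hS]
      rw [Finset.sum_Ico_eq_sub _ hk1]
    rw [this]
    refine (Finset.abs_sum_le_sum_abs _ _).trans ?_
    refine (Finset.sum_le_sum fun t _ => hb t ω).trans ?_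
    simp only [Finset.sum_const, Nat.card_Ico, nsmul_eq_mul, mul_one]
    have : T - (k + 1) ^ 2 ≤ 2 * (k + 1) := by omega
    exact_mod_cast this
  have hST : |S T ω| ≤ |S ((k + 1) ^ 2) ω| + 2 * (k + 1) := by
    have := abs_sub_abs_le_abs_sub (S T ω) (S ((k + 1) ^ 2) ω)
    linarith
  have hTpos : (0 : ℝ) < T := by exact_mod_cast hT
  have hk1' : ((k : ℝ) + 1) ^ 2 ≤ T := by exact_mod_cast hk1
  rw [Real.norm_eq_abs, abs_div, abs_of_pos hTpos]
  calc |S T ω| / T ≤ (|S ((k + 1) ^ 2) ω| + 2 * (k + 1)) / T := by gcongr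
    _ ≤ (|S ((k + 1) ^ 2) ω| + 2 * (k + 1)) / ((k : ℝ) + 1) ^ 2 := by gcongr
    _ = _ := by field_simp

variable {ι : Type*}

/-- The conditional probability of `Y` on the cell `{J = j}` (`0` on null cells). -/
noncomputable def cellAvg (J : Ω → ι) (Y : Set Ω) (j : ι) : ℝ :=
  P.real (Y ∩ J ⁻¹' {j}) / P.real (J ⁻¹' {j})

lemma cellAvg_nonneg (J : Ω → ι) (Y : Set Ω) (j : ι) : 0 ≤ cellAvg P J Y j := by
  unfold cellAvg; positivity

lemma cellAvg_le_one (J : Ω → ι) (Y : Set Ω) (j : ι) : cellAvg P J Y j ≤ 1 :=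
  div_le_one_of_le₀ (measureReal_mono inter_subset_right) measureReal_nonneg

/-- Law of large numbers along a refining sequence of countable partitions: if `Y t` is a union of
cells of the partition of time `t + n`, then the frequency with which `ω ∈ Y t` is asymptotically
the average of the conditional probabilities of `Y t` in the time-`t` cell of `ω`. -/
theorem lln_sets [Countable ι] (J : ℕ → Ω → ι) (hJ : ∀ t j, MeasurableSet (J t ⁻¹' {j}))
    (href : ∀ s t, s ≤ t → ∃ h : ι → ι, ∀ ω, J s ω = h (J t ω))
    (n : ℕ) (Y : ℕ → Set Ω) (B : ℕ → Set ι) (hY : ∀ t, Y t = J (t + n) ⁻¹' (B t)) :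
    ∀ᵐ ω ∂P, Tendsto (fun T : ℕ => (∑ t ∈ Finset.range T,
      ((Y t).indicator (fun _ => (1 : ℝ)) ω - cellAvg P (J t) (Y t) (J t ω))) / T)
        atTop (𝓝 0) := by
  let _ : MeasurableSpace ι := ⊤
  have hJm : ∀ t, Measurable (J t) := fun t => measurable_to_countable' (hJ t)
  have hYm : ∀ t, MeasurableSet (Y t) := fun t => by
    rw [hY t]; exact hJm _ trivial
  set Z : ℕ → Ω → ℝ := fun t ω =>
    (Y t).indicator (fun _ => (1 : ℝ)) ω - cellAvg P (J t) (Y t) (J t ω) with hZdef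
  have hZm : ∀ t, Measurable (Z t) := fun t =>
    (measurable_const.indicator (hYm t)).sub
      ((measurable_from_top (f := cellAvg P (J t) (Y t))).comp (hJm t))
  have hZb : ∀ t ω, |Z t ω| ≤ 1 := fun t ω => by
    have h1 := cellAvg_nonneg P (J t) (Y t) (J t ω)
    have h2 := cellAvg_le_one P (J t) (Y t) (J t ω)
    simp only [hZdef]
    by_cases h : ω ∈ Y t
    · rw [indicator_of_mem h, abs_le]; constructor <;> linarith
    · rw [indicator_of_notMem h, abs_le]; constructor <;> linarith
  refine lln_core P Z hZm hZb n fun s t hst => ?_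
  have hfac : ∃ h : ι → ℝ, ∀ ω, Z s ω = h (J t ω) := by
    obtain ⟨h1, hh1⟩ := href (s + n) t hst
    obtain ⟨h2, hh2⟩ := href s t (by omega)
    refine ⟨fun j => (B s).indicator (fun _ => (1 : ℝ)) (h1 j) -
      cellAvg P (J s) (Y s) (h2 j), fun ω => ?_⟩
    simp only [hZdef]
    rw [hh2 ω, hY s, ← hh1 ω]
    rfl
  obtain ⟨h, hh⟩ := hfac
  have hintg : Integrable (fun ω => Z s ω * Z t ω) P := by
    refine Integrable.of_bound ((hZm s).mul (hZm t)).aestronglyMeasurable 1 ?_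
    filter_upwards with ω
    rw [Real.norm_eq_abs, abs_mul]
    exact mul_le_one₀ (hZb s ω) (abs_nonneg _) (hZb t ω)
  have hU : (⋃ j, J t ⁻¹' {j}) = univ := by
    ext ω; simp
  rw [← setIntegral_univ, ← hU, integral_iUnion (fun j => hJ t j) ?_ hintg.integrableOn]
  · have : ∀ j, ∫ ω in J t ⁻¹' {j}, Z s ω * Z t ω ∂P = 0 := by
      intro j
      have e1 : ∫ ω in J t ⁻¹' {j}, Z s ω * Z t ω ∂P =
          ∫ ω in J t ⁻¹' {j}, h j * ((Y t).indicator (fun _ => (1 : ℝ)) ω -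
            cellAvg P (J t) (Y t) j) ∂P := by
        refine setIntegral_congr_fun (hJ t j) fun ω hω => ?_
        have hω' : J t ω = j := hω
        change Z s ω * Z t ω = _
        rw [hh ω, hω']
        simp only [hZdef, hω']
      rw [e1, integral_const_mul, integral_sub, integral_indicator_const _ (hYm t)]
      · simp only [smul_eq_mul, mul_one, integral_const]
        rw [measureReal_restrict_apply (hYm t), measureReal_restrict_apply MeasurableSet.univ,
          univ_inter, cellAvg]
        by_cases h0 : P.real (J t ⁻¹' {j}) = 0
        · have : P.real (Y t ∩ J t ⁻¹' {j}) = 0 :=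
            le_antisymm (h0 ▸ measureReal_mono inter_subset_right) measureReal_nonneg
          rw [this, h0]; simp
        · field_simp; simp
      · exact ((integrable_const (1 : ℝ)).indicator (hYm t))
      · exact integrable_const _
    simp [this]
  · intro i j hij
    exact Disjoint.preimage _ (by simpa using hij)

open Classical in
/-- If the conditional probabilities of `Y t` exceed `δ` only with frequency `q`, then `ω ∈ Y t`
happens with frequency at most `δ + q`, up to any `ε`. -/
lemma freq_of_cellAvg {Y : ℕ → Set Ω} {c : ℕ → Ω → ℝ} {ω : Ω}
    (h : Tendsto (fun T : ℕ => (∑ t ∈ Finset.range T,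
      ((Y t).indicator (fun _ => (1 : ℝ)) ω - c t ω)) / T) atTop (𝓝 0))
    (hc1 : ∀ t, c t ω ≤ 1) {δ q ε : ℝ} (hδ : 0 ≤ δ) (hε : 0 < ε)
    (hq : FreqLE {t | δ < c t ω} q) : FreqLE {t | ω ∈ Y t} (δ + q + ε) := by
  have h' := (h.eventually (gt_mem_nhds hε))
  filter_upwards [h', hq, eventually_ge_atTop 1] with T hT hqT hT1
  have hTpos : (0 : ℝ) < T := by exact_mod_cast hT1
  rw [div_lt_iff₀ hTpos, Finset.sum_sub_distrib] at hT
  have e1 : ∑ t ∈ Finset.range T, (Y t).indicator (fun _ => (1 : ℝ)) ω =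
      ((Finset.range T).filter (fun t => t ∈ {t | ω ∈ Y t})).card := by
    rw [Finset.card_filter]; push_cast
    exact Finset.sum_congr rfl fun t _ => by simp [indicator_apply]
  have e2 : ∑ t ∈ Finset.range T, c t ω ≤ δ * T +
      ((Finset.range T).filter (fun t => t ∈ {t | δ < c t ω})).card := by
    rw [Finset.card_filter]; push_cast
    have : δ * T = ∑ t ∈ Finset.range T, δ := by simp [mul_comm]
    rw [this, ← Finset.sum_add_distrib]
    refine Finset.sum_le_sum fun t _ => ?_
    have := hc1 t
    simp only [mem_ofPred_eq]
    split_ifs with h1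
    · linarith
    · simp only [not_lt] at h1; linarith
  rw [e1] at hT
  simp only [mem_ofPred_eq] at hT e2 hqT ⊢
  linarith

open Classical in
/-- If `ω ∈ Y t` happens with frequency at most `q`, the conditional probabilities of `Y t` exceed
`1/2` with frequency at most `2 * q`, up to any `ε`. -/
lemma cellAvg_of_freq {Y : ℕ → Set Ω} {c : ℕ → Ω → ℝ} {ω : Ω}
    (h : Tendsto (fun T : ℕ => (∑ t ∈ Finset.range T,
      ((Y t).indicator (fun _ => (1 : ℝ)) ω - c t ω)) / T) atTop (𝓝 0))
    (hc0 : ∀ t, 0 ≤ c t ω) {q ε : ℝ} (hε : 0 < ε)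
    (hq : FreqLE {t | ω ∈ Y t} q) : FreqLE {t | 1 / 2 < c t ω} (2 * q + ε) := by
  have h' := (h.eventually (lt_mem_nhds (show -(ε / 2) < 0 by linarith)))
  filter_upwards [h', hq, eventually_ge_atTop 1] with T hT hqT hT1
  have hTpos : (0 : ℝ) < T := by exact_mod_cast hT1
  rw [lt_div_iff₀ hTpos, Finset.sum_sub_distrib] at hT
  have e1 : ∑ t ∈ Finset.range T, (Y t).indicator (fun _ => (1 : ℝ)) ω =
      ((Finset.range T).filter (fun t => t ∈ {t | ω ∈ Y t})).card := by
    rw [Finset.card_filter]; push_cast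
    exact Finset.sum_congr rfl fun t _ => by simp [indicator_apply]
  have e2 : (1 / 2 : ℝ) * ((Finset.range T).filter (fun t => t ∈ {t | 1 / 2 < c t ω})).card ≤
      ∑ t ∈ Finset.range T, c t ω := by
    rw [Finset.card_filter]; push_cast
    rw [Finset.mul_sum]
    refine Finset.sum_le_sum fun t _ => ?_
    have := hc0 t
    simp only [mem_ofPred_eq]
    split_ifs with h1 <;> linarith
  rw [e1] at hT
  simp only [mem_ofPred_eq] at hT e2 hqT ⊢
  linarith

end LLN


/-! ### Hausdorff dimension and masses of balls -/

/-- `ContentLE ν s δ C`: every finite union of open balls `B(y_i, r_i)` has `ν`-mass at most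
`δ + C * ∑ r_i ^ s`. For fixed parameters this is a weakly closed condition on `ν`. -/
def ContentLE {X : Type*} [MetricSpace X] [MeasurableSpace X] (ν : Measure X) (s δ C : ℝ) : Prop :=
  ∀ F : Finset (X × ℝ), (∀ p ∈ F, 0 < p.2) →
    ν (⋃ p ∈ F, ball p.1 p.2) ≤ ENNReal.ofReal δ + ENNReal.ofReal C * ∑ p ∈ F, ENNReal.ofReal (p.2 ^ s)

section dims
variable {X : Type*} [MetricSpace X] [MeasurableSpace X] [BorelSpace X]

omit [MeasurableSpace X] [BorelSpace X] in
lemma exists_ball_cover [Nonempty X] {s : ℝ} (hs : 0 < s) {ε : ℝ≥0∞} (hε : 0 < ε) (t : Set X)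
    (ht : ediam t ≤ 1) : ∃ x : X, ∃ r : ℝ, 0 < r ∧ t ⊆ ball x r ∧
      ENNReal.ofReal (r ^ s) ≤ (⨆ _ : t.Nonempty, ediam t ^ s) + ε := by
  have htop : ediam t ≠ ∞ := ne_top_of_le_ne_top (by simp) ht
  obtain ⟨x, hx⟩ : ∃ x : X, t.Nonempty → x ∈ t := by
    rcases t.eq_empty_or_nonempty with h | ⟨x, hx⟩
    · exact ⟨Classical.arbitrary X, fun h' => by simp [h] at h'⟩
    · exact ⟨x, fun _ => hx⟩
  have hcont : Tendsto (fun r : ℝ => ENNReal.ofReal (r ^ s)) (𝓝[>] (ediam t).toReal)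
      (𝓝 (ENNReal.ofReal ((ediam t).toReal ^ s))) := by
    refine ENNReal.tendsto_ofReal ?_
    exact ((Real.continuousAt_rpow_const _ _ (Or.inr hs.le)).tendsto).mono_left nhdsWithin_le_nhds
  have hlt : ENNReal.ofReal ((ediam t).toReal ^ s) < ENNReal.ofReal ((ediam t).toReal ^ s) + ε :=
    ENNReal.lt_add_right ENNReal.ofReal_ne_top hε.ne'
  obtain ⟨r, hr1, hr2⟩ := ((hcont.eventually (gt_mem_nhds hlt)).and self_mem_nhdsWithin).exists
  have hr2' : (ediam t).toReal < r := hr2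
  refine ⟨x, r, ENNReal.toReal_nonneg.trans_lt hr2, fun y hy => ?_, hr1.le.trans ?_⟩
  · rw [mem_ball]
    refine lt_of_le_of_lt ?_ hr2'
    exact dist_le_diam_of_mem' htop hy (hx ⟨y, hy⟩)
  · gcongr
    rcases t.eq_empty_or_nonempty with h | h
    · simp [h, Real.zero_rpow hs.ne']
    · rw [ciSup_pos h, ← ENNReal.ofReal_rpow_of_nonneg ENNReal.toReal_nonneg hs.le,
        ENNReal.ofReal_toReal htop]

/-- A set of dimension less than `s` has vanishing `s`-dimensional Hausdorff measure, hence covers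
by balls with arbitrarily small `∑ r_i ^ s`. -/
lemma ContentLE.measure_le {ν : Measure X} {s δ C : ℝ} (h : ContentLE ν s δ C) (hs : 0 < s)
    {A : Set X} (hA : dimH A < ENNReal.ofReal s) : ν A ≤ ENNReal.ofReal δ := by
  rcases isEmpty_or_nonempty X with hX | hX
  · rw [Set.eq_empty_of_isEmpty A]; simp
  have h0 : μH[s] A = 0 := by
    have := hausdorffMeasure_of_dimH_lt (X := X) (s := A) (d := s.toNNReal) hA
    rwa [Real.coe_toNNReal _ hs.le] at this
  refine ENNReal.le_of_forall_pos_le_add fun ε hε _ => ?_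
  obtain ⟨ε1, hε1, hεC⟩ : ∃ ε1 : ℝ≥0∞, 0 < ε1 ∧ ENNReal.ofReal C * (ε1 + ε1) ≤ ε := by
    have : Tendsto (fun e : ℝ≥0∞ => ENNReal.ofReal C * (e + e)) (𝓝[>] 0) (𝓝 (ENNReal.ofReal C * (0+0))) := by
      refine (ENNReal.Tendsto.const_mul (tendsto_id.add tendsto_id) (Or.inr ENNReal.ofReal_ne_top)).mono_left nhdsWithin_le_nhds
    rw [add_zero, mul_zero] at this
    obtain ⟨e, h1, h2⟩ := ((this.eventually (gt_mem_nhds (ENNReal.coe_pos.2 hε))).and self_mem_nhdsWithin).exists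
    exact ⟨e, h2, h1.le⟩
  rw [Measure.hausdorffMeasure_apply] at h0
  have h1 := le_antisymm ((le_iSup₂ (f := fun (r : ℝ≥0∞) (_ : 0 < r) => _) (1 : ℝ≥0∞) one_pos).trans h0.le) (zero_le)
  have h2 : (⨅ (t : ℕ → Set X) (_ : A ⊆ ⋃ n, t n) (_ : ∀ n, ediam (t n) ≤ 1),
      ∑' n, ⨆ _ : (t n).Nonempty, ediam (t n) ^ s) < ε1 := by
    refine lt_of_eq_of_lt h1 hε1
  simp only [iInf_lt_iff] at h2
  obtain ⟨t, hAt, htd, hsum⟩ := h2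
  obtain ⟨e, he0, he⟩ := ENNReal.exists_pos_sum_of_countable hε1.ne' ℕ
  choose x r hr ht hrs using fun n => exists_ball_cover hs (ENNReal.coe_pos.2 (he0 n)) (t n) (htd n)
  have hfin : ∀ N : ℕ, ν (⋃ n ∈ Finset.range N, ball (x n) (r n)) ≤ ENNReal.ofReal δ + ε := by
    intro N
    classical
    have := h ((Finset.range N).image fun n => (x n, r n)) (by
      intro p hp; obtain ⟨n, _, rfl⟩ := Finset.mem_image.1 hp; exact hr n)
    rw [Finset.set_biUnion_finset_image] at this
    refine this.trans ?_
    gcongr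
    refine le_trans ?_ hεC
    gcongr
    calc _ ≤ ∑ n ∈ Finset.range N, ENNReal.ofReal (r n ^ s) := by
          refine Finset.sum_image_le_of_nonneg (f := fun p : X × ℝ => ENNReal.ofReal (p.2 ^ s))  ?_
          intro i _; exact zero_le
      _ ≤ ∑' n, ENNReal.ofReal (r n ^ s) := ENNReal.sum_le_tsum _
      _ ≤ ∑' n, ((⨆ _ : (t n).Nonempty, ediam (t n) ^ s) + e n) := ENNReal.tsum_le_tsum hrs
      _ = _ := ENNReal.tsum_add
      _ ≤ _ := add_le_add hsum.le he.le
  have hU : A ⊆ ⋃ N, ⋃ n ∈ Finset.range N, ball (x n) (r n) := by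
    intro a ha
    obtain ⟨n, hn⟩ := mem_iUnion.1 (hAt ha)
    refine mem_iUnion.2 ⟨n + 1, mem_iUnion₂.2 ⟨n, by simp, ht n hn⟩⟩
  refine (measure_mono hU).trans ?_
  rw [Monotone.measure_iUnion]
  · exact iSup_le hfin
  · intro a b hab
    exact biUnion_subset_biUnion_left (by
      intro n hn
      have : n < a := by simpa using hn
      simpa using this.trans_le hab)

/-- A maximal `2 r`-separated set of centres of heavy balls has at most `1 / m` elements. -/
lemma heavy_cover (η : Measure X) [IsProbabilityMeasure η] {m r : ℝ} (hm : 0 < m) :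
    ∃ F : Finset X, (F.card : ℝ) * m ≤ 1 ∧
      {y | ENNReal.ofReal m ≤ η (closedBall y r)} ⊆ ⋃ y ∈ F, closedBall y (2 * r) := by
  classical
  set H := {y | ENNReal.ofReal m ≤ η (closedBall y r)} with hH
  have key : ∀ F : Finset X, (∀ y ∈ F, y ∈ H) → (∀ y ∈ F, ∀ z ∈ F, y ≠ z → 2 * r < dist y z) →
      (F.card : ℝ) * m ≤ 1 := by
    intro F hF hsep
    have h1 : ∑ y ∈ F, η (closedBall y r) ≤ 1 := by
      rw [← measure_biUnion_finset]
      · exact prob_le_one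
      · intro y hy z hz hyz
        refine closedBall_disjoint_closedBall ?_
        have := hsep y hy z hz hyz
        linarith
      · intro y _; exact measurableSet_closedBall
    have h2 : (F.card : ℝ≥0∞) * ENNReal.ofReal m ≤ 1 := by
      refine le_trans ?_ h1
      rw [← nsmul_eq_mul]
      exact Finset.card_nsmul_le_sum _ _ _ hF
    rw [← ENNReal.ofReal_natCast, ← ENNReal.ofReal_mul (by positivity)] at h2
    exact ENNReal.ofReal_le_one.1 h2
  let p : ℕ → Prop := fun k => ∃ F : Finset X, F.card = k ∧ (∀ y ∈ F, y ∈ H) ∧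
    (∀ y ∈ F, ∀ z ∈ F, y ≠ z → 2 * r < dist y z)
  have hp0 : p 0 := ⟨∅, by simp⟩
  have hbd : ∀ k, p k → k ≤ ⌊m⁻¹⌋₊ := by
    rintro k ⟨F, rfl, h1, h2⟩
    refine Nat.le_floor ?_
    have := key F h1 h2
    rw [← one_div]
    exact (le_div_iff₀ hm).2 this
  obtain ⟨F, hcard, h1, h2⟩ : p (Nat.findGreatest p ⌊m⁻¹⌋₊) :=
    Nat.findGreatest_spec (Nat.zero_le _) hp0
  refine ⟨F, key F h1 h2, fun y hy => ?_⟩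
  by_contra hcon
  simp only [mem_iUnion, mem_closedBall, not_exists, not_le] at hcon
  have hr : 0 ≤ r := by
    by_contra hr
    have : ENNReal.ofReal m ≤ η (closedBall y r) := hy
    rw [closedBall_eq_empty.2 (not_le.1 hr)] at this
    simp at this
    linarith
  have hyF : y ∉ F := fun h => by
    have := hcon y h
    rw [dist_self] at this
    linarith
  have : p (F.card + 1) := by
    refine ⟨insert y F, Finset.card_insert_of_notMem hyF, ?_, ?_⟩
    · intro z hz
      rcases Finset.mem_insert.1 hz with rfl | hz
      · exact hy
      · exact h1 z hz
    · intro a ha b hb hab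
      rcases Finset.mem_insert.1 ha with rfl | ha <;> rcases Finset.mem_insert.1 hb with rfl | hb
      · exact absurd rfl hab
      · exact hcon b hb
      · rw [dist_comm]; exact hcon a (by simpa [hab] using ha)
      · exact h2 a ha b hb hab
  have h3 := Nat.le_findGreatest (hbd _ this) this
  rw [← hcard] at h3
  omega

omit [MeasurableSpace X] [BorelSpace X] in
lemma ediam_closedBall_two_mul_le (y : X) {r : ℝ} (hr : 0 ≤ r) :
    ediam (closedBall y (2 * r)) ≤ ENNReal.ofReal (4 * r) := by
  rw [← closedEBall_ofReal (by positivity)]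
  refine ediam_closedEBall_le.trans (le_of_eq ?_)
  rw [show (2 : ℝ≥0∞) = ENNReal.ofReal 2 by simp, ← ENNReal.ofReal_mul (by norm_num)]
  congr 1; ring

lemma two_rpow_neg_tendsto : Tendsto (fun n : ℕ => (2 : ℝ) ^ (-(n : ℝ))) atTop (𝓝 0) := by
  have : (fun n : ℕ => (2 : ℝ) ^ (-(n : ℝ))) = fun n : ℕ => (1 / 2 : ℝ) ^ n := by
    funext n
    rw [Real.rpow_neg (by norm_num), Real.rpow_natCast]; simp
  rw [this]
  exact tendsto_pow_atTop_nhds_zero_of_lt_one (by norm_num) (by norm_num)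

lemma exists_scale {r : ℝ} (hr : 0 < r) (hr1 : r ≤ 1) :
    ∃ n : ℕ, (2 : ℝ) ^ (-((n : ℝ) + 1)) < r ∧ r ≤ (2 : ℝ) ^ (-(n : ℝ)) := by
  obtain ⟨n, h1, h2⟩ := exists_nat_pow_near_of_lt_one (y := (1 / 2 : ℝ)) hr hr1 (by norm_num)
    (by norm_num)
  have h : ∀ k : ℕ, (2 : ℝ) ^ (-(k : ℝ)) = (1 / 2 : ℝ) ^ k := fun k => by
    rw [Real.rpow_neg (by norm_num), Real.rpow_natCast]; simp
  refine ⟨n, ?_, by rwa [h]⟩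
  have := h (n + 1)
  push_cast at this
  rwa [this]

/-- The points whose balls have mass at least `c 2 ^ (-n s)` for infinitely many scales `2 ^ (-n)`
form a set of dimension at most `s`. -/
lemma dimH_heavy (η : Measure X) [IsProbabilityMeasure η] {c s : ℝ} (hc : 0 < c) (hs : 0 ≤ s) :
    dimH {y | ∃ᶠ n : ℕ in atTop, ENNReal.ofReal (c * (2 : ℝ) ^ (-(n * s : ℝ))) ≤
      η (closedBall y ((2 : ℝ) ^ (-(n : ℝ))))} ≤ ENNReal.ofReal s := by
  refine ENNReal.le_of_forall_pos_le_add fun ε hε _ => ?_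
  choose F hF1 hF2 using fun n : ℕ => heavy_cover η (m := c * (2 : ℝ) ^ (-(n * s : ℝ)))
    (r := (2 : ℝ) ^ (-(n : ℝ))) (by positivity)
  have hd : ENNReal.ofReal s + ε = ((s.toNNReal + ε : ℝ≥0) : ℝ≥0∞) := by
    simp [ENNReal.ofReal]
  rw [hd]
  refine dimH_le_of_hausdorffMeasure_ne_top (ne_top_of_le_ne_top ?_
    (Measure.hausdorffMeasure_le_liminf_tsum (β := ℕ) (ι := fun N => Σ n : ℕ, F (N + n)) _ _
      (l := atTop) (fun N => ENNReal.ofReal (4 * (2 : ℝ) ^ (-(N : ℝ)))) ?_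
      (fun N i => closedBall (i.2 : X) (2 * (2 : ℝ) ^ (-((N + i.1 : ℕ) : ℝ)))) ?_ ?_))
  · set q : ℝ := (2 : ℝ) ^ (-(ε : ℝ)) with hq
    have hq0 : 0 < q := by positivity
    have hq1 : q < 1 := Real.rpow_lt_one_of_one_lt_of_neg (by norm_num) (by simpa using hε)
    have hb : ∀ N : ℕ, ∑' i : (Σ n : ℕ, F (N + n)), ediam (closedBall (i.2 : X) (2 * (2 : ℝ) ^ (-((N + i.1 : ℕ) : ℝ)))) ^ ((s.toNNReal + ε : ℝ≥0) : ℝ) ≤ ENNReal.ofReal (c⁻¹ * 4 ^ (s + ε)) * ∑' n : ℕ, ENNReal.ofReal q ^ n := by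
      intro N
      rw [ENNReal.tsum_sigma', ← ENNReal.tsum_mul_left]
      refine ENNReal.tsum_le_tsum fun n => ?_
      have hterm : ∀ y : F (N + n), ediam (closedBall (y : X) (2 * (2 : ℝ) ^ (-((N + n : ℕ) : ℝ)))) ^ ((s.toNNReal + ε : ℝ≥0) : ℝ) ≤ ENNReal.ofReal ((4 * (2 : ℝ) ^ (-((N + n : ℕ) : ℝ))) ^ (s + ε)) := by
        intro y
        rw [← ENNReal.ofReal_rpow_of_pos (by positivity)]
        have : ((s.toNNReal + ε : ℝ≥0) : ℝ) = s + ε := by simp [hs]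
        rw [this]
        refine ENNReal.rpow_le_rpow ?_ (by positivity)
        exact ediam_closedBall_two_mul_le _ (by positivity)
      refine (ENNReal.tsum_le_tsum hterm).trans ?_
      rw [tsum_fintype, Finset.sum_const, nsmul_eq_mul, ← ENNReal.ofReal_pow hq0.le,
        ← ENNReal.ofReal_mul (by positivity), ← ENNReal.ofReal_natCast, ← ENNReal.ofReal_mul (by positivity)]
      refine ENNReal.ofReal_le_ofReal ?_
      have h1 := hF1 (N + n)
      have hcard : ((Finset.univ : Finset (F (N + n))).card : ℝ) = (F (N + n)).card := by simp
      rw [hcard]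
      have h2 : (F (N + n)).card ≤ c⁻¹ * (2 : ℝ) ^ (((N + n : ℕ) * s : ℝ)) := by
        rw [Real.rpow_neg (by norm_num), ← mul_assoc, ← div_eq_mul_inv, div_le_one (by positivity), mul_comm, ← le_inv_mul_iff₀ hc] at h1
        exact h1
      calc _ ≤ (c⁻¹ * (2 : ℝ) ^ (((N + n : ℕ) * s : ℝ))) * (4 * (2 : ℝ) ^ (-((N + n : ℕ) : ℝ))) ^ (s + ε : ℝ) := by gcongr
        _ = c⁻¹ * 4 ^ (s + ε : ℝ) * q ^ (N + n) := by
          rw [Real.mul_rpow (by norm_num) (by positivity), hq, ← Real.rpow_mul_natCast (by norm_num), ← Real.rpow_mul (by norm_num)]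
          have : (2 : ℝ) ^ (((N + n : ℕ) * s : ℝ)) * (2 : ℝ) ^ (-((N + n : ℕ) : ℝ) * (s + ε)) = (2 : ℝ) ^ (-(ε : ℝ) * ((N + n : ℕ) : ℝ)) := by
            rw [← Real.rpow_add (by norm_num)]; congr 1; ring
          rw [← this]; ring
        _ ≤ c⁻¹ * 4 ^ (s + ε : ℝ) * q ^ n := by
          gcongr ?_ * ?_
          exact pow_le_pow_of_le_one hq0.le hq1.le (by omega)
    refine ne_top_of_le_ne_top ?_ ((liminf_le_liminf (Eventually.of_forall hb)).trans (liminf_const _).le)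
    refine ENNReal.mul_ne_top ENNReal.ofReal_ne_top ?_
    rw [ENNReal.tsum_geometric]
    refine ENNReal.inv_ne_top.2 ?_
    simpa [tsub_eq_zero_iff_le] using hq1
  · rw [show (0 : ℝ≥0∞) = ENNReal.ofReal (4 * 0) by simp]
    refine ENNReal.tendsto_ofReal (Tendsto.const_mul _ ?_)
    exact two_rpow_neg_tendsto
  · refine Eventually.of_forall fun N i => ?_
    refine (ediam_closedBall_two_mul_le _ (by positivity)).trans (ENNReal.ofReal_le_ofReal ?_)
    gcongr
    · norm_num
    · omega
  · refine Eventually.of_forall fun N y hy => ?_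
    obtain ⟨k, hk, h⟩ := (frequently_atTop.1 hy) N
    obtain ⟨n, rfl⟩ := Nat.exists_eq_add_of_le hk
    obtain ⟨z, hz, hz2⟩ := mem_iUnion₂.1 (hF2 _ h)
    exact mem_iUnion.2 ⟨⟨n, ⟨z, hz⟩⟩, hz2⟩

lemma measurable_measure_closedBall [SecondCountableTopology X] (μ : Measure X) [SFinite μ] (r : ℝ) :
    Measurable fun y => μ (closedBall y r) := by
  have h : MeasurableSet {p : X × X | dist p.2 p.1 ≤ r} :=
    (isClosed_le (by fun_prop) continuous_const).measurableSet
  exact measurable_measure_prodMk_left h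

/-- A measure whose dimension exceeds `s` has `μ (B(y, 2 ^ (-n))) < 2 ^ (-n s)` for all large `n`,
at almost every point. -/
lemma ae_light [SecondCountableTopology X] (μ : Measure X) [IsProbabilityMeasure μ] {s : ℝ}
    (hs : 0 ≤ s) (hμ : ENNReal.ofReal s < mdim μ) :
    ∀ᵐ y ∂μ, ∀ᶠ n : ℕ in atTop,
      μ (closedBall y ((2 : ℝ) ^ (-(n : ℝ)))) < ENNReal.ofReal ((2 : ℝ) ^ (-(n * s : ℝ))) := by
  have hdim := dimH_heavy μ (c := 1) one_pos hs
  simp only [one_mul] at hdim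
  rw [ae_iff]
  simp only [not_eventually, not_lt]
  by_contra hne
  refine absurd hμ (not_lt.2 (le_trans ?_ hdim))
  refine iInf_le_of_le _ (iInf_le_of_le ?_ (iInf_le _ (pos_iff_ne_zero.2 hne)))
  have hm : ∀ n : ℕ, MeasurableSet {y | ENNReal.ofReal ((2 : ℝ) ^ (-(n * s : ℝ))) ≤
      μ (closedBall y ((2 : ℝ) ^ (-(n : ℝ))))} := fun n =>
    measurableSet_le measurable_const (measurable_measure_closedBall μ _)
  convert MeasurableSet.measurableSet_limsup hm using 1
  ext y
  rw [mem_limsup_iff_frequently_mem]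
  rfl

/-- If the dimension of `μ` exceeds `s`, then on a set of almost full mass `μ` satisfies a uniform
Frostman condition of exponent `s`. -/
lemma exists_frostman [SecondCountableTopology X] (μ : Measure X) [IsProbabilityMeasure μ] {s : ℝ}
    (hs : s = 0 ∨ 0 < s ∧ ENNReal.ofReal s < mdim μ) {δ : ℝ≥0∞} (hδ : 0 < δ) :
    ∃ G : Set X, MeasurableSet G ∧ μ Gᶜ ≤ δ ∧ ∃ C : ℝ, 0 < C ∧ ∀ y : X, ∀ r : ℝ, 0 < r →
      μ (G ∩ closedBall y r) ≤ ENNReal.ofReal (C * r ^ s) := by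
  rcases hs with rfl | ⟨hs0, hs⟩
  · refine ⟨univ, MeasurableSet.univ, by simp, 1, one_pos, fun y r hr => ?_⟩
    simp only [Real.rpow_zero, mul_one, ENNReal.ofReal_one]
    exact prob_le_one
  have h := ae_light μ hs0.le hs
  let G : ℕ → Set X := fun N => {y | ∀ n, N ≤ n → μ (closedBall y ((2 : ℝ) ^ (-(n : ℝ)))) < ENNReal.ofReal ((2 : ℝ) ^ (-(n * s : ℝ)))}
  have hGm : ∀ N, MeasurableSet (G N) := fun N => by
    have : G N = ⋂ n, ⋂ (_ : N ≤ n), {y | μ (closedBall y ((2 : ℝ) ^ (-(n : ℝ)))) < ENNReal.ofReal ((2 : ℝ) ^ (-(n * s : ℝ)))} := by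
      ext y; simp [G]
    rw [this]
    exact MeasurableSet.iInter fun n => MeasurableSet.iInter fun _ =>
      measurableSet_lt (measurable_measure_closedBall μ _) measurable_const
  have hanti : Antitone fun N => (G N)ᶜ := by
    intro a b hab
    exact compl_subset_compl.2 fun y hy n hn => hy n (hab.trans hn)
  have hnull : μ (⋂ N, (G N)ᶜ) = 0 := by
    refine measure_mono_null ?_ (ae_iff.1 h)
    intro y hy hcon
    obtain ⟨N, hN⟩ := eventually_atTop.1 hcon
    exact (mem_iInter.1 hy N) hN
  have htend := tendsto_measure_iInter_atTop (μ := μ) (fun N => (hGm N).compl.nullMeasurableSet) hanti ⟨0, measure_ne_top _ _⟩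
  rw [hnull] at htend
  obtain ⟨N, hN⟩ := (htend.eventually (gt_mem_nhds hδ)).exists
  refine ⟨G N, hGm N, le_of_lt hN, (2 : ℝ) ^ ((N + 2) * s), by positivity, fun y r hr => ?_⟩
  by_cases hrN : (2 : ℝ) ^ (-((N : ℝ) + 2)) ≤ r
  · refine prob_le_one.trans ?_
    rw [← ENNReal.ofReal_one]
    refine ENNReal.ofReal_le_ofReal ?_
    calc (1 : ℝ) = (2 : ℝ) ^ (((N : ℝ) + 2) * s) * ((2 : ℝ) ^ (-((N : ℝ) + 2))) ^ s := by
          rw [← Real.rpow_mul (by norm_num), ← Real.rpow_add (by norm_num)]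
          rw [show ((N : ℝ) + 2) * s + -((N : ℝ) + 2) * s = 0 by ring, Real.rpow_zero]
      _ ≤ _ := by gcongr
  · push Not at hrN
    rcases (G N ∩ closedBall y r).eq_empty_or_nonempty with he | ⟨z, hzG, hzy⟩
    · rw [he]; simp
    obtain ⟨n, hn1, hn2⟩ : ∃ n : ℕ, (2 : ℝ) ^ (-((n : ℝ) + 1)) < 2 * r ∧ 2 * r ≤ (2 : ℝ) ^ (-(n : ℝ)) := by
      have hlt : 2 * r < 1 := by
        refine lt_of_lt_of_le (mul_lt_mul_of_pos_left hrN two_pos) ?_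
        rw [← Real.rpow_one_add' (by norm_num) (by linarith [(Nat.cast_nonneg N : (0:ℝ) ≤ N)])]
        exact Real.rpow_le_one_of_one_le_of_nonpos (by norm_num) (by linarith [(Nat.cast_nonneg N : (0:ℝ) ≤ N)])
      exact exists_scale (by positivity) hlt.le
    have hnN : N ≤ n := by
      by_contra hcon
      push Not at hcon
      have h1 : (2 : ℝ) ^ (-((n : ℝ) + 1)) < (2 : ℝ) ^ (-((N : ℝ) + 1)) := by
        refine hn1.trans ((mul_lt_mul_of_pos_left hrN two_pos).trans_eq ?_)
        rw [← Real.rpow_one_add' (by norm_num) (by linarith [(Nat.cast_nonneg N : (0:ℝ) ≤ N)])]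
        congr 1; ring
      rw [Real.rpow_lt_rpow_left_iff (by norm_num)] at h1
      have : ((n + 1 : ℕ) : ℝ) ≤ N := by exact_mod_cast hcon
      push_cast at this
      linarith
    calc μ (G N ∩ closedBall y r) ≤ μ (closedBall z ((2 : ℝ) ^ (-(n : ℝ)))) := by
          refine measure_mono fun w hw => ?_
          rw [mem_closedBall] at *
          have := dist_triangle_right w z y
          have h3 : dist w y ≤ r := hw.2
          linarith
      _ ≤ ENNReal.ofReal ((2 : ℝ) ^ (-(n * s : ℝ))) := (hzG n hnN).le
      _ ≤ _ := by
          refine ENNReal.ofReal_le_ofReal ?_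
          have h4 : (2 : ℝ) ^ (-((n : ℝ) + 2)) ≤ r := by
            have : (2 : ℝ) ^ (-((n : ℝ) + 1)) = 2 * (2 : ℝ) ^ (-((n : ℝ) + 2)) := by
              rw [← Real.rpow_one_add' (by norm_num) (by linarith [(Nat.cast_nonneg n : (0:ℝ) ≤ n)])]
              congr 1; ring
            linarith
          calc (2 : ℝ) ^ (-(n * s : ℝ)) = (2 : ℝ) ^ (2 * s) * ((2 : ℝ) ^ (-((n : ℝ) + 2))) ^ s := by
                rw [← Real.rpow_mul (by norm_num), ← Real.rpow_add (by norm_num)]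
                congr 1; ring
            _ ≤ (2 : ℝ) ^ (((N : ℝ) + 2) * s) * r ^ s := by
                gcongr
                · norm_num
                · linarith [(Nat.cast_nonneg N : (0:ℝ) ≤ N)]

end dims

/-! ### Sceneries and the weak topology -/

section weak
variable {X : Type*} [MetricSpace X] [SecondCountableTopology X] [MeasurableSpace X] [BorelSpace X]

/-- Weakly open sets of probability measures are measurable for the evaluation `σ`-algebra, because
the weak topology has a countable subbasis of sets `{η | q < η U}`. -/
lemma measurableSet_of_isOpen {V : Set (ProbabilityMeasure X)} (hV : IsOpen V) :
    MeasurableSet V := by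
  let B := TopologicalSpace.countableBasis X
  let S : Set (Set (ProbabilityMeasure X)) :=
    (fun p : Set (Set X) × ℚ => {η : ProbabilityMeasure X | ENNReal.ofReal (p.2 : ℝ) < (η : Measure X) (⋃₀ p.1)}) ''
      ({T : Set (Set X) | T.Finite ∧ T ⊆ B} ×ˢ (univ : Set ℚ))
  have hS : S.Countable :=
    ((countable_ofPred_finite_subset (TopologicalSpace.countable_countableBasis X)).prod
      (countable_univ)).image _
  have hSm : ∀ W ∈ S, MeasurableSet W := by
    rintro _ ⟨⟨T, q⟩, ⟨⟨hT1, hT2⟩, -⟩, rfl⟩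
    have hU : MeasurableSet (⋃₀ T) := (isOpen_sUnion fun t ht =>
      TopologicalSpace.isOpen_of_mem_countableBasis (hT2 ht)).measurableSet
    exact measurableSet_lt measurable_const
      ((Measure.measurable_coe hU).comp measurable_subtype_coe)
  have hτ2 : @SecondCountableTopology _ (.generateFrom S) :=
    @SecondCountableTopology.mk _ (.generateFrom S) ⟨S, hS, rfl⟩
  have hVτ : @IsOpen _ (.generateFrom S) V := by
    rw [@isOpen_iff_mem_nhds _ (.generateFrom S)]
    intro η hη
    have hcg : (@nhds _ (.generateFrom S) η).IsCountablyGenerated :=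
      @FirstCountableTopology.nhds_generated_countable _ (.generateFrom S)
        (@TopologicalSpace.SecondCountableTopology.to_firstCountableTopology _ (.generateFrom S) hτ2) η
    have ht : Tendsto (fun ν : ProbabilityMeasure X => ν) (@nhds _ (.generateFrom S) η) (𝓝 η) := by
      refine tendsto_of_forall_isOpen_le_liminf' fun G hG => ?_
      refine le_of_forall_lt fun c hc => ?_
      obtain ⟨q, hq0, hcq, hqG⟩ := ENNReal.lt_iff_exists_rat_btwn.1 hc
      obtain ⟨S', hS'B, hS'⟩ := (TopologicalSpace.isBasis_countableBasis X).open_eq_sUnion hG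
      have hS'c : S'.Countable := (TopologicalSpace.countable_countableBasis X).mono hS'B
      have hsup : (η : Measure X) G = ⨆ (T : Set (Set X)) (_ : T.Finite ∧ T ⊆ S'), (η : Measure X) (⋃₀ T) := by
        refine le_antisymm ?_ (iSup₂_le fun T hT => measure_mono ?_)
        · rcases S'.eq_empty_or_nonempty with rfl | hne
          · simp [hS']
          obtain ⟨f, hf⟩ := hS'c.exists_eq_range hne
          have hG' : G = ⋃ N, ⋃₀ (f '' (Iio N)) := by
            rw [hS', hf]
            ext y
            simp only [mem_sUnion, mem_range, exists_exists_eq_and, mem_iUnion, mem_image, mem_Iio]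
            constructor
            · rintro ⟨n, hn⟩; exact ⟨n + 1, f n, ⟨n, by omega, rfl⟩, hn⟩
            · rintro ⟨_, _, ⟨n, _, rfl⟩, hn⟩; exact ⟨n, hn⟩
          rw [hG', Monotone.measure_iUnion]
          · refine iSup_le fun N => le_iSup₂_of_le (f '' (Iio N)) ⟨(finite_Iio N).image f, ?_⟩ le_rfl
            rw [hf]; exact image_subset_range _ _
          · intro a b hab
            exact sUnion_subset_sUnion (image_mono (Iio_subset_Iio hab))
        · rw [hS']; exact sUnion_subset_sUnion hT.2
      rw [hsup] at hqG
      simp only [lt_iSup_iff] at hqG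
      obtain ⟨T, ⟨hT1, hT2⟩, hqT⟩ := hqG
      have hmem : {ν : ProbabilityMeasure X | ENNReal.ofReal (q : ℝ) < (ν : Measure X) (⋃₀ T)} ∈ @nhds _ (.generateFrom S) η :=
        @IsOpen.mem_nhds _ (.generateFrom S) η _ (TopologicalSpace.isOpen_generateFrom_of_mem ⟨(T, q), ⟨⟨hT1, hT2.trans hS'B⟩, mem_univ _⟩, rfl⟩) hqT
      refine lt_of_lt_of_le hcq (le_liminf_of_le (by isBoundedDefault) ?_)
      filter_upwards [hmem] with ν hν
      refine le_trans (le_of_lt hν) (measure_mono ?_)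
      rw [hS']; exact sUnion_subset_sUnion hT2
    exact ht (hV.mem_nhds hη)
  have hb := @borel_eq_generateFrom_of_subbasis _ S (.generateFrom S) hτ2 rfl
  have h1 : @MeasurableSet _ (@borel _ (.generateFrom S)) V := MeasurableSpace.measurableSet_generateFrom hVτ
  rw [hb] at h1
  exact MeasurableSpace.generateFrom_le hSm V h1

instance : OpensMeasurableSpace (ProbabilityMeasure X) :=
  ⟨MeasurableSpace.generateFrom_le fun _ h => measurableSet_of_isOpen h⟩

end weak

section scen
variable {d : ℕ} {μ : Measure (Euc d)} [IsProbabilityMeasure μ] {x : Euc d}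

omit [IsProbabilityMeasure μ] in
lemma resc_apply (t : ℝ) {A : Set (Euc d)} (hA : MeasurableSet A) :
    resc μ x t A = (μ (closedBall x ((2 : ℝ) ^ (-t))))⁻¹ *
      μ (closedBall x ((2 : ℝ) ^ (-t)) ∩ {y | (2 : ℝ) ^ t • (y - x) ∈ A}) := by
  have hm : Measurable fun y : Euc d => (2 : ℝ) ^ t • (y - x) := by fun_prop
  rw [resc, Measure.smul_apply, Measure.restrict_apply hA,
    Measure.map_apply hm (hA.inter measurableSet_closedBall), smul_eq_mul]
  congr 2
  ext y
  simp only [mem_preimage, mem_inter_iff, mem_closedBall, dist_zero_right, mem_ofPred_eq]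
  rw [norm_smul, Real.norm_of_nonneg (by positivity), dist_eq_norm, Real.rpow_neg (by norm_num),
    and_comm]
  have h2 : (0 : ℝ) < 2 ^ t := by positivity
  rw [← le_div_iff₀' h2, one_div]

lemma resc_isProb (hx : ∀ r > 0, 0 < μ (closedBall x r)) (t : ℝ) :
    IsProbabilityMeasure (resc μ x t) := by
  refine ⟨?_⟩
  rw [resc_apply t MeasurableSet.univ]
  have : {y : Euc d | (2 : ℝ) ^ t • (y - x) ∈ (univ : Set (Euc d))} = univ := by simp
  rw [this, inter_univ]
  exact ENNReal.inv_mul_cancel (hx _ (by positivity)).ne' (measure_ne_top _ _)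

lemma rescPM_coe (hx : ∀ r > 0, 0 < μ (closedBall x r)) (t : ℝ) :
    (rescPM μ x t : Measure (Euc d)) = resc μ x t := by
  have h : rescPM μ x t = ⟨resc μ x t, resc_isProb hx t⟩ := dif_pos (resc_isProb hx t)
  rw [h]
  rfl

lemma measurable_rescPM (hx : ∀ r > 0, 0 < μ (closedBall x r)) :
    Measurable fun t => rescPM μ x t := by
  have h1 : Measurable fun t => (rescPM μ x t : Measure (Euc d)) := by
    refine Measure.measurable_of_measurable_coe _ fun A hA => ?_
    simp only [rescPM_coe hx, resc_apply _ hA]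
    have hb : MeasurableSet {p : ℝ × Euc d | p.2 ∈ closedBall x ((2 : ℝ) ^ (-p.1))} := by
      simp only [mem_closedBall]
      exact measurableSet_le (by fun_prop) (by fun_prop)
    have hA' : MeasurableSet {p : ℝ × Euc d | (2 : ℝ) ^ p.1 • (p.2 - x) ∈ A} := by
      have : Measurable fun p : ℝ × Euc d => (2 : ℝ) ^ p.1 • (p.2 - x) := by fun_prop
      exact this hA
    exact (measurable_measure_prodMk_left hb).inv.mul
      (measurable_measure_prodMk_left (hb.inter hA'))
  exact h1.subtype_mk

omit [IsProbabilityMeasure μ] in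
lemma ae_closedBall_pos : ∀ᵐ x ∂μ, ∀ r > 0, 0 < μ (closedBall x r) := by
  filter_upwards [Measure.support_mem_ae (μ := μ)] with x hx r hr
  exact ((Measure.mem_support_iff_forall x).1 hx _ (closedBall_mem_nhds x hr))

open Classical in
/-- Closed sets of measures which the scenery visits outside a set of times of density `q` carry
mass at least `1 - q` of every tangent distribution. -/
lemma tangent_compl_le (hx : ∀ r > 0, 0 < μ (closedBall x r))
    {P : Measure (ProbabilityMeasure (Euc d))} (hP : IsTangentDistribution μ x P)
    {E : Set (ProbabilityMeasure (Euc d))} (hE : IsClosed E) {q : ℝ}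
    (h : FreqLE {k : ℕ | ∃ s : ℝ, (k : ℝ) ≤ s ∧ s ≤ k + 1 ∧ rescPM μ x s ∉ E} q) :
    P Eᶜ ≤ ENNReal.ofReal q := by
  obtain ⟨hPp, T, hT1, hT, hF⟩ := hP
  set S := {k : ℕ | ∃ s : ℝ, (k : ℝ) ≤ s ∧ s ≤ k + 1 ∧ rescPM μ x s ∉ E} with hS
  have key : ∀ F : BoundedContinuousFunction (ProbabilityMeasure (Euc d)) ℝ, (∀ η, 0 ≤ F η) →
      (∀ η ∈ E, 1 ≤ F η) → 1 - q ≤ ∫ η, F η ∂P := by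
    intro F hF0 hFE
    have hmeas : Measurable fun t => F (rescPM μ x t) :=
      F.continuous.measurable.comp (measurable_rescPM hx)
    have hintg : ∀ a b : ℝ, IntegrableOn (fun t => F (rescPM μ x t)) (Ioc a b) := fun a b =>
      Measure.integrableOn_of_bounded (M := ‖F‖) (by simp) hmeas.aestronglyMeasurable
        (Eventually.of_forall fun t => F.norm_coe_le_norm _)
    have hlow : ∀ᶠ N : ℕ in atTop, (1 - q) * N ≤ ∫ t in Ioc (0 : ℝ) N, F (rescPM μ x t) := by
      filter_upwards [h] with N hN
      have hsum : ∫ t in Ioc (0 : ℝ) N, F (rescPM μ x t) = ∑ k ∈ Finset.range N, ∫ t in Ioc (k : ℝ) (k + 1 : ℕ), F (rescPM μ x t) := by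
        have := intervalIntegral.sum_integral_adjacent_intervals (μ := volume) (f := fun t => F (rescPM μ x t)) (a := fun k : ℕ => (k : ℝ)) (n := N) (fun k _ => ⟨hintg _ _, hintg _ _⟩)
        rw [Nat.cast_zero, intervalIntegral.integral_of_le (Nat.cast_nonneg N)] at this
        rw [← this]
        refine Finset.sum_congr rfl fun k _ => ?_
        rw [intervalIntegral.integral_of_le (by simp)]
      rw [hsum]
      have hterm : ∀ k : ℕ, (if k ∈ S then (0 : ℝ) else 1) ≤ ∫ t in Ioc (k : ℝ) (k + 1 : ℕ), F (rescPM μ x t) := by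
        intro k
        split_ifs with hk
        · exact integral_nonneg fun t => hF0 _
        · have h1 : ∫ t in Ioc (k : ℝ) (k + 1 : ℕ), (1 : ℝ) = 1 := by simp
          rw [← h1]
          refine setIntegral_mono_on (by simp) (hintg _ _) measurableSet_Ioc fun t ht => ?_
          refine hFE _ ?_
          by_contra hcon
          exact hk ⟨t, ht.1.le, by simpa using ht.2, hcon⟩
      refine le_trans ?_ (Finset.sum_le_sum fun k _ => hterm k)
      have hcount : ∑ k ∈ Finset.range N, (if k ∈ S then (0 : ℝ) else 1) = N - ((Finset.range N).filter (fun t => t ∈ S)).card := by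
        have : ∀ k, (if k ∈ S then (0 : ℝ) else 1) = 1 - (if k ∈ S then 1 else 0) := by
          intro k; split_ifs <;> simp
        simp only [this, Finset.sum_sub_distrib, Finset.sum_boole]
        simp
      rw [hcount]
      have hN' : (((Finset.range N).filter (fun t => t ∈ S)).card : ℝ) ≤ q * N := by convert hN
      linarith
    have hfl : Tendsto (fun n => ⌊T n⌋₊) atTop atTop := tendsto_nat_floor_atTop.comp hT
    have hlim : Tendsto (fun n => (1 - q) * ((T n)⁻¹ * ⌊T n⌋₊)) atTop (𝓝 ((1 - q) * 1)) := by
      refine Tendsto.const_mul _ ?_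
      have := (tendsto_nat_floor_div_atTop (R := ℝ)).comp hT
      refine this.congr fun n => ?_
      simp [div_eq_inv_mul]
    rw [mul_one] at hlim
    refine le_of_tendsto_of_tendsto hlim (hF F) ?_
    filter_upwards [hfl.eventually hlow] with n hn
    have hTn := hT1 n
    have h0 : (0 : ℝ) < T n := by linarith
    calc (1 - q) * ((T n)⁻¹ * ⌊T n⌋₊) = (T n)⁻¹ * ((1 - q) * ⌊T n⌋₊) := by ring
      _ ≤ (T n)⁻¹ * ∫ t in Ioc (0 : ℝ) ⌊T n⌋₊, F (rescPM μ x t) := by gcongr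
      _ ≤ _ := by
        gcongr (T n)⁻¹ * ?_
        refine setIntegral_mono_set (hintg _ _) (Eventually.of_forall fun t => hF0 _) ?_
        exact (Ioc_subset_Ioc_right (Nat.floor_le h0.le)).eventuallyLE
  have hE1 : ENNReal.ofReal (1 - q) ≤ P E := by
    refine ge_of_tendsto' (HasOuterApproxClosed.tendsto_lintegral_apprSeq hE P) fun n => ?_
    let F : BoundedContinuousFunction (ProbabilityMeasure (Euc d)) ℝ :=
      BoundedContinuousFunction.ofNormedAddCommGroup (fun η => (hE.apprSeq n η : ℝ)) (by fun_prop) 1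
        (fun η => by
          have := HasOuterApproxClosed.apprSeq_apply_le_one hE n η
          simpa using this)
    have := key F (fun η => NNReal.coe_nonneg _) (fun η hη => by
      have := HasOuterApproxClosed.apprSeq_apply_eq_one hE n hη
      simp [F, this])
    refine (ENNReal.ofReal_le_ofReal this).trans ?_
    rw [ofReal_integral_eq_lintegral_ofReal (F.integrable P) (Eventually.of_forall fun η => NNReal.coe_nonneg _)]
    refine lintegral_mono fun η => ?_
    simp [F]
  rw [prob_compl_eq_one_sub hE.measurableSet]
  rw [tsub_le_iff_left]
  calc (1 : ℝ≥0∞) = ENNReal.ofReal ((1 - q) + q) := by simp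
    _ ≤ ENNReal.ofReal (1 - q) + ENNReal.ofReal q := ENNReal.ofReal_add_le
    _ ≤ _ := by gcongr

end scen

section closedev
variable {X : Type*} [MetricSpace X] [SecondCountableTopology X] [MeasurableSpace X] [BorelSpace X]

omit [SecondCountableTopology X] in
lemma isOpen_lt_measure {U : Set X} (hU : IsOpen U) (c : ℝ≥0∞) :
    IsOpen {η : ProbabilityMeasure X | c < (η : Measure X) U} := by
  rw [isOpen_iff_mem_nhds]
  intro η hη
  have h := ProbabilityMeasure.le_liminf_measure_open_of_tendsto (L := 𝓝 η) (μs := fun ν => ν)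
    (μ := η) tendsto_id hU
  exact eventually_lt_of_lt_liminf (lt_of_lt_of_le hη h)

omit [SecondCountableTopology X] in
lemma isClosed_contentLE (s δ C : ℝ) :
    IsClosed {η : ProbabilityMeasure X | ContentLE (η : Measure X) s δ C} := by
  have : {η : ProbabilityMeasure X | ContentLE (η : Measure X) s δ C} =
      ⋂ (F : Finset (X × ℝ)) (_ : ∀ p ∈ F, 0 < p.2),
        {η : ProbabilityMeasure X | ENNReal.ofReal δ + ENNReal.ofReal C * ∑ p ∈ F, ENNReal.ofReal (p.2 ^ s)
          < (η : Measure X) (⋃ p ∈ F, ball p.1 p.2)}ᶜ := by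
    ext η
    simp [ContentLE]
  rw [this]
  refine isClosed_iInter fun F => isClosed_iInter fun _ => ?_
  exact (isOpen_lt_measure (isOpen_biUnion fun p _ => isOpen_ball) _).isClosed_compl

/-- Measures giving mass at least `c₂` to the set of points whose `r`-balls have mass at least `c₁`
form a weakly closed set. -/
lemma isClosed_heavy (c₁ c₂ : ℝ≥0∞) (r : ℝ) :
    IsClosed {η : ProbabilityMeasure X | c₂ ≤ (η : Measure X) {y | c₁ ≤ (η : Measure X) (closedBall y r)}} := by
  refine IsSeqClosed.isClosed fun ηs η hηs hη => ?_
  set A : ℕ → Set X := fun j => {y | c₁ ≤ (ηs j : Measure X) (closedBall y r)} with hA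
  set F : ℕ → Set X := fun m => closure (⋃ j ≥ m, A j) with hF
  have hclosed : ∀ {K : Set X} {c : ℝ≥0∞}, IsClosed K → (∃ᶠ j in atTop, c ≤ (ηs j : Measure X) K) →
      c ≤ (η : Measure X) K := by
    intro K c hK hfr
    refine le_trans ?_ (ProbabilityMeasure.limsup_measure_closed_le_of_tendsto hη hK)
    exact le_limsup_of_frequently_le hfr
  have h1 : ∀ m, c₂ ≤ (η : Measure X) (F m) := by
    intro m
    refine hclosed isClosed_closure (Eventually.frequently ?_)
    filter_upwards [eventually_ge_atTop m] with j hj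
    refine (hηs j).trans (measure_mono ?_)
    exact (subset_biUnion_of_mem (u := A) (show j ∈ {j | j ≥ m} from hj)).trans subset_closure
  have h2 : ⋂ m, F m ⊆ {y | c₁ ≤ (η : Measure X) (closedBall y r)} := by
    intro y hy
    have h3 : ∀ n : ℕ, c₁ ≤ (η : Measure X) (closedBall y (r + 1 / (n + 1))) := by
      intro n
      refine hclosed isClosed_closedBall (frequently_atTop.2 fun m => ?_)
      obtain ⟨z, hz, hzy⟩ := Metric.mem_closure_iff.1 (mem_iInter.1 hy m) (1 / (n + 1)) (by positivity)
      obtain ⟨j, hj, hzj⟩ := mem_iUnion₂.1 hz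
      refine ⟨j, hj, le_trans hzj (measure_mono fun w hw => ?_)⟩
      rw [mem_closedBall] at *
      have := dist_triangle w z y
      rw [dist_comm z y] at this
      linarith
    have h4 : closedBall y r = ⋂ n : ℕ, closedBall y (r + 1 / (n + 1)) := by
      ext w
      simp only [mem_closedBall, mem_iInter]
      constructor
      · intro h n
        have : (0 : ℝ) < 1 / (n + 1) := by positivity
        linarith
      · intro h
        refine le_of_forall_pos_le_add fun ε hε => ?_
        obtain ⟨n, hn⟩ := exists_nat_one_div_lt hε
        linarith [h n]
    have h5 := tendsto_measure_iInter_atTop (μ := (η : Measure X))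
      (s := fun n : ℕ => closedBall y (r + 1 / ((n : ℝ) + 1)))
      (fun n => measurableSet_closedBall.nullMeasurableSet)
      (fun a b hab => closedBall_subset_closedBall (by
        gcongr)) ⟨0, measure_ne_top _ _⟩
    rw [← h4] at h5
    exact ge_of_tendsto' h5 h3
  have h6 := tendsto_measure_iInter_atTop (μ := (η : Measure X)) (s := F)
    (fun n => isClosed_closure.measurableSet.nullMeasurableSet)
    (fun a b hab => closure_mono (biUnion_subset_biUnion_left fun j hj => le_trans hab hj))
    ⟨0, measure_ne_top _ _⟩
  exact (ge_of_tendsto' h6 h1).trans (measure_mono h2)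

omit [SecondCountableTopology X] in
lemma le_mdim_of_contentLE {η : Measure X} {s : ℝ} (h : ∀ δ > 0, ∃ C, ContentLE η s δ C) :
    ENNReal.ofReal s ≤ mdim η := by
  refine le_iInf fun A => le_iInf fun _ => le_iInf fun hA => ?_
  by_contra hcon
  push Not at hcon
  rcases le_or_gt s 0 with hs | hs
  · rw [ENNReal.ofReal_of_nonpos hs] at hcon
    exact absurd hcon (by simp)
  refine hA.ne' (le_antisymm (ENNReal.le_of_forall_pos_le_add fun ε hε _ => ?_) (zero_le))
  obtain ⟨C, hC⟩ := h ε hε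
  simpa using hC.measure_le hs hcon

/-- The `limsup` of the heavy sets has mass at least `c₂` and dimension at most `s`. -/
lemma mdim_le_of_heavy {η : Measure X} [IsProbabilityMeasure η] {c₁ s : ℝ} {c₂ : ℝ≥0∞} (hc₁ : 0 < c₁) (hs : 0 ≤ s)
    (hc₂ : 0 < c₂) (h : ∃ᶠ n : ℕ in atTop,
      c₂ ≤ η {y | ENNReal.ofReal (c₁ * (2 : ℝ) ^ (-(n * s : ℝ))) ≤ η (closedBall y ((2 : ℝ) ^ (-(n : ℝ))))}) :
    mdim η ≤ ENNReal.ofReal s := by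
  set A : ℕ → Set X := fun n =>
    {y | ENNReal.ofReal (c₁ * (2 : ℝ) ^ (-(n * s : ℝ))) ≤ η (closedBall y ((2 : ℝ) ^ (-(n : ℝ))))} with hA
  have hAm : ∀ n, MeasurableSet (A n) := fun n =>
    measurableSet_le measurable_const (measurable_measure_closedBall η _)
  have hm := MeasurableSet.measurableSet_limsup hAm
  have hpos : c₂ ≤ η (limsup A atTop) := by
    rw [limsup_eq_iInf_iSup_of_nat]
    simp only [iInf_eq_iInter, iSup_eq_iUnion]
    have h6 := tendsto_measure_iInter_atTop (μ := η) (s := fun n => ⋃ i ≥ n, A i)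
      (fun n => (MeasurableSet.iUnion fun i => MeasurableSet.iUnion fun _ => hAm i).nullMeasurableSet)
      (fun a b hab => biUnion_subset_biUnion_left fun j hj => le_trans hab hj)
      ⟨0, measure_ne_top _ _⟩
    refine ge_of_tendsto' h6 fun n => ?_
    obtain ⟨j, hj, hj2⟩ := frequently_atTop.1 h n
    exact hj2.trans (measure_mono (subset_biUnion_of_mem (u := A) (show j ∈ {j | j ≥ n} from hj)))
  have hle : mdim η ≤ dimH (limsup A atTop) :=
    iInf_le_of_le _ (iInf_le_of_le hm (iInf_le _ (hc₂.trans_le hpos)))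
  refine hle.trans ?_
  refine le_trans (dimH_mono ?_) (dimH_heavy η hc₁ hs)
  intro y hy
  exact mem_limsup_iff_frequently_mem.1 hy

end closedev

/-! ### Quasi-self-similar measures -/

/-- A finite system of continuous maps `g i`, with compositions of uniformly bounded distortion on
the closed set `K` (field `bd`) and uniformly contracting there (field `contr`), together with a
stationary probability measure `μ` on `K`. Compositions along a word `u` are folds
`u.foldr g`. The points `a ≠ b` of `K` serve to measure contraction ratios. -/
structure QSS (d : ℕ) where
  n : ℕ
  g : Fin n → Euc d → Euc d
  cont : ∀ i, Continuous (g i)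
  K : Set (Euc d)
  hKc : IsClosed K
  hK1 : K ⊆ closedBall 0 1
  maps : ∀ i x, g i x ∈ K
  a : Euc d
  b : Euc d
  ha : a ∈ K
  hb : b ∈ K
  hab : a ≠ b
  C : ℝ
  hC : 1 ≤ C
  bd : ∀ (u : List (Fin n)) (x y z w : Euc d), x ∈ K → y ∈ K → z ∈ K → w ∈ K →
    dist (u.foldr g x) (u.foldr g y) * dist z w ≤ C * dist (u.foldr g z) (u.foldr g w) * dist x y
  θ : ℝ
  hθ0 : 0 < θ
  hθ1 : θ < 1
  contr : ∀ (u : List (Fin n)) (x y : Euc d), x ∈ K → y ∈ K →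
    dist (u.foldr g x) (u.foldr g y) ≤ C * θ ^ u.length
  ne : ∀ u : List (Fin n), u.foldr g a ≠ u.foldr g b
  p : Fin n → ℝ≥0∞
  hp0 : ∀ i, 0 < p i
  hp1 : ∑ i, p i = 1
  μ : Measure (Euc d)
  prob : IsProbabilityMeasure μ
  hμK : μ Kᶜ = 0
  stat : μ = ∑ i, p i • μ.map (g i)

namespace QSS
variable {d : ℕ} (Q : QSS d)

instance : IsProbabilityMeasure Q.μ := Q.prob

/-- Finite words over the alphabet of the system. -/
abbrev Word := List (Fin Q.n)

/-- The composition of the maps of the system along a word. -/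
def gw (u : Q.Word) (x : Euc d) : Euc d := u.foldr Q.g x

@[simp] lemma gw_nil (x : Euc d) : Q.gw [] x = x := rfl
@[simp] lemma gw_cons (i : Fin Q.n) (u : Q.Word) (x : Euc d) : Q.gw (i :: u) x = Q.g i (Q.gw u x) := rfl
lemma gw_append (u v : Q.Word) (x : Euc d) : Q.gw (u ++ v) x = Q.gw u (Q.gw v x) := by
  simp [gw, List.foldr_append]

lemma gw_mem (u : Q.Word) {x : Euc d} (hx : x ∈ Q.K) : Q.gw u x ∈ Q.K := by
  cases u with
  | nil => exact hx
  | cons i u => exact Q.maps _ _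

lemma gw_cont (u : Q.Word) : Continuous (Q.gw u) := by
  induction u with
  | nil => exact continuous_id
  | cons i u ih => exact (Q.cont i).comp ih

lemma gw_meas (u : Q.Word) : Measurable (Q.gw u) := (Q.gw_cont u).measurable

/-- The contraction ratio of a word, normalized so that the empty word has ratio `1`. -/
noncomputable def r (u : Q.Word) : ℝ := dist (Q.gw u Q.a) (Q.gw u Q.b) / dist Q.a Q.b

lemma dab : 0 < dist Q.a Q.b := dist_pos.2 Q.hab
lemma C_pos : 0 < Q.C := by linarith [Q.hC]

lemma r_pos (u : Q.Word) : 0 < Q.r u := div_pos (dist_pos.2 (Q.ne u)) Q.dab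

lemma r_mul (u : Q.Word) : Q.r u * dist Q.a Q.b = dist (Q.gw u Q.a) (Q.gw u Q.b) :=
  div_mul_cancel₀ _ Q.dab.ne'

@[simp] lemma r_nil : Q.r [] = 1 := by simp [r, div_self Q.dab.ne']

lemma dist_le (u : Q.Word) {x y : Euc d} (hx : x ∈ Q.K) (hy : y ∈ Q.K) :
    dist (Q.gw u x) (Q.gw u y) ≤ Q.C * Q.r u * dist x y := by
  have := Q.bd u x y Q.a Q.b hx hy Q.ha Q.hb
  rw [← le_div_iff₀ Q.dab] at this
  refine this.trans (le_of_eq ?_)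
  rw [r, gw, gw]; ring

lemma le_dist (u : Q.Word) {x y : Euc d} (hx : x ∈ Q.K) (hy : y ∈ Q.K) :
    Q.r u * dist x y ≤ Q.C * dist (Q.gw u x) (Q.gw u y) := by
  have := Q.bd u Q.a Q.b x y Q.ha Q.hb hx hy
  rw [← div_le_iff₀ Q.dab] at this
  refine le_trans (le_of_eq ?_) this
  rw [r, gw, gw]; ring

lemma r_append_le (u v : Q.Word) : Q.r (u ++ v) ≤ Q.C * Q.r u * Q.r v := by
  have := Q.dist_le u (Q.gw_mem v Q.ha) (Q.gw_mem v Q.hb)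
  rw [r, gw_append, gw_append, div_le_iff₀ Q.dab]
  refine this.trans (le_of_eq ?_)
  rw [mul_assoc (Q.C * Q.r u), Q.r_mul v]

lemma le_r_append (u v : Q.Word) : Q.r u * Q.r v ≤ Q.C * Q.r (u ++ v) := by
  have := Q.le_dist u (Q.gw_mem v Q.ha) (Q.gw_mem v Q.hb)
  rw [← Q.r_mul v, ← Q.gw_append, ← Q.gw_append, ← Q.r_mul (u ++ v), ← mul_assoc, ← mul_assoc] at this
  exact le_of_mul_le_mul_right this Q.dab

lemma r_le (u : Q.Word) : Q.r u ≤ Q.C / dist Q.a Q.b * Q.θ ^ u.length := by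
  have := Q.contr u Q.a Q.b Q.ha Q.hb
  rw [r, div_mul_eq_mul_div]
  gcongr
  exact this

/-- A lower bound for the contraction ratios of the maps of the system. -/
lemma exists_kappa : ∃ κ : ℝ, 0 < κ ∧ κ ≤ 1 ∧ ∀ i, κ ≤ Q.r [i] := by
  classical
  obtain ⟨κ, h1, h2⟩ : ∃ κ : ℝ, 0 < κ ∧ ∀ i, κ ≤ Q.r [i] := by
    rcases isEmpty_or_nonempty (Fin Q.n) with h | h
    · exact ⟨1, one_pos, fun i => (IsEmpty.false i).elim⟩
    · obtain ⟨i, hi⟩ := Finite.exists_min fun i => Q.r [i]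
      exact ⟨_, Q.r_pos [i], hi⟩
  exact ⟨min κ 1, lt_min h1 one_pos, min_le_right _ _, fun i => (min_le_left _ _).trans (h2 i)⟩

/-- A lower bound for the contraction ratios of the maps of the system. -/
noncomputable def κ : ℝ := Q.exists_kappa.choose
lemma κ_pos : 0 < Q.κ := Q.exists_kappa.choose_spec.1
lemma κ_le_one : Q.κ ≤ 1 := Q.exists_kappa.choose_spec.2.1
lemma κ_le (i : Fin Q.n) : Q.κ ≤ Q.r [i] := Q.exists_kappa.choose_spec.2.2 i

lemma dist_le_two {x y : Euc d} (hx : x ∈ Q.K) (hy : y ∈ Q.K) : dist x y ≤ 2 := by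
  have h1 := Q.hK1 hx
  have h2 := Q.hK1 hy
  rw [mem_closedBall] at h1 h2
  linarith [dist_triangle_right x y 0]

/-- The pieces `gw u K` have diameter comparable to `r u`. -/
lemma dist_gw_le (u : Q.Word) {x y : Euc d} (hx : x ∈ Q.K) (hy : y ∈ Q.K) :
    dist (Q.gw u x) (Q.gw u y) ≤ 2 * Q.C * Q.r u := by
  have := Q.dist_le u hx hy
  have h2 := Q.dist_le_two hx hy
  have h3 : Q.C * Q.r u * dist x y ≤ Q.C * Q.r u * 2 :=
    mul_le_mul_of_nonneg_left h2 (mul_nonneg Q.C_pos.le (Q.r_pos u).le)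
  linarith

/-- The weight of a word. -/
noncomputable def pw (u : Q.Word) : ℝ≥0∞ := (u.map Q.p).prod

@[simp] lemma pw_nil : Q.pw [] = 1 := rfl
@[simp] lemma pw_cons (i : Fin Q.n) (u : Q.Word) : Q.pw (i :: u) = Q.p i * Q.pw u := by simp [pw]
lemma pw_append (u v : Q.Word) : Q.pw (u ++ v) = Q.pw u * Q.pw v := by simp [pw]

lemma p_le_one (i : Fin Q.n) : Q.p i ≤ 1 := by
  rw [← Q.hp1]; exact Finset.single_le_sum (f := Q.p) (fun _ _ => zero_le) (Finset.mem_univ i)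

lemma p_ne_top (i : Fin Q.n) : Q.p i ≠ ∞ := ne_top_of_le_ne_top (by simp) (Q.p_le_one i)

lemma pw_pos (u : Q.Word) : 0 < Q.pw u := by
  induction u with
  | nil => simp
  | cons i u ih => rw [pw_cons]; exact ENNReal.mul_pos (Q.hp0 i).ne' ih.ne'

lemma pw_le_one (u : Q.Word) : Q.pw u ≤ 1 := by
  induction u with
  | nil => simp
  | cons i u ih => rw [pw_cons]; exact mul_le_one' (Q.p_le_one i) ih

lemma pw_ne_top (u : Q.Word) : Q.pw u ≠ ∞ := ne_top_of_le_ne_top (by simp) (Q.pw_le_one u)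

lemma stat_apply {A : Set (Euc d)} (hA : MeasurableSet A) :
    Q.μ A = ∑ i, Q.p i * Q.μ (Q.g i ⁻¹' A) := by
  conv_lhs => rw [Q.stat]
  simp only [Measure.coe_finsetSum, Finset.sum_apply, Measure.smul_apply, smul_eq_mul]
  refine Finset.sum_congr rfl fun i _ => ?_
  rw [Measure.map_apply (Q.cont i).measurable hA]

/-- Weighted sum over all words of length `L`. -/
noncomputable def wsum : ℕ → (Q.Word → ℝ≥0∞) → ℝ≥0∞
  | 0, φ => φ []
  | L + 1, φ => ∑ i, Q.p i * wsum L fun u => φ (i :: u)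

lemma wsum_mono {L : ℕ} {φ ψ : Q.Word → ℝ≥0∞} (h : ∀ u, u.length = L → φ u ≤ ψ u) :
    Q.wsum L φ ≤ Q.wsum L ψ := by
  induction L generalizing φ ψ with
  | zero => exact h [] rfl
  | succ L ih =>
    refine Finset.sum_le_sum fun i _ => ?_
    gcongr
    exact ih fun u hu => h _ (by simp [hu])

lemma wsum_congr {L : ℕ} {φ ψ : Q.Word → ℝ≥0∞} (h : ∀ u, u.length = L → φ u = ψ u) :
    Q.wsum L φ = Q.wsum L ψ :=
  le_antisymm (Q.wsum_mono fun u hu => (h u hu).le) (Q.wsum_mono fun u hu => (h u hu).ge)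

lemma wsum_const (L : ℕ) (c : ℝ≥0∞) : Q.wsum L (fun _ => c) = c := by
  induction L with
  | zero => rfl
  | succ L ih =>
    simp only [wsum, ih, ← Finset.sum_mul, Q.hp1, one_mul]

lemma wsum_add (L : ℕ) (φ ψ : Q.Word → ℝ≥0∞) :
    Q.wsum L (fun u => φ u + ψ u) = Q.wsum L φ + Q.wsum L ψ := by
  induction L generalizing φ ψ with
  | zero => rfl
  | succ L ih => simp only [wsum, ih, mul_add, Finset.sum_add_distrib]

lemma wsum_mul (L : ℕ) (c : ℝ≥0∞) (φ : Q.Word → ℝ≥0∞) :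
    Q.wsum L (fun u => c * φ u) = c * Q.wsum L φ := by
  induction L generalizing φ with
  | zero => rfl
  | succ L ih =>
    simp only [wsum, ih, Finset.mul_sum]
    exact Finset.sum_congr rfl fun i _ => by ring

lemma wsum_list_sum {ι : Type*} (L : ℕ) (W : List ι) (φ : ι → Q.Word → ℝ≥0∞) :
    Q.wsum L (fun u => (W.map fun j => φ j u).sum) = (W.map fun j => Q.wsum L (φ j)).sum := by
  induction W with
  | nil => simpa using Q.wsum_const L 0
  | cons j W ih => simp only [List.map_cons, List.sum_cons, wsum_add, ih]

lemma wsum_finset_sum {ι : Type*} (L : ℕ) (s : Finset ι) (φ : ι → Q.Word → ℝ≥0∞) :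
    Q.wsum L (fun u => ∑ j ∈ s, φ j u) = ∑ j ∈ s, Q.wsum L (φ j) := by
  classical
  induction s using Finset.induction_on with
  | empty => simpa using Q.wsum_const L 0
  | insert j s hj ih => simp only [Finset.sum_insert hj, wsum_add, ih]

lemma wsum_split (k l : ℕ) (φ : Q.Word → ℝ≥0∞) :
    Q.wsum (k + l) φ = Q.wsum k fun u => Q.wsum l fun v => φ (u ++ v) := by
  induction k generalizing φ with
  | zero => simp [wsum]
  | succ k ih =>
    rw [Nat.succ_add_eq_add_succ, Nat.add_succ]
    simp only [wsum, ih, List.cons_append]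

lemma wsum_measure (L : ℕ) {A : Set (Euc d)} (hA : MeasurableSet A) :
    Q.μ A = Q.wsum L fun u => Q.μ (Q.gw u ⁻¹' A) := by
  induction L generalizing A with
  | zero => rfl
  | succ L ih =>
    rw [wsum, Q.stat_apply hA]
    refine Finset.sum_congr rfl fun i _ => ?_
    rw [ih ((Q.cont i).measurable hA)]
    rfl

open Classical in
/-- Sum over the words with a prescribed prefix. -/
lemma wsum_extend (u : Q.Word) {L : ℕ} (hu : u.length ≤ L) (φ : Q.Word → ℝ≥0∞) :
    Q.wsum L (fun w => if u <+: w then φ (w.drop u.length) else 0) =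
      Q.pw u * Q.wsum (L - u.length) φ := by
  induction u generalizing L with
  | nil => simp
  | cons i u ih =>
    obtain ⟨L, rfl⟩ : ∃ L', L = L' + 1 := ⟨L - 1, by simp at hu; omega⟩
    simp only [List.length_cons, add_le_add_iff_right] at hu
    rw [wsum, Finset.sum_eq_single i]
    · simp only [List.cons_prefix_cons, true_and, List.length_cons, List.drop_succ_cons,
        Nat.reduceSubDiff, pw_cons]
      rw [ih hu, mul_assoc]
    · intro j _ hj
      have : ∀ w : Q.Word, ¬ (i :: u <+: j :: w) := fun w h => by
        rw [List.cons_prefix_cons] at h; exact hj h.1.symm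
      simp only [this, if_false, Q.wsum_const, mul_zero]
    · simp

omit Q in
lemma sum_map_flatMap {ι κ : Type*} (l : List ι) (W : ι → List κ) (f : κ → ℝ≥0∞) :
    ((l.flatMap W).map f).sum = (l.map fun i => ((W i).map f).sum).sum := by
  induction l with
  | nil => simp
  | cons i l ih => simp [ih]

/-- The words at which the contraction ratio first drops below `R` form a section: the measure is
a weighted average of its images under them, and every long word has a prefix among them. -/
lemma exists_section {R : ℝ} (hR0 : 0 < R) (hR1 : R ≤ 1) : ∃ (W : List Q.Word) (M : ℕ),
    (∀ u ∈ W, Q.C⁻¹ * Q.κ * R ≤ Q.r u ∧ Q.r u ≤ R ∧ u.length ≤ M) ∧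
    (∀ A : Set (Euc d), MeasurableSet A → Q.μ A = (W.map fun u => Q.pw u * Q.μ (Q.gw u ⁻¹' A)).sum) ∧
    (∀ w : Q.Word, M ≤ w.length → ∃ u ∈ W, u <+: w) := by
  obtain ⟨M, hM⟩ : ∃ M : ℕ, Q.C / dist Q.a Q.b * Q.θ ^ M < R := by
    have : Tendsto (fun M : ℕ => Q.C / dist Q.a Q.b * Q.θ ^ M) atTop (𝓝 (Q.C / dist Q.a Q.b * 0)) :=
      (tendsto_pow_atTop_nhds_zero_of_lt_one Q.hθ0.le Q.hθ1).const_mul _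
    rw [mul_zero] at this
    exact (this.eventually (gt_mem_nhds hR0)).exists
  have key : ∀ (k : ℕ) (u : Q.Word), u.length + k = M → Q.C⁻¹ * Q.κ * R ≤ Q.r u →
      ∃ W : List Q.Word,
        (∀ v ∈ W, Q.C⁻¹ * Q.κ * R ≤ Q.r v ∧ Q.r v ≤ R ∧ v.length ≤ M) ∧
        (∀ A : Set (Euc d), MeasurableSet A → Q.pw u * Q.μ (Q.gw u ⁻¹' A) = (W.map fun v => Q.pw v * Q.μ (Q.gw v ⁻¹' A)).sum) ∧
        (∀ w : Q.Word, M ≤ w.length → u <+: w → ∃ v ∈ W, v <+: w) := by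
    intro k
    induction k with
    | zero =>
      intro u hu hr
      refine ⟨[u], ?_, by simp, fun w _ h => ⟨u, by simp, h⟩⟩
      intro v hv
      obtain rfl : v = u := by simpa using hv
      refine ⟨hr, (Q.r_le v).trans ?_, by omega⟩
      rw [show v.length = M by omega]; exact hM.le
    | succ k ih =>
      intro u hu hr
      by_cases hru : Q.r u ≤ R
      · refine ⟨[u], ?_, by simp, fun w _ h => ⟨u, by simp, h⟩⟩
        intro v hv
        obtain rfl : v = u := by simpa using hv
        exact ⟨hr, hru, by omega⟩
      push Not at hru
      have hri : ∀ i, Q.C⁻¹ * Q.κ * R ≤ Q.r (u ++ [i]) := by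
        intro i
        have h1 := Q.le_r_append u [i]
        have h2 := Q.κ_le i
        have h3 : Q.κ * R ≤ Q.C * Q.r (u ++ [i]) := by
          refine le_trans ?_ h1
          rw [mul_comm]
          exact mul_le_mul hru.le h2 Q.κ_pos.le (Q.r_pos u).le
        rw [mul_assoc, inv_mul_le_iff₀ Q.C_pos]
        exact h3
      choose W hW1 hW2 hW3 using fun i => ih (u ++ [i]) (by simp; omega) (hri i)
      refine ⟨(List.finRange Q.n).flatMap W, ?_, ?_, ?_⟩
      · intro v hv
        obtain ⟨i, _, hi⟩ := List.mem_flatMap.1 hv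
        exact hW1 i v hi
      · intro A hA
        rw [sum_map_flatMap]
        have : (List.map (fun i => (List.map (fun v => Q.pw v * Q.μ (Q.gw v ⁻¹' A)) (W i)).sum) (List.finRange Q.n)).sum
            = ∑ i, Q.pw (u ++ [i]) * Q.μ (Q.gw (u ++ [i]) ⁻¹' A) := by
          rw [← List.sum_ofFn, List.ofFn_eq_map]
          congr 1
          exact List.map_congr_left fun i _ => (hW2 i A hA).symm
        rw [this, Q.stat_apply (Q.gw_meas u hA), Finset.mul_sum]
        refine Finset.sum_congr rfl fun i _ => ?_
        rw [pw_append, ← mul_assoc]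
        have : Q.gw (u ++ [i]) ⁻¹' A = Q.g i ⁻¹' (Q.gw u ⁻¹' A) := by
          ext x; simp [gw_append]
        rw [this]; simp
      · rintro w hw ⟨v, rfl⟩
        cases v with
        | nil => simp at hw; omega
        | cons i v =>
          obtain ⟨v', hv', hv''⟩ := hW3 i (u ++ i :: v) hw ⟨v, by simp⟩
          exact ⟨v', List.mem_flatMap.2 ⟨i, by simp, hv'⟩, hv''⟩
  obtain ⟨W, h1, h2, h3⟩ := key M [] (by simp) (by
    rw [r_nil]
    have h1 : Q.C⁻¹ ≤ 1 := inv_le_one_of_one_le₀ Q.hC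
    have h2 := Q.κ_le_one
    have h3 : Q.C⁻¹ * Q.κ ≤ 1 := mul_le_one₀ h1 Q.κ_pos.le h2
    exact mul_le_one₀ h3 hR0.le hR1)
  refine ⟨W, M, h1, fun A hA => ?_, fun w hw => h3 w hw (by simp)⟩
  rw [← h2 A hA, pw_nil, one_mul]
  rfl

end QSS
namespace QSS
variable {d : ℕ} (Q : QSS d)

/-! ### The zero-one law and the symbolic model -/

lemma measure_inter_K (A : Set (Euc d)) : Q.μ (A ∩ Q.K) = Q.μ A := by
  refine measure_inter_conull ?_
  exact Q.hμK

lemma measure_inter_le {E : Set (Euc d)} (hE : MeasurableSet E)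
    (h : ∀ i, Q.g i ⁻¹' E ∩ Q.K ⊆ E) (L : ℕ) {A : Set (Euc d)} (hA : MeasurableSet A) :
    Q.μ (E ∩ A) ≤ Q.wsum L fun u => Q.μ (E ∩ Q.gw u ⁻¹' A) := by
  induction L generalizing A with
  | zero => exact le_rfl
  | succ L ih =>
    rw [wsum, Q.stat_apply (hE.inter hA)]
    refine Finset.sum_le_sum fun i _ => ?_
    gcongr
    refine le_trans ?_ (ih ((Q.cont i).measurable hA))
    rw [← Q.measure_inter_K]
    refine measure_mono ?_
    rintro x ⟨⟨h1, h2⟩, h3⟩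
    exact ⟨h i ⟨h1, h3⟩, h2⟩

lemma exists_small_pieces {ε : ℝ} (hε : 0 < ε) : ∃ L : ℕ, Q.C * Q.θ ^ L < ε := by
  have : Tendsto (fun M : ℕ => Q.C * Q.θ ^ M) atTop (𝓝 (Q.C * 0)) :=
    (tendsto_pow_atTop_nhds_zero_of_lt_one Q.hθ0.le Q.hθ1).const_mul _
  rw [mul_zero] at this
  exact (this.eventually (gt_mem_nhds hε)).exists

open Classical in
/-- A set which contains the preimages of itself under the maps of the system is null or
full: the measure restricted to it is (sub)stationary, so it is dominated by a multiple of `μ`. -/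
lemma zero_one {E : Set (Euc d)} (hE : MeasurableSet E)
    (h : ∀ i, Q.g i ⁻¹' E ∩ Q.K ⊆ E) (h0 : Q.μ E ≠ 0) : Q.μ Eᶜ = 0 := by
  have step : ∀ F : Set (Euc d), IsClosed F → Q.μ (E ∩ F) ≤ Q.μ E * Q.μ F := by
    intro F hF
    have h1 : ∀ ε : ℝ, 0 < ε → Q.μ (E ∩ F) ≤ Q.μ E * Q.μ (cthickening ε F) := by
      intro ε hε
      obtain ⟨L, hL⟩ := Q.exists_small_pieces hε
      rw [Q.wsum_measure L isClosed_cthickening.measurableSet, ← wsum_mul]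
      refine (Q.measure_inter_le hE h L hF.measurableSet).trans (Q.wsum_mono fun u hu => ?_)
      by_cases hne : ∃ z ∈ Q.K, Q.gw u z ∈ F
      · obtain ⟨z, hz, hzF⟩ := hne
        have : Q.μ (Q.gw u ⁻¹' cthickening ε F) = 1 := by
          refine (prob_compl_eq_zero_iff
            ((Q.gw_meas u) (isClosed_cthickening (δ := ε) (E := F)).measurableSet)).1 ?_
          refine measure_mono_null (t := Q.Kᶜ) (fun x hx (hxK : x ∈ Q.K) => hx ?_) Q.hμK
          have hd : dist (Q.gw u x) (Q.gw u z) ≤ ε := by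
            refine (Q.contr u x z hxK hz).trans ?_
            rw [hu]; exact hL.le
          exact mem_cthickening_of_dist_le (Q.gw u x) (Q.gw u z) ε F hzF hd
        rw [this, mul_one]
        exact measure_mono inter_subset_left
      · have : Q.μ (E ∩ Q.gw u ⁻¹' F) = 0 := by
          refine measure_mono_null ?_ Q.hμK
          intro x hx hxK
          exact hne ⟨x, hxK, hx.2⟩
        rw [this]; exact zero_le
    have h2 : Tendsto (fun ε => Q.μ E * Q.μ (cthickening ε F)) (𝓝[>] 0) (𝓝 (Q.μ E * Q.μ F)) := by
      refine ENNReal.Tendsto.const_mul ?_ (Or.inr (measure_ne_top _ _))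
      exact (tendsto_measure_cthickening_of_isClosed ⟨1, one_pos, measure_ne_top _ _⟩ hF).mono_left
        nhdsWithin_le_nhds
    refine ge_of_tendsto h2 ?_
    filter_upwards [self_mem_nhdsWithin] with ε hε using h1 ε hε
  obtain ⟨F, hFE, hF, hF0⟩ : ∃ F, F ⊆ E ∧ IsClosed F ∧ 0 < Q.μ F :=
    hE.exists_lt_isClosed_of_ne_top (measure_ne_top _ _) (pos_iff_ne_zero.2 h0)
  have h3 := step F hF
  rw [inter_eq_self_of_subset_right hFE] at h3
  have h4 : 1 ≤ Q.μ E := by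
    by_contra hlt
    push Not at hlt
    have := ENNReal.mul_lt_mul_left hF0.ne' (measure_ne_top Q.μ F) hlt
    rw [one_mul] at this
    exact absurd h3 (not_le.2 this)
  rw [prob_compl_eq_zero_iff hE]
  exact le_antisymm prob_le_one h4

lemma wsum_eq_sum (L : ℕ) (φ : Q.Word → ℝ≥0∞) :
    Q.wsum L φ = ∑ f : Fin L → Fin Q.n, (∏ i, Q.p (f i)) * φ (List.ofFn f) := by
  induction L generalizing φ with
  | zero => simp [wsum]
  | succ L ih =>
    rw [wsum, ← (Fin.consEquiv fun _ : Fin (L+1) => Fin Q.n).sum_comp, Fintype.sum_prod_type]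
    refine Finset.sum_congr rfl fun i _ => ?_
    rw [ih, Finset.mul_sum]
    refine Finset.sum_congr rfl fun f _ => ?_
    simp [Fin.consEquiv, Fin.prod_univ_succ, List.ofFn_succ, mul_assoc]

/-- The probability vector as a measure on the alphabet. -/
noncomputable def pm : Measure (Fin Q.n) := ∑ i, Q.p i • Measure.dirac i

lemma pm_singleton (i : Fin Q.n) : Q.pm {i} = Q.p i := by
  simp [pm, Measure.coe_finsetSum, Set.indicator_apply]

instance : IsProbabilityMeasure Q.pm := ⟨by simp [pm, Measure.coe_finsetSum, Q.hp1]⟩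

/-- The Bernoulli measure on infinite words. -/
noncomputable def ℙ : Measure (ℕ → Fin Q.n) := Measure.infinitePi fun _ => Q.pm

instance : IsProbabilityMeasure Q.ℙ := by unfold ℙ; infer_instance

/-- The prefix of length `L` of an infinite word. -/
def J (L : ℕ) (ω : ℕ → Fin Q.n) : Q.Word := List.ofFn fun i : Fin L => ω i

@[simp] lemma length_J (L : ℕ) (ω : ℕ → Fin Q.n) : (Q.J L ω).length = L := by simp [J]

lemma J_add (s t : ℕ) (ω : ℕ → Fin Q.n) :
    Q.J (s + t) ω = Q.J s ω ++ Q.J t (fun k => ω (s + k)) := by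
  simp [J, List.ofFn_add]

lemma J_mono {s t : ℕ} (h : s ≤ t) (ω : ℕ → Fin Q.n) : Q.J s ω = (Q.J t ω).take s := by
  obtain ⟨k, rfl⟩ := Nat.exists_eq_add_of_le h
  rw [J_add, List.take_left' (by simp)]

lemma measurable_J [MeasurableSpace Q.Word] (L : ℕ) : Measurable (Q.J L) := by
  have : Q.J L = (fun f : Fin L → Fin Q.n => List.ofFn f) ∘ fun ω i => ω i := rfl
  rw [this]
  exact (measurable_of_countable _).comp (measurable_pi_lambda _ fun i => measurable_pi_apply _)

lemma lintegral_J (L : ℕ) (φ : Q.Word → ℝ≥0∞) :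
    ∫⁻ ω, φ (Q.J L ω) ∂Q.ℙ = Q.wsum L φ := by
  classical
  have hm : Measurable (fun (ω : ℕ → Fin Q.n) (i : Fin L) => ω i) :=
    measurable_pi_lambda _ fun i => measurable_pi_apply _
  have h1 : ∫⁻ ω, φ (Q.J L ω) ∂Q.ℙ
      = ∫⁻ f, φ (List.ofFn f) ∂(Q.ℙ.map fun (ω : ℕ → Fin Q.n) (i : Fin L) => ω i) := by
    rw [lintegral_map (measurable_of_countable _) hm]; rfl
  rw [h1, lintegral_fintype, wsum_eq_sum]
  refine Finset.sum_congr rfl fun f _ => ?_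
  rw [mul_comm, Measure.map_apply hm (measurableSet_singleton _)]
  congr 1
  have h2 : (fun (ω : ℕ → Fin Q.n) (i : Fin L) => ω i) ⁻¹' {f} =
      Set.pi (Finset.range L : Set ℕ) fun k => if h : k < L then {f ⟨k, h⟩} else univ := by
    ext ω
    simp only [mem_preimage, mem_singleton_iff, funext_iff, Set.mem_pi, Finset.coe_range, mem_Iio]
    constructor
    · intro h k hk
      simp [hk, ← h ⟨k, hk⟩]
    · intro h k
      have := h k k.2
      simpa using this
  rw [h2, ℙ, Measure.infinitePi_pi _ (fun k _ => MeasurableSet.of_discrete),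
    ← Fin.prod_univ_eq_prod_range (fun k => Q.pm (if h : k < L then {f ⟨k, h⟩} else univ))]
  refine Finset.prod_congr rfl fun k _ => ?_
  simp [Q.pm_singleton]

lemma ℙ_J (L : ℕ) (S : Set Q.Word) :
    Q.ℙ (Q.J L ⁻¹' S) = Q.wsum L (S.indicator 1) := by
  let _ : MeasurableSpace Q.Word := ⊤
  rw [← lintegral_J, ← lintegral_indicator_one ((Q.measurable_J L) trivial)]
  rfl

end QSS

/-- Egorov-type uniformization of an almost sure eventual property. -/
lemma exists_uniform {Ω : Type*} [MeasurableSpace Ω] (P : Measure Ω) [IsProbabilityMeasure P]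
    {p : ℕ → Set Ω} (hp : ∀ k, MeasurableSet (p k)) (h : ∀ᵐ ω ∂P, ∀ᶠ k in atTop, ω ∈ p k)
    {δ : ℝ≥0∞} (hδ : 0 < δ) :
    ∃ N : ℕ, P {ω | ∀ k ≥ N, ω ∈ p k}ᶜ ≤ δ := by
  have hm : ∀ N, MeasurableSet ({ω | ∀ k ≥ N, ω ∈ p k}ᶜ) := fun N => by
    have : {ω | ∀ k ≥ N, ω ∈ p k} = ⋂ k, ⋂ (_ : k ≥ N), p k := by ext; simp
    rw [this]
    exact (MeasurableSet.iInter fun k => MeasurableSet.iInter fun _ => hp k).compl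
  have hanti : Antitone fun N => ({ω | ∀ k ≥ N, ω ∈ p k}ᶜ : Set Ω) := by
    intro a b hab
    refine compl_subset_compl.2 fun ω hω k hk => hω k (le_trans hab hk)
  have h0 : P (⋂ N, ({ω | ∀ k ≥ N, ω ∈ p k}ᶜ : Set Ω)) = 0 := by
    refine measure_mono_null ?_ h
    intro ω hω hev
    obtain ⟨N, hN⟩ := eventually_atTop.1 hev
    exact mem_iInter.1 hω N hN
  have := tendsto_measure_iInter_atTop (μ := P) (fun N => (hm N).nullMeasurableSet) hanti
    ⟨0, measure_ne_top _ _⟩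
  rw [h0] at this
  obtain ⟨N, hN⟩ := (this.eventually (gt_mem_nhds hδ)).exists
  exact ⟨N, hN.le⟩

namespace QSS
variable {d : ℕ} (Q : QSS d)

/-! ### Parsing words into good blocks -/

section parse
variable (G : Q.Word → Prop) (M : ℕ)

/-- Some prefix of `v` is good. -/
def HasGood (v : Q.Word) : Prop := ∃ u, G u ∧ u <+: v

/-- `Parse G M b w`: the word `w` is a concatenation of good words and of `b` (at most) single
letters, followed by a remainder shorter than `M`. -/
inductive Parse : ℕ → Q.Word → Prop
  | short (b : ℕ) (w : Q.Word) : w.length < M → Parse b w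
  | good (b : ℕ) (u v : Q.Word) : G u → Parse b v → Parse b (u ++ v)
  | bad (b : ℕ) (i : Fin Q.n) (v : Q.Word) : Parse b v → Parse (b + 1) (i :: v)

variable {G M} in
lemma Parse.mono {b b' : ℕ} {w : Q.Word} (h : Q.Parse G M b w) (hb : b ≤ b') :
    Q.Parse G M b' w := by
  induction h generalizing b' with
  | short b w h => exact .short _ _ h
  | good b u v hu _ ih => exact .good _ _ _ hu (ih hb)
  | bad b i v _ ih =>
    obtain ⟨k, rfl⟩ : ∃ k, b' = k + 1 := ⟨b' - 1, by omega⟩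
    exact .bad _ _ _ (ih (by omega))

open Classical in
/-- The number of long suffixes of a word which have no good prefix. -/
noncomputable def nbad : Q.Word → ℕ
  | [] => 0
  | i :: v => nbad v + if M ≤ (i :: v).length ∧ ¬ Q.HasGood G (i :: v) then 1 else 0

lemma nbad_append (u v : Q.Word) : Q.nbad G M v ≤ Q.nbad G M (u ++ v) := by
  induction u with
  | nil => rfl
  | cons i u ih => exact ih.trans (Nat.le_add_right _ _)

lemma parse_nbad (hG : ∀ u, G u → u ≠ []) (hM : 1 ≤ M) (w : Q.Word) :
    Q.Parse G M (Q.nbad G M w) w := by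
  induction hn : w.length using Nat.strong_induction_on generalizing w with
  | _ n ih =>
    by_cases h1 : w.length < M
    · exact .short _ _ h1
    by_cases h2 : Q.HasGood G w
    · obtain ⟨u, hu, v, rfl⟩ := h2
      have hu0 : 0 < u.length := List.length_pos_iff.2 (hG u hu)
      have := ih v.length (by rw [← hn, List.length_append]; omega) v rfl
      exact .good _ _ _ hu (this.mono Q (Q.nbad_append G M u v))
    · cases w with
      | nil => simp at h1; omega
      | cons i v =>
        have := ih v.length (by rw [← hn, List.length_cons]; omega) v rfl
        rw [nbad, if_pos ⟨not_lt.1 h1, h2⟩]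
        exact .bad _ _ _ this

open Classical in
lemma nbad_eq_sum (w : Q.Word) : Q.nbad G M w = ∑ t ∈ Finset.range w.length,
    if M ≤ (w.drop t).length ∧ ¬ Q.HasGood G (w.drop t) then 1 else 0 := by
  induction w with
  | nil => simp [nbad]
  | cons i v ih =>
    rw [List.length_cons, Finset.sum_range_succ', nbad, ih]
    simp

/-- The times at which the next `M` letters have no good prefix. -/
def badTimes (ω : ℕ → Fin Q.n) : Set ℕ := {t | ¬ Q.HasGood G ((Q.J (t + M) ω).drop t)}

open Classical in
lemma nbad_J_le (L : ℕ) (ω : ℕ → Fin Q.n) :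
    Q.nbad G M (Q.J L ω) ≤ ((Finset.range L).filter fun t => t ∈ Q.badTimes G M ω).card := by
  rw [nbad_eq_sum, Finset.card_filter, length_J]
  refine Finset.sum_le_sum fun t ht => ?_
  by_cases h : M ≤ ((Q.J L ω).drop t).length ∧ ¬ Q.HasGood G ((Q.J L ω).drop t)
  · have : t ∈ Q.badTimes G M ω := by
      intro ⟨u, hu, huv⟩
      refine h.2 ⟨u, hu, huv.trans ?_⟩
      have hlen : t + M ≤ L := by
        have := h.1
        simp only [List.length_drop, length_J] at this
        simp only [Finset.mem_range] at ht
        omega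
      rw [Q.J_mono hlen, List.drop_take]
      exact ⟨_, List.take_append_drop _ _⟩
    rw [if_pos h, if_pos this]
  · rw [if_neg h]; exact Nat.zero_le _

lemma measurableSet_J (L : ℕ) (S : Set Q.Word) : MeasurableSet (Q.J L ⁻¹' S) := by
  let _ : MeasurableSpace Q.Word := ⊤
  exact (Q.measurable_J L) trivial

open Classical in
lemma cellAvg_bad {δ : ℝ} (hδ0 : 0 ≤ δ)
    (hδ : Q.wsum M ({v | ¬ Q.HasGood G v}.indicator 1) ≤ ENNReal.ofReal δ) (t : ℕ) (u : Q.Word) :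
    cellAvg Q.ℙ (Q.J t) {ω | t ∈ Q.badTimes G M ω} u ≤ δ := by
  have hset : {ω | t ∈ Q.badTimes G M ω} ∩ Q.J t ⁻¹' {u} =
      Q.J (t + M) ⁻¹' {w | w.take t = u ∧ ¬ Q.HasGood G (w.drop t)} := by
    ext ω
    simp only [badTimes, mem_inter_iff, mem_preimage, mem_singleton_iff,
      Q.J_mono (Nat.le_add_right t M) ω]
    exact and_comm
  have h1 : Q.ℙ ({ω | t ∈ Q.badTimes G M ω} ∩ Q.J t ⁻¹' {u}) ≤
      ENNReal.ofReal δ * Q.ℙ (Q.J t ⁻¹' {u}) := by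
    rw [hset, ℙ_J, ℙ_J, wsum_split, ← wsum_mul]
    refine Q.wsum_mono fun v hv => ?_
    by_cases hvu : v = u
    · subst hvu
      rw [indicator_of_mem (mem_singleton v), Pi.one_apply, mul_one]
      refine le_trans (le_of_eq (Q.wsum_congr fun v' _ => ?_)) hδ
      simp only [indicator_apply, mem_ofPred_eq, List.take_left' hv, List.drop_left' hv, true_and,
        Pi.one_apply]
    · refine le_trans (le_of_eq ?_) zero_le
      rw [← Q.wsum_const M 0]
      refine Q.wsum_congr fun v' _ => ?_
      simp only [indicator_apply, mem_ofPred_eq, List.take_left' hv, hvu, false_and, if_false]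
  unfold cellAvg
  refine div_le_of_le_mul₀ measureReal_nonneg hδ0 ?_
  have := ENNReal.toReal_mono (ENNReal.mul_ne_top ENNReal.ofReal_ne_top (measure_ne_top _ _)) h1
  rwa [ENNReal.toReal_mul, ENNReal.toReal_ofReal hδ0] at this

lemma freq_bad {δ ε : ℝ} (hδ0 : 0 ≤ δ) (hε : 0 < ε)
    (hδ : Q.wsum M ({v | ¬ Q.HasGood G v}.indicator 1) ≤ ENNReal.ofReal δ) :
    ∀ᵐ ω ∂Q.ℙ, FreqLE (Q.badTimes G M ω) (δ + ε) := by
  have := lln_sets Q.ℙ Q.J (fun t j => Q.measurableSet_J t {j})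
    (fun s t hst => ⟨fun w => w.take s, fun ω => Q.J_mono hst ω⟩) M
    (fun t => {ω | t ∈ Q.badTimes G M ω}) (fun t => {w | ¬ Q.HasGood G (w.drop t)})
    (fun t => rfl)
  filter_upwards [this] with ω hω
  have h := freq_of_cellAvg (c := fun t ω => cellAvg Q.ℙ (Q.J t) {ω | t ∈ Q.badTimes G M ω} (Q.J t ω))
    hω (fun t => cellAvg_le_one _ _ _ _) (q := 0) hδ0 hε ?_
  · refine h.mono (fun t ht => ht) (by linarith)
  · have : {t | δ < cellAvg Q.ℙ (Q.J t) {ω | t ∈ Q.badTimes G M ω} (Q.J t ω)} = ∅ := by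
      ext t
      simpa using Q.cellAvg_bad G M hδ0 hδ t (Q.J t ω)
    rw [this]
    exact Eventually.of_forall fun T => by simp

/-- Uniformly in the length, most infinite words have few bad times. -/
lemma exists_few_bad {δ ε : ℝ} (hδ0 : 0 ≤ δ) (hε : 0 < ε)
    (hδ : Q.wsum M ({v | ¬ Q.HasGood G v}.indicator 1) ≤ ENNReal.ofReal δ)
    {η : ℝ≥0∞} (hη : 0 < η) :
    ∃ L₀ : ℕ, Q.ℙ {ω | ∀ L ≥ L₀, (Q.nbad G M (Q.J L ω) : ℝ) ≤ (δ + ε) * L}ᶜ ≤ η := by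
  refine exists_uniform Q.ℙ (p := fun L => {ω | (Q.nbad G M (Q.J L ω) : ℝ) ≤ (δ + ε) * L})
    (fun L => Q.measurableSet_J L {w | (Q.nbad G M w : ℝ) ≤ (δ + ε) * L}) ?_ hη
  filter_upwards [Q.freq_bad G M hδ0 hε hδ] with ω hω
  filter_upwards [hω] with L hL
  refine le_trans ?_ hL
  exact_mod_cast Q.nbad_J_le G M L ω

end parse
end QSS
namespace QSS
variable {d : ℕ} (Q : QSS d)

/-! ### Mass of the parsed words near a point -/

lemma pow_le_r (w : Q.Word) : (Q.κ / Q.C) ^ w.length ≤ Q.r w := by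
  induction w with
  | nil => simp
  | cons i v ih =>
    have h1 := Q.le_r_append [i] v
    have h2 := Q.κ_le i
    rw [List.length_cons, pow_succ, ← mul_div_assoc, div_le_iff₀ Q.C_pos, mul_comm _ Q.C]
    refine le_trans ?_ h1
    rw [mul_comm]
    exact mul_le_mul h2 ih (by have := Q.κ_pos; have := Q.C_pos; positivity) (Q.r_pos _).le

lemma dist_le_of_gw (u : Q.Word) {x z y : Euc d} {ρ : ℝ} (hx : x ∈ Q.K) (hz : z ∈ Q.K)
    (h1 : Q.gw u x ∈ closedBall y ρ) (h2 : Q.gw u z ∈ closedBall y ρ) :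
    x ∈ closedBall z (2 * Q.C * ρ / Q.r u) := by
  rw [mem_closedBall] at h1 h2 ⊢
  have h3 := Q.le_dist u hx hz
  have h4 := dist_triangle_right (Q.gw u x) (Q.gw u z) y
  rw [le_div_iff₀ (Q.r_pos u), mul_comm]
  refine h3.trans ?_
  have := mul_le_mul_of_nonneg_left (h4.trans (add_le_add h1 h2)) Q.C_pos.le
  linarith

section T
variable (G : Q.Word → Prop) (M : ℕ)

/-- Continuations `v` of `u` with at most `b` single letters such that the piece of `u ++ v` is
small and close to `y`. -/
def near (u : Q.Word) (b : ℕ) (y : Euc d) (ρ : ℝ) : Set Q.Word :=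
  {v | Q.Parse G M b v ∧ Q.r (u ++ v) ≤ ρ ∧ Q.gw (u ++ v) Q.a ∈ closedBall y ρ}

/-- The weight of the words of length `L` parsed with at most `b` single letters, whose
pieces are small and close to `y`. -/
noncomputable def T (L b : ℕ) (y : Euc d) (ρ : ℝ) : ℝ≥0∞ :=
  Q.wsum L ((Q.near G M [] b y ρ).indicator 1)

lemma near_eq_empty {u : Q.Word} {b : ℕ} {y : Euc d} {ρ : ℝ}
    (h : ¬ ∃ z ∈ Q.K, Q.gw u z ∈ closedBall y ρ) : Q.near G M u b y ρ = ∅ := by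
  refine eq_empty_of_forall_notMem fun v hv => h ⟨Q.gw v Q.a, Q.gw_mem v Q.ha, ?_⟩
  rw [← gw_append]; exact hv.2.2

lemma wsum_indicator_empty (L : ℕ) : Q.wsum L ((∅ : Set Q.Word).indicator 1) = 0 := by
  simp only [indicator_empty]
  exact Q.wsum_const L 0

lemma wsum_near_le (u : Q.Word) (L b : ℕ) (y : Euc d) {ρ : ℝ} (hρ : 0 < ρ) {X : ℝ≥0∞}
    (hX : ∀ z, Q.T G M L b z (2 * Q.C * ρ / Q.r u) ≤ X) :
    Q.wsum L ((Q.near G M u b y ρ).indicator 1) ≤ X := by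
  by_cases h : ∃ z ∈ Q.K, Q.gw u z ∈ closedBall y ρ
  · obtain ⟨z, hz, hzy⟩ := h
    refine le_trans (Q.wsum_mono fun v _ => ?_) (hX z)
    refine indicator_le_indicator_of_subset ?_ (fun _ => zero_le) v
    rintro v ⟨h1, h2, h3⟩
    refine ⟨h1, ?_, ?_⟩
    · rw [List.nil_append, le_div_iff₀ (Q.r_pos u), mul_comm]
      refine (Q.le_r_append u v).trans ?_
      have := mul_le_mul_of_nonneg_left h2 Q.C_pos.le
      have := mul_pos Q.C_pos hρ
      linarith
    · rw [gw_append] at h3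
      exact Q.dist_le_of_gw u (Q.gw_mem v Q.ha) hz h3 hzy
  · rw [Q.near_eq_empty G M h, wsum_indicator_empty]; exact zero_le

end T

/-- The good words of a family of sections: those whose piece lies in a light ball. -/
def Good (W : ℕ → List Q.Word) (β : ℝ) (n : ℕ) (u : Q.Word) : Prop :=
  Q.μ (closedBall (Q.gw u Q.a) (6 * Q.C * 2 ^ (-(n : ℝ)))) ≤ ENNReal.ofReal (2 ^ (-(n * β : ℝ)))
    ∧ u ∈ W n

/-- Good words of some generation between `N₁` and `N₂`. -/
def GoodIn (W : ℕ → List Q.Word) (β : ℝ) (N₁ N₂ : ℕ) (u : Q.Word) : Prop :=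
  ∃ n ∈ Finset.Icc N₁ N₂, Q.Good W β n u

section main
variable {W : ℕ → List Q.Word}
  (hW : ∀ n, ∀ u ∈ W n, Q.C⁻¹ * Q.κ * 2 ^ (-(n : ℝ)) ≤ Q.r u ∧ Q.r u ≤ 2 ^ (-(n : ℝ)))
  (hWμ : ∀ n, ∀ A : Set (Euc d), MeasurableSet A →
    Q.μ A = ((W n).map fun u => Q.pw u * Q.μ (Q.gw u ⁻¹' A)).sum)
include hW

/-- All good pieces of one generation meeting a small ball lie in a single light set. -/
lemma exists_light {β : ℝ} {n : ℕ} {y : Euc d} {ρ : ℝ} (hρ : ρ ≤ 2 ^ (-(n : ℝ))) :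
    ∃ B : Set (Euc d), MeasurableSet B ∧ Q.μ B ≤ ENNReal.ofReal (2 ^ (-(n * β : ℝ))) ∧
      ∀ u, Q.Good W β n u → (∃ z ∈ Q.K, Q.gw u z ∈ closedBall y ρ) → Q.μ (Q.gw u ⁻¹' B) = 1 := by
  by_cases h : ∃ u, Q.Good W β n u ∧ ∃ z ∈ Q.K, Q.gw u z ∈ closedBall y ρ
  · obtain ⟨u₀, h0, z₀, hz₀, hzy₀⟩ := h
    refine ⟨closedBall (Q.gw u₀ Q.a) (6 * Q.C * 2 ^ (-(n : ℝ))), isClosed_closedBall.measurableSet,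
      h0.1, ?_⟩
    rintro u hu ⟨z, hz, hzy⟩
    refine (prob_compl_eq_zero_iff ((Q.gw_meas u) isClosed_closedBall.measurableSet)).1 ?_
    refine measure_mono_null (t := Q.Kᶜ) (fun x hx (hxK : x ∈ Q.K) => hx ?_) Q.hμK
    rw [mem_preimage, mem_closedBall]
    rw [mem_closedBall] at hzy hzy₀
    have d1 := Q.dist_gw_le u hxK hz
    have d2 := Q.dist_gw_le u₀ hz₀ Q.ha
    have r1 := mul_le_mul_of_nonneg_left (hW n u hu.2).2 Q.C_pos.le
    have r2 := mul_le_mul_of_nonneg_left (hW n u₀ h0.2).2 Q.C_pos.le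
    have r3 : (2 : ℝ) ^ (-(n : ℝ)) ≤ Q.C * 2 ^ (-(n : ℝ)) := by
      have : (0 : ℝ) < 2 ^ (-(n : ℝ)) := by positivity
      nlinarith [Q.hC]
    have t1 := dist_triangle4 (Q.gw u x) (Q.gw u z) (Q.gw u₀ z₀) (Q.gw u₀ Q.a)
    have t2 := dist_triangle_right (Q.gw u z) (Q.gw u₀ z₀) y
    linarith
  · push Not at h
    refine ⟨∅, MeasurableSet.empty, by simp, fun u hu ⟨z, hz, hzy⟩ => absurd hzy (h u hu z hz)⟩

include hWμ

open Classical in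
/-- Induction on the number of letters, splitting off the first block. The good blocks of generation
`n` near a ball carry mass at most `2 ^ (-n β)` in total while their rescaling costs `2 ^ (n s)`, so
by `hsum` they contribute at most half of the bound; a single letter costs a factor at most `A`. -/
lemma T_le {s β : ℝ} (hs : 0 < s) {N₁ N₂ M : ℕ} (hN₁ : 1 ≤ N₁)
    (hsum : (2 * Q.C ^ 2 / Q.κ) ^ s * ∑ n ∈ Finset.Icc N₁ N₂, (2 : ℝ) ^ (-(n * (β - s) : ℝ)) ≤ 1 / 2)
    {r₀ : ℝ} (hr₀ : 0 < r₀) (hr₁ : r₀ ≤ (Q.κ / Q.C) ^ M) (hr₂ : r₀ ≤ 2 ^ (-(N₂ : ℝ)))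
    {A : ℝ} (hA1 : 1 ≤ A) (hA : 2 * (2 * Q.C / Q.κ) ^ s ≤ A)
    (L b : ℕ) (y : Euc d) {ρ : ℝ} (hρ : 0 < ρ) :
    Q.T (Q.GoodIn W β N₁ N₂) M L b y ρ ≤ ENNReal.ofReal (A ^ b * (r₀ ^ (-s) * ρ ^ s)) := by
  set G := Q.GoodIn W β N₁ N₂ with hGdef
  have hκ := Q.κ_pos
  have hC := Q.C_pos
  have hne : ∀ n ∈ Finset.Icc N₁ N₂, ∀ u ∈ W n, u ≠ [] := by
    rintro n hn u hu rfl
    have h1 := (hW n [] hu).2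
    rw [r_nil] at h1
    have h2 : (2 : ℝ) ^ (-(n : ℝ)) < 1 := by
      apply Real.rpow_lt_one_of_one_lt_of_neg (by norm_num)
      have : 1 ≤ n := hN₁.trans (Finset.mem_Icc.1 hn).1
      have : (1 : ℝ) ≤ n := by exact_mod_cast this
      linarith
    linarith
  induction L using Nat.strong_induction_on generalizing b y ρ with
  | _ L ih =>
  have hc : 0 < r₀ ^ (-s) := Real.rpow_pos_of_pos hr₀ _
  rcases le_or_gt r₀ ρ with hlarge | hsmall
  · -- at large scales the total weight `1` is a sufficient bound
    refine (Q.wsum_mono (ψ := fun _ => 1) fun w _ => indicator_le_self _ _ w).trans ?_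
    rw [wsum_const, ← ENNReal.ofReal_one]
    refine ENNReal.ofReal_le_ofReal ?_
    have h1 : 1 ≤ r₀ ^ (-s) * ρ ^ s := by
      rw [Real.rpow_neg hr₀.le, inv_mul_eq_div, one_le_div (Real.rpow_pos_of_pos hr₀ _)]
      exact Real.rpow_le_rpow hr₀.le hlarge hs.le
    exact one_le_mul_of_one_le_of_one_le (one_le_pow₀ hA1) h1
  set c : ℝ := A ^ b * (r₀ ^ (-s) * ρ ^ s) with hcdef
  have hc0 : 0 ≤ c := by positivity
  -- the three kinds of parsed words
  let bad : Set Q.Word := {w | ∃ b' i v, b = b' + 1 ∧ w = i :: v ∧ v ∈ Q.near G M [i] b' y ρ}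
  let tm : ℕ → Q.Word → Q.Word → ℝ≥0∞ := fun n u w =>
    if Q.Good W β n u then
      (if u <+: w then (Q.near G M u b y ρ).indicator 1 (w.drop u.length) else 0) else 0
  have split : ∀ w, (Q.near G M [] b y ρ).indicator 1 w ≤
      ∑ n ∈ Finset.Icc N₁ N₂, ((W n).map fun u => tm n u w).sum + bad.indicator 1 w := by
    intro w
    by_cases hw : w ∈ Q.near G M [] b y ρ
    swap
    · rw [indicator_of_notMem hw]; exact zero_le
    rw [indicator_of_mem hw]
    obtain ⟨hp, hr, hy⟩ := hw
    rw [List.nil_append] at hr hy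
    cases hp with
    | short _ _ hlen =>
      exfalso
      have h1 := Q.pow_le_r w
      have h2 : (Q.κ / Q.C) ^ M ≤ (Q.κ / Q.C) ^ w.length :=
        pow_le_pow_of_le_one (by positivity)
          ((div_le_one hC).2 (Q.κ_le_one.trans Q.hC)) hlen.le
      linarith
    | good _ u v hu hv =>
      obtain ⟨n, hn, hgood⟩ := hu
      refine le_trans ?_ le_self_add
      refine le_trans ?_ (Finset.single_le_sum
        (f := fun n => ((W n).map fun u' => tm n u' (u ++ v)).sum) (fun _ _ => zero_le) hn)
      refine le_trans ?_ (List.single_le_sum (fun _ _ => zero_le) _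
        (List.mem_map_of_mem (f := fun u' => tm n u' (u ++ v)) hgood.2))
      simp only [tm, if_pos hgood, List.prefix_append, if_true, List.drop_left]
      rw [indicator_of_mem (show v ∈ Q.near G M u b y ρ from ⟨hv, hr, hy⟩)]
      exact le_rfl
    | bad b' i v hv =>
      refine le_trans ?_ le_add_self
      rw [indicator_of_mem (show i :: v ∈ bad from ⟨b', i, v, rfl, rfl, hv, hr, hy⟩)]
  have hgoodsum : ∀ n ∈ Finset.Icc N₁ N₂, ((W n).map fun u => Q.wsum L (tm n u)).sum ≤
      ENNReal.ofReal (2 ^ (-(n * β : ℝ)) * (A ^ b * (r₀ ^ (-s) * (2 * Q.C ^ 2 / Q.κ * 2 ^ (n : ℝ) * ρ) ^ s))) := by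
    intro n hn
    have hρn : ρ ≤ 2 ^ (-(n : ℝ)) := by
      refine hsmall.le.trans (hr₂.trans ?_)
      refine Real.rpow_le_rpow_of_exponent_le (by norm_num) ?_
      have : (n : ℝ) ≤ N₂ := by exact_mod_cast (Finset.mem_Icc.1 hn).2
      linarith
    obtain ⟨B, hBm, hB, hBu⟩ := Q.exists_light hW (β := β) (y := y) hρn
    have hterm : ∀ u ∈ W n, Q.wsum L (tm n u) ≤ Q.pw u * Q.μ (Q.gw u ⁻¹' B) *
        ENNReal.ofReal (A ^ b * (r₀ ^ (-s) * (2 * Q.C ^ 2 / Q.κ * 2 ^ (n : ℝ) * ρ) ^ s)) := by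
      intro u hu
      by_cases hg : Q.Good W β n u
      swap
      · simp only [tm, if_neg hg, wsum_const]; exact zero_le
      simp only [tm, if_pos hg]
      rcases lt_or_ge L u.length with hL | hL
      · refine le_trans (Q.wsum_mono (ψ := fun _ => 0) fun w hw => ?_)
          ((Q.wsum_const L 0).le.trans zero_le)
        rw [if_neg fun hp => ?_]
        have := hp.length_le
        omega
      rw [Q.wsum_extend u hL]
      by_cases hz : ∃ z ∈ Q.K, Q.gw u z ∈ closedBall y ρ
      swap
      · rw [Q.near_eq_empty G M hz, wsum_indicator_empty, mul_zero]; exact zero_le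
      rw [hBu u hg hz, mul_one]
      gcongr
      refine Q.wsum_near_le G M u _ b y hρ fun z => ?_
      have hlen : L - u.length < L := by
        have : 0 < u.length := List.length_pos_iff.2 (hne n hn u hu)
        omega
      have hru := Q.r_pos u
      refine (ih _ hlen b z (by positivity)).trans (ENNReal.ofReal_le_ofReal ?_)
      gcongr
      rw [div_le_iff₀ hru]
      have h1 := (hW n u hu).1
      have h2 : (2 : ℝ) ^ (n : ℝ) * 2 ^ (-(n : ℝ)) = 1 := by
        rw [← Real.rpow_add (by norm_num)]; simp
      calc 2 * Q.C * ρ = 2 * Q.C ^ 2 / Q.κ * 2 ^ (n : ℝ) * ρ * (Q.C⁻¹ * Q.κ * 2 ^ (-(n : ℝ))) := by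
            have : 2 * Q.C ^ 2 / Q.κ * 2 ^ (n : ℝ) * ρ * (Q.C⁻¹ * Q.κ * 2 ^ (-(n : ℝ))) =
              2 * Q.C ^ 2 / Q.κ * ρ * Q.C⁻¹ * Q.κ * ((2 : ℝ) ^ (n : ℝ) * 2 ^ (-(n : ℝ))) := by ring
            rw [this, h2]; field_simp
        _ ≤ _ := by gcongr
    refine (List.sum_le_sum hterm).trans ?_
    rw [List.sum_map_mul_right, ← hWμ n B hBm, ENNReal.ofReal_mul (p := 2 ^ (-(n * β : ℝ))) (by positivity)]
    exact mul_le_mul_left hB _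
  have hbad : Q.wsum L (bad.indicator 1) ≤ ENNReal.ofReal (c / 2) := by
    rcases Nat.eq_zero_or_pos b with hb | hb
    · have : bad = ∅ := by
        refine eq_empty_of_forall_notMem fun w => ?_
        rintro ⟨b', _, _, hb', _⟩; omega
      rw [this, wsum_indicator_empty]; exact zero_le
    obtain ⟨b', rfl⟩ : ∃ b', b = b' + 1 := ⟨b - 1, by omega⟩
    cases L with
    | zero =>
      have : ([] : Q.Word) ∉ bad := by
        rintro ⟨_, _, _, _, h, _⟩; exact absurd h (by simp)
      rw [wsum, indicator_of_notMem this]; exact zero_le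
    | succ L =>
      have : ∀ i, Q.wsum L (fun v => bad.indicator 1 (i :: v)) ≤ ENNReal.ofReal (c / 2) := by
        intro i
        have h1 : Q.wsum L (fun v => bad.indicator 1 (i :: v)) ≤
            Q.wsum L ((Q.near G M [i] b' y ρ).indicator 1) := by
          refine Q.wsum_mono fun v _ => ?_
          by_cases hv : i :: v ∈ bad
          · obtain ⟨b'', i', v', hb'', he, hv'⟩ := hv
            obtain ⟨rfl, rfl⟩ := List.cons.inj he
            obtain rfl : b' = b'' := by omega
            rw [indicator_of_mem hv']
            exact indicator_le_self _ _ _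
          · rw [indicator_of_notMem hv]; exact zero_le
        refine h1.trans (Q.wsum_near_le G M [i] L b' y hρ fun z => ?_)
        have hri := Q.r_pos [i]
        refine (ih _ (Nat.lt_succ_self L) b' z (by positivity)).trans (ENNReal.ofReal_le_ofReal ?_)
        have h2 : (2 * Q.C * ρ / Q.r [i]) ^ s ≤ (2 * Q.C / Q.κ) ^ s * ρ ^ s := by
          rw [← Real.mul_rpow (by positivity) hρ.le]
          refine Real.rpow_le_rpow (by positivity) ?_ hs.le
          rw [div_mul_eq_mul_div]
          have := Q.κ_le i
          gcongr
        have h3 : (2 * Q.C / Q.κ) ^ s * ρ ^ s ≤ A / 2 * ρ ^ s := by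
          have : 0 < ρ ^ s := Real.rpow_pos_of_pos hρ _
          gcongr; linarith
        calc A ^ b' * (r₀ ^ (-s) * (2 * Q.C * ρ / Q.r [i]) ^ s)
            ≤ A ^ b' * (r₀ ^ (-s) * (A / 2 * ρ ^ s)) := by gcongr; exact h2.trans h3
          _ = c / 2 := by rw [hcdef, pow_succ]; ring
      calc Q.wsum (L + 1) (bad.indicator 1) = ∑ i, Q.p i * Q.wsum L (fun v => bad.indicator 1 (i :: v)) := rfl
        _ ≤ ∑ i, Q.p i * ENNReal.ofReal (c / 2) := by gcongr with i _; exact this i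
        _ = ENNReal.ofReal (c / 2) := by rw [← Finset.sum_mul, Q.hp1, one_mul]
  calc Q.T G M L b y ρ ≤ Q.wsum L (fun w => ∑ n ∈ Finset.Icc N₁ N₂, ((W n).map fun u => tm n u w).sum + bad.indicator 1 w) :=
        Q.wsum_mono fun w _ => split w
    _ = ∑ n ∈ Finset.Icc N₁ N₂, ((W n).map fun u => Q.wsum L (tm n u)).sum + Q.wsum L (bad.indicator 1) := by
        rw [wsum_add, wsum_finset_sum]
        simp only [wsum_list_sum]
    _ ≤ ENNReal.ofReal (c / 2) + ENNReal.ofReal (c / 2) := by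
        gcongr
        refine (Finset.sum_le_sum hgoodsum).trans ?_
        rw [← ENNReal.ofReal_sum_of_nonneg (fun _ _ => by positivity)]
        refine ENNReal.ofReal_le_ofReal ?_
        have : ∀ n ∈ Finset.Icc N₁ N₂, (2 : ℝ) ^ (-(n * β : ℝ)) * (A ^ b * (r₀ ^ (-s) * (2 * Q.C ^ 2 / Q.κ * 2 ^ (n : ℝ) * ρ) ^ s))
            = c * ((2 * Q.C ^ 2 / Q.κ) ^ s * 2 ^ (-(n * (β - s) : ℝ))) := by
          intro n _
          rw [Real.mul_rpow (by positivity) hρ.le, Real.mul_rpow (by positivity) (by positivity),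
            ← Real.rpow_mul (by norm_num), show (-(n * (β - s)) : ℝ) = -(n * β) + n * s by ring,
            Real.rpow_add (by norm_num)]
          ring
        rw [Finset.sum_congr rfl this, ← Finset.mul_sum, ← Finset.mul_sum]
        nlinarith
    _ = ENNReal.ofReal c := by
        rw [← ENNReal.ofReal_add (by positivity) (by positivity)]; congr 1; ring

end main
end QSS
namespace QSS
variable {d : ℕ} (Q : QSS d)

/-! ### Frequent light balls force large dimension -/

/-- A word of length `M` with no good prefix has its whole piece in the set of points without light
ball, so such words have small total weight. -/
lemma wsum_noGood_le {W : ℕ → List Q.Word} {Mn : ℕ → ℕ}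
    (hW : ∀ n, ∀ u ∈ W n, Q.r u ≤ 2 ^ (-(n : ℝ)))
    (hpre : ∀ n, ∀ w : Q.Word, Mn n ≤ w.length → ∃ u ∈ W n, u <+: w)
    {β : ℝ} {N₁ N₂ M : ℕ} (hM : ∀ n ∈ Finset.Icc N₁ N₂, Mn n ≤ M) {δ : ℝ≥0∞}
    (hδ : Q.μ {x | ∃ n ∈ Finset.Icc N₁ N₂, Q.μ (closedBall x (8 * Q.C * 2 ^ (-(n : ℝ)))) ≤
      ENNReal.ofReal (2 ^ (-(n * β : ℝ)))}ᶜ ≤ δ) :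
    Q.wsum M ({v | ¬ Q.HasGood (Q.GoodIn W β N₁ N₂) v}.indicator 1) ≤ δ := by
  set H := {x | ∃ n ∈ Finset.Icc N₁ N₂, Q.μ (closedBall x (8 * Q.C * 2 ^ (-(n : ℝ)))) ≤
      ENNReal.ofReal (2 ^ (-(n * β : ℝ)))} with hH
  have hHm : MeasurableSet H := by
    have : H = ⋃ n ∈ Finset.Icc N₁ N₂, {x | Q.μ (closedBall x (8 * Q.C * 2 ^ (-(n : ℝ)))) ≤
      ENNReal.ofReal (2 ^ (-(n * β : ℝ)))} := by ext; simp [hH]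
    rw [this]
    exact Finset.measurableSet_biUnion _ fun n _ =>
      measurableSet_le (measurable_measure_closedBall Q.μ _) measurable_const
  refine le_trans ?_ hδ
  rw [Q.wsum_measure M hHm.compl]
  refine Q.wsum_mono fun w hw => ?_
  by_cases hg : Q.HasGood (Q.GoodIn W β N₁ N₂) w
  · rw [indicator_of_notMem (by simpa using hg)]; exact zero_le
  rw [indicator_of_mem (by simpa using hg), Pi.one_apply]
  refine ((prob_compl_eq_zero_iff ((Q.gw_meas w) hHm.compl)).1 ?_).ge
  refine measure_mono_null (t := Q.Kᶜ) (fun x hx (hxK : x ∈ Q.K) => hg ?_) Q.hμK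
  obtain ⟨n, hn, hlight⟩ : Q.gw w x ∈ H := by simpa using hx
  obtain ⟨u, hu, v, rfl⟩ := hpre n w (hw ▸ hM n hn)
  refine ⟨u, ⟨n, hn, le_trans (measure_mono ?_) hlight, hu⟩, List.prefix_append _ _⟩
  refine closedBall_subset_closedBall' ?_
  rw [gw_append]
  have h1 := Q.dist_gw_le u Q.ha (Q.gw_mem v hxK)
  have h2 := mul_le_mul_of_nonneg_left (hW n u hu) Q.C_pos.le
  linarith

open Classical in
/-- If almost every point is infinitely often the centre of a ball `B(x, c 2 ^ (-n))` of mass at most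
`2 ^ (-n β)`, then `dim μ ≥ s` for all `s < β`. Frequent lightness thus upgrades to a Frostman bound
at all scales. -/
theorem le_mdim_of_light {s β : ℝ} (hs : 0 < s) (hsβ : s < β)
    (h : ∀ᵐ x ∂Q.μ, ∃ᶠ n : ℕ in atTop,
      Q.μ (closedBall x (8 * Q.C * 2 ^ (-(n : ℝ)))) ≤ ENNReal.ofReal (2 ^ (-(n * β : ℝ)))) :
    ENNReal.ofReal s ≤ mdim Q.μ := by
  have hκ := Q.κ_pos
  have hC := Q.C_pos
  have hθ0 := Q.hθ0
  have hθ1 := Q.hθ1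
  obtain ⟨ε, hε, s₁, hs₁, hβ⟩ : ∃ ε : ℝ, 0 < ε ∧ ∃ s₁, s₁ = s + ε ∧ β = s₁ + ε :=
    ⟨(β - s) / 2, by linarith, s + (β - s) / 2, rfl, by ring⟩
  have hs₁0 : 0 < s₁ := by linarith
  set A : ℝ := max 1 (2 * (2 * Q.C / Q.κ) ^ s₁) with hAdef
  have hA1 : 1 ≤ A := le_max_left _ _
  -- the tolerated density of single letters
  obtain ⟨δ₀, hδ₀, hAδ⟩ : ∃ δ₀ : ℝ, 0 < δ₀ ∧ A ^ (δ₀ + δ₀) ≤ Q.θ ^ (-ε) := by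
    have h1 : Tendsto (fun x : ℝ => A ^ (x + x)) (𝓝[>] 0) (𝓝 (A ^ ((0 : ℝ) + 0))) := by
      refine Tendsto.mono_left ?_ nhdsWithin_le_nhds
      exact ((Real.continuous_const_rpow (by linarith : A ≠ 0)).comp
        (continuous_id.add continuous_id)).tendsto 0
    rw [add_zero, Real.rpow_zero] at h1
    have h2 : 1 < Q.θ ^ (-ε) := Real.one_lt_rpow_of_pos_of_lt_one_of_neg hθ0 hθ1 (by linarith)
    obtain ⟨x, hx1, hx2⟩ := ((h1.eventually (gt_mem_nhds h2)).and self_mem_nhdsWithin).exists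
    exact ⟨x, hx2, hx1.le⟩
  -- the first generation of good words
  obtain ⟨N₁, hN₁, hsum⟩ : ∃ N₁ : ℕ, 1 ≤ N₁ ∧ ∀ N₂ : ℕ, (2 * Q.C ^ 2 / Q.κ) ^ s₁ *
      ∑ n ∈ Finset.Icc N₁ N₂, (2 : ℝ) ^ (-(n * (β - s₁) : ℝ)) ≤ 1 / 2 := by
    have hsm : Summable fun n : ℕ => (2 : ℝ) ^ (-(n * (β - s₁) : ℝ)) := by
      have : (fun n : ℕ => (2 : ℝ) ^ (-(n * (β - s₁) : ℝ))) = fun n : ℕ => ((2 : ℝ) ^ (-ε)) ^ n := by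
        funext n
        rw [← Real.rpow_natCast, ← Real.rpow_mul (by norm_num)]
        congr 1; rw [hβ]; ring
      rw [this]
      exact summable_geometric_of_lt_one (by positivity)
        (Real.rpow_lt_one_of_one_lt_of_neg (by norm_num) (by linarith))
    have hpos : 0 < (2 * Q.C ^ 2 / Q.κ) ^ s₁ := by positivity
    obtain ⟨S, hS⟩ := summable_iff_vanishing_norm.1 hsm (1 / 2 / (2 * Q.C ^ 2 / Q.κ) ^ s₁)
      (by positivity)
    refine ⟨S.sup id + 1, by omega, fun N₂ => ?_⟩
    have := hS (Finset.Icc (S.sup id + 1) N₂) (by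
      rw [Finset.disjoint_left]
      intro n hn hnS
      have h1 : n ≤ S.sup id := Finset.le_sup (f := id) hnS
      have := (Finset.mem_Icc.1 hn).1
      omega)
    rw [lt_div_iff₀ hpos, mul_comm] at this
    refine le_trans ?_ this.le
    gcongr
    exact Real.le_norm_self _
  choose W Mn hW hWμ hpre using fun n : ℕ => Q.exists_section (R := 2 ^ (-(n : ℝ))) (by positivity)
    (Real.rpow_le_one_of_one_le_of_nonpos (by norm_num) (by simp))
  -- the last generation of good words
  obtain ⟨N₂, hN₂⟩ : ∃ N₂ : ℕ, Q.μ {x | ∃ n ∈ Finset.Icc N₁ N₂,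
      Q.μ (closedBall x (8 * Q.C * 2 ^ (-(n : ℝ)))) ≤ ENNReal.ofReal (2 ^ (-(n * β : ℝ)))}ᶜ ≤
        ENNReal.ofReal δ₀ := by
    obtain ⟨N, hN⟩ := exists_uniform Q.μ (p := fun k => {x | ∃ n ∈ Finset.Icc N₁ k,
      Q.μ (closedBall x (8 * Q.C * 2 ^ (-(n : ℝ)))) ≤ ENNReal.ofReal (2 ^ (-(n * β : ℝ)))}) (by
        intro k
        have : {x | ∃ n ∈ Finset.Icc N₁ k, Q.μ (closedBall x (8 * Q.C * 2 ^ (-(n : ℝ)))) ≤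
          ENNReal.ofReal (2 ^ (-(n * β : ℝ)))} = ⋃ n ∈ Finset.Icc N₁ k,
            {x | Q.μ (closedBall x (8 * Q.C * 2 ^ (-(n : ℝ)))) ≤
              ENNReal.ofReal (2 ^ (-(n * β : ℝ)))} := by ext; simp
        rw [this]
        exact Finset.measurableSet_biUnion _ fun n _ =>
          measurableSet_le (measurable_measure_closedBall Q.μ _) measurable_const) (by
        filter_upwards [h] with x hx
        obtain ⟨n, hn, hl⟩ := (frequently_atTop.1 hx) N₁
        filter_upwards [eventually_ge_atTop n] with k hk
        exact ⟨n, Finset.mem_Icc.2 ⟨hn, hk⟩, hl⟩) (ENNReal.ofReal_pos.2 hδ₀)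
    refine ⟨N, le_trans (measure_mono (compl_subset_compl.2 ?_)) hN⟩
    intro x hx
    exact hx N le_rfl
  set G := Q.GoodIn W β N₁ N₂ with hG
  set M := 1 + (Finset.Icc N₁ N₂).sup Mn with hMdef
  have hbad := Q.wsum_noGood_le (fun n u hu => (hW n u hu).2.1) hpre (M := M)
    (fun n hn => (Finset.le_sup (f := Mn) hn).trans (Nat.le_add_left _ _)) hN₂
  have hGne : ∀ u, G u → u ≠ [] := by
    rintro u ⟨n, hn, hgu⟩ rfl
    have h1 := (hW n [] hgu.2).2.1
    rw [r_nil] at h1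
    have h2 : (2 : ℝ) ^ (-(n : ℝ)) < 1 := by
      apply Real.rpow_lt_one_of_one_lt_of_neg (by norm_num)
      have : 1 ≤ n := hN₁.trans (Finset.mem_Icc.1 hn).1
      have : (1 : ℝ) ≤ n := by exact_mod_cast this
      linarith
    linarith
  set r₀ : ℝ := min ((Q.κ / Q.C) ^ M) (2 ^ (-(N₂ : ℝ)))
  have hr₀ : 0 < r₀ := by positivity
  have hT := fun L b y (ρ : ℝ) (hρ : 0 < ρ) => Q.T_le (fun n u hu => ⟨(hW n u hu).1, (hW n u hu).2.1⟩)
    hWμ (β := β) hs₁0 (M := M) hN₁ (hsum N₂) hr₀ (min_le_left _ _) (min_le_right _ _) hA1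
      (le_max_right _ _) L b y hρ
  refine le_mdim_of_contentLE fun δ hδ => ?_
  obtain ⟨L₀, hL₀⟩ := Q.exists_few_bad G M hδ₀.le hδ₀ hbad (ENNReal.ofReal_pos.2 hδ)
  set Ω₀ := {ω | ∀ L ≥ L₀, (Q.nbad G M (Q.J L ω) : ℝ) ≤ (δ₀ + δ₀) * L} with hΩ₀
  set c : ℝ := min 1 (dist Q.a Q.b / (2 * Q.C ^ 2)) with hcdef
  have hc0 : 0 < c := by have := Q.dab; positivity
  have hc1 : c ≤ 1 := min_le_left _ _
  set Ct : ℝ := max ((Q.θ ^ L₀) ^ (-s)) ((Q.θ * c) ^ (-ε) * (r₀ ^ (-s₁) * 2 ^ s₁)) with hCt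
  -- estimate for a single ball
  have hball : ∀ (y : Euc d) (ρ : ℝ), 0 < ρ → ∃ L : ℕ,
      Q.ℙ (Ω₀ ∩ {ω | ∃ z ∈ Q.K, Q.gw (Q.J L ω) z ∈ ball y ρ}) ≤ ENNReal.ofReal (Ct * ρ ^ s) := by
    intro y ρ hρ
    rcases le_or_gt (Q.θ ^ L₀) ρ with hlarge | hsmall
    · refine ⟨0, prob_le_one.trans ?_⟩
      rw [← ENNReal.ofReal_one]
      refine ENNReal.ofReal_le_ofReal ?_
      have hθL : 0 < Q.θ ^ L₀ := by positivity
      have h1 : 1 ≤ (Q.θ ^ L₀) ^ (-s) * ρ ^ s := by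
        rw [Real.rpow_neg hθL.le, inv_mul_eq_div, one_le_div (Real.rpow_pos_of_pos hθL _)]
        exact Real.rpow_le_rpow hθL.le hlarge hs.le
      refine h1.trans ?_
      gcongr
      exact le_max_left _ _
    have hρ1 : ρ ≤ 1 := hsmall.le.trans (pow_le_one₀ hθ0.le hθ1.le)
    obtain ⟨k, hk1, hk2⟩ := exists_nat_pow_near_of_lt_one (mul_pos hc0 hρ)
      (mul_le_one₀ hc1 hρ.le hρ1) hθ0 hθ1
    have hkL : L₀ ≤ k + 1 := by
      by_contra hlt
      push Not at hlt
      have h1 : Q.θ ^ L₀ ≤ Q.θ ^ (k + 1) := pow_le_pow_of_le_one hθ0.le hθ1.le hlt.le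
      nlinarith
    refine ⟨k + 1, ?_⟩
    set L := k + 1 with hL
    set b : ℕ := ⌊(δ₀ + δ₀) * L⌋₊ with hb
    have hsub : Ω₀ ∩ {ω | ∃ z ∈ Q.K, Q.gw (Q.J L ω) z ∈ ball y ρ} ⊆
        Q.J L ⁻¹' (Q.near G M [] b y (2 * ρ)) := by
      rintro ω ⟨hω, z, hz, hzy⟩
      have hrw : 2 * Q.C * Q.r (Q.J L ω) ≤ ρ := by
        have h1 := Q.r_le (Q.J L ω)
        rw [length_J] at h1
        have h2 : c * ρ ≤ dist Q.a Q.b / (2 * Q.C ^ 2) * ρ := by gcongr; exact min_le_right _ _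
        have hdab := Q.dab
        calc 2 * Q.C * Q.r (Q.J L ω) ≤ 2 * Q.C * (Q.C / dist Q.a Q.b * Q.θ ^ L) := by gcongr
          _ ≤ 2 * Q.C * (Q.C / dist Q.a Q.b * (dist Q.a Q.b / (2 * Q.C ^ 2) * ρ)) := by
              gcongr; exact hk1.le.trans h2
          _ = ρ := by field_simp
      refine ⟨?_, ?_, ?_⟩
      · refine (Q.parse_nbad G M hGne (by omega) _).mono Q (Nat.le_floor ?_)
        exact hω L hkL
      · rw [List.nil_append]
        have := Q.r_pos (Q.J L ω)
        nlinarith [Q.hC]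
      · rw [List.nil_append, mem_closedBall]
        have h1 := Q.dist_gw_le (Q.J L ω) Q.ha hz
        have h2 := mem_ball.1 hzy
        linarith [dist_triangle (Q.gw (Q.J L ω) Q.a) (Q.gw (Q.J L ω) z) y]
    refine (measure_mono hsub).trans ?_
    rw [ℙ_J]
    refine (hT L b y (2 * ρ) (by positivity)).trans (ENNReal.ofReal_le_ofReal ?_)
    have hAb : A ^ b ≤ (Q.θ * c * ρ) ^ (-ε) := by
      calc A ^ b = A ^ (b : ℝ) := (Real.rpow_natCast _ _).symm
        _ ≤ A ^ ((δ₀ + δ₀) * L) :=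
            Real.rpow_le_rpow_of_exponent_le hA1 (Nat.floor_le (by positivity))
        _ = (A ^ (δ₀ + δ₀)) ^ (L : ℝ) := Real.rpow_mul (by linarith) _ _
        _ ≤ (Q.θ ^ (-ε)) ^ (L : ℝ) := Real.rpow_le_rpow (by positivity) hAδ (by positivity)
        _ = (Q.θ ^ L) ^ (-ε) := by
            rw [← Real.rpow_natCast, ← Real.rpow_mul hθ0.le, ← Real.rpow_mul hθ0.le, mul_comm]
        _ ≤ (Q.θ * c * ρ) ^ (-ε) := by
            refine Real.rpow_le_rpow_of_nonpos (by positivity) ?_ (by linarith)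
            rw [hL, pow_succ, mul_assoc, mul_comm]
            gcongr
    calc A ^ b * (r₀ ^ (-s₁) * (2 * ρ) ^ s₁)
        ≤ (Q.θ * c * ρ) ^ (-ε) * (r₀ ^ (-s₁) * (2 * ρ) ^ s₁) := by gcongr
      _ = (Q.θ * c) ^ (-ε) * (r₀ ^ (-s₁) * 2 ^ s₁) * ρ ^ s := by
          rw [Real.mul_rpow (by positivity) hρ.le, Real.mul_rpow (by norm_num) hρ.le,
            show s = -ε + s₁ by linarith, Real.rpow_add hρ]
          ring
      _ ≤ Ct * ρ ^ s := by gcongr; exact le_max_right _ _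
  choose! Lf hLf using hball
  refine ⟨Ct, fun F hF => ?_⟩
  set Lm : ℕ := F.sup fun q => Lf q.1 q.2 with hLm
  set U := ⋃ q ∈ F, ball q.1 q.2 with hU
  have hUm : MeasurableSet U := (isOpen_biUnion fun _ _ => isOpen_ball).measurableSet
  have h1 : Q.μ U ≤ Q.ℙ (Q.J Lm ⁻¹' {w | ∃ z ∈ Q.K, Q.gw w z ∈ U}) := by
    rw [ℙ_J, Q.wsum_measure Lm hUm]
    refine Q.wsum_mono fun w _ => ?_
    by_cases hw : ∃ z ∈ Q.K, Q.gw w z ∈ U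
    · rw [indicator_of_mem (show w ∈ {w | ∃ z ∈ Q.K, Q.gw w z ∈ U} from hw)]
      exact prob_le_one
    · refine le_trans (le_of_eq ?_) zero_le
      refine measure_mono_null (t := Q.Kᶜ) (fun x hx (hxK : x ∈ Q.K) => hw ⟨x, hxK, hx⟩) Q.hμK
  have h2 : Q.J Lm ⁻¹' {w | ∃ z ∈ Q.K, Q.gw w z ∈ U} ⊆
      Ω₀ᶜ ∪ ⋃ q ∈ F, (Ω₀ ∩ {ω | ∃ z ∈ Q.K, Q.gw (Q.J (Lf q.1 q.2) ω) z ∈ ball q.1 q.2}) := by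
    rintro ω ⟨z, hz, hzU⟩
    by_cases hω : ω ∈ Ω₀
    · right
      obtain ⟨q, hq, hzq⟩ := mem_iUnion₂.1 hzU
      refine mem_iUnion₂.2 ⟨q, hq, hω, ?_⟩
      obtain ⟨k, hk⟩ := Nat.exists_eq_add_of_le (Finset.le_sup (f := fun q : Euc d × ℝ => Lf q.1 q.2) hq)
      rw [← hLm] at hk
      rw [hk, J_add, gw_append] at hzq
      exact ⟨_, Q.gw_mem _ hz, hzq⟩
    · exact Or.inl hω
  calc Q.μ U ≤ _ := h1
    _ ≤ _ := measure_mono h2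
    _ ≤ Q.ℙ Ω₀ᶜ + Q.ℙ (⋃ q ∈ F, (Ω₀ ∩ {ω | ∃ z ∈ Q.K, Q.gw (Q.J (Lf q.1 q.2) ω) z ∈ ball q.1 q.2})) :=
        measure_union_le _ _
    _ ≤ ENNReal.ofReal δ + ∑ q ∈ F, ENNReal.ofReal (Ct * q.2 ^ s) := by
        gcongr
        refine (measure_biUnion_finset_le _ _).trans (Finset.sum_le_sum fun q hq => ?_)
        exact hLf q.1 q.2 (hF q hq)
    _ = _ := by
        rw [Finset.mul_sum]
        congr 1
        refine Finset.sum_congr rfl fun q hq => ?_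
        rw [ENNReal.ofReal_mul (by positivity)]

end QSS

lemma eventually_shift_lt (D : ℝ) (j : ℕ) {γ γ' : ℝ} (h : γ' < γ) :
    ∀ᶠ k : ℕ in atTop, D * (2 : ℝ) ^ (-(k * γ : ℝ)) < 2 ^ (-(((k + j : ℕ) : ℝ) * γ')) := by
  have h1 : Tendsto (fun k : ℕ => D * 2 ^ (j * γ' : ℝ) * ((2 : ℝ) ^ (-(γ - γ'))) ^ k) atTop
      (𝓝 (D * 2 ^ (j * γ' : ℝ) * 0)) :=
    (tendsto_pow_atTop_nhds_zero_of_lt_one (by positivity)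
      (Real.rpow_lt_one_of_one_lt_of_neg (by norm_num) (by linarith))).const_mul _
  rw [mul_zero] at h1
  filter_upwards [h1.eventually (gt_mem_nhds one_pos)] with k hk
  have hpos : (0 : ℝ) < 2 ^ (-(((k + j : ℕ) : ℝ) * γ')) := by positivity
  have e : D * (2 : ℝ) ^ (-(k * γ : ℝ)) =
      D * 2 ^ (j * γ' : ℝ) * ((2 : ℝ) ^ (-(γ - γ'))) ^ k * 2 ^ (-(((k + j : ℕ) : ℝ) * γ')) := by
    rw [← Real.rpow_natCast, ← Real.rpow_mul (by norm_num), mul_assoc, mul_assoc,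
      ← Real.rpow_add (by norm_num), ← Real.rpow_add (by norm_num)]
    congr 2; push_cast; ring
  rw [e]
  calc _ < 1 * (2 : ℝ) ^ (-(((k + j : ℕ) : ℝ) * γ')) := mul_lt_mul_of_pos_right hk hpos
    _ = _ := one_mul _

lemma exists_le_two_pow (c : ℝ) : ∃ j : ℕ, c ≤ 2 ^ j := by
  obtain ⟨j, hj⟩ := pow_unbounded_of_one_lt c (by norm_num : (1 : ℝ) < 2)
  exact ⟨j, hj.le⟩

lemma mul_two_rpow_neg_le {c : ℝ} {j : ℕ} (hc : c ≤ 2 ^ j) (k : ℕ) :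
    c * (2 : ℝ) ^ (-((k + j : ℕ) : ℝ)) ≤ 2 ^ (-(k : ℝ)) := by
  have : (2 : ℝ) ^ (-(k : ℝ)) = 2 ^ j * (2 : ℝ) ^ (-((k + j : ℕ) : ℝ)) := by
    rw [← Real.rpow_natCast, ← Real.rpow_add (by norm_num)]; congr 1; push_cast; ring
  rw [this]
  gcongr

namespace QSS
variable {d : ℕ} (Q : QSS d)

lemma p_mul_measure_le (i : Fin Q.n) {x : Euc d} (hx : x ∈ Q.K) {ρ : ℝ} :
    Q.p i * Q.μ (closedBall x ρ) ≤ Q.μ (closedBall (Q.g i x) (Q.C * Q.r [i] * ρ)) := by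
  rw [Q.stat_apply (isClosed_closedBall (x := Q.g i x)).measurableSet]
  refine le_trans ?_ (Finset.single_le_sum (f := fun i' => Q.p i' *
    Q.μ (Q.g i' ⁻¹' closedBall (Q.g i x) (Q.C * Q.r [i] * ρ))) (fun _ _ => zero_le)
      (Finset.mem_univ i))
  refine mul_le_mul_right ?_ (Q.p i)
  rw [← Q.measure_inter_K]
  refine measure_mono ?_
  rintro y ⟨hy, hyK⟩
  rw [mem_closedBall] at hy
  have := Q.dist_le [i] hyK hx
  have h2 : 0 ≤ Q.C * Q.r [i] := mul_nonneg Q.C_pos.le (Q.r_pos _).le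
  exact this.trans (mul_le_mul_of_nonneg_left hy h2)

/-- The upper local dimension is almost surely at most the dimension of the measure. -/
theorem eventually_heavy {β : ℝ} (hβ : 0 < β) (h : mdim Q.μ < ENNReal.ofReal β) :
    ∀ᵐ x ∂Q.μ, ∀ᶠ k : ℕ in atTop,
      ENNReal.ofReal (2 ^ (-(k * β : ℝ))) ≤ Q.μ (closedBall x (2 ^ (-(k : ℝ)))) := by
  obtain ⟨s, hs0, hs1, hsβ⟩ : ∃ s : ℝ, 0 < s ∧ mdim Q.μ < ENNReal.ofReal s ∧ s < β := by
    obtain ⟨q, hq1, hq2⟩ := ENNReal.lt_iff_exists_nnreal_btwn.1 h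
    have hq : ENNReal.ofReal (q : ℝ) = q := ENNReal.ofReal_coe_nnreal
    refine ⟨q, ?_, hq ▸ hq1, ?_⟩
    · have : (0 : ℝ≥0∞) < q := lt_of_le_of_lt zero_le hq1
      exact_mod_cast this
    · rw [← hq] at hq2
      exact (ENNReal.ofReal_lt_ofReal_iff hβ).1 hq2
  set γ₀ : ℝ := (s + β) / 2 with hγ₀
  set E : Set (Euc d) := {x | ∃ m : ℕ, ∃ᶠ k : ℕ in atTop,
    Q.μ (closedBall x (2 ^ (-(k : ℝ)))) < ENNReal.ofReal (2 ^ (-(k * (γ₀ + 1 / (m + 1)) : ℝ)))}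
    with hE
  have hEm : MeasurableSet E := by
    have : E = ⋃ m : ℕ, ⋂ N : ℕ, ⋃ k : ℕ, ⋃ (_ : N ≤ k), {x | Q.μ (closedBall x (2 ^ (-(k : ℝ)))) <
        ENNReal.ofReal (2 ^ (-(k * (γ₀ + 1 / (m + 1)) : ℝ)))} := by
      ext x
      simp only [hE, frequently_atTop, mem_iUnion, mem_iInter, mem_ofPred_eq, exists_prop]
    rw [this]
    exact MeasurableSet.iUnion fun m => MeasurableSet.iInter fun N => MeasurableSet.iUnion fun k =>
      MeasurableSet.iUnion fun _ => measurableSet_lt (measurable_measure_closedBall Q.μ _)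
        measurable_const
  have hmono : ∀ m : ℕ, γ₀ + 1 / ((m + 1 : ℕ) + 1 : ℝ) < γ₀ + 1 / (m + 1 : ℝ) := by
    intro m
    have : (1 : ℝ) / ((m + 1 : ℕ) + 1 : ℝ) < 1 / (m + 1 : ℝ) := by
      apply one_div_lt_one_div_of_lt (by positivity)
      push_cast; linarith
    linarith
  have hinv : ∀ i, Q.g i ⁻¹' E ∩ Q.K ⊆ E := by
    rintro i x ⟨⟨m, hm⟩, hxK⟩
    obtain ⟨j, hj⟩ := exists_le_two_pow (Q.C * Q.r [i])
    refine ⟨m + 1, ?_⟩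
    have hp0 : 0 < (Q.p i).toReal := ENNReal.toReal_pos (Q.hp0 i).ne' (Q.p_ne_top i)
    have hev := eventually_shift_lt (Q.p i).toReal⁻¹ j (hmono m)
    refine (frequently_atTop.2 fun N => ?_)
    obtain ⟨k, hk, hk1, hk2⟩ := frequently_atTop.1 (hm.and_eventually hev) N
    refine ⟨k + j, by omega, ?_⟩
    have h1 := Q.p_mul_measure_le i hxK (ρ := 2 ^ (-((k + j : ℕ) : ℝ)))
    have h2 : Q.p i * Q.μ (closedBall x (2 ^ (-((k + j : ℕ) : ℝ)))) <
        ENNReal.ofReal (2 ^ (-(k * (γ₀ + 1 / (m + 1)) : ℝ))) :=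
      lt_of_le_of_lt (h1.trans (measure_mono (closedBall_subset_closedBall
        (mul_two_rpow_neg_le hj k)))) hk1
    have h3 : Q.μ (closedBall x (2 ^ (-((k + j : ℕ) : ℝ)))) ≤
        ENNReal.ofReal ((Q.p i).toReal⁻¹ * 2 ^ (-(k * (γ₀ + 1 / (m + 1)) : ℝ))) := by
      rw [ENNReal.ofReal_mul (by positivity), ENNReal.ofReal_inv_of_pos hp0,
        ENNReal.ofReal_toReal (Q.p_ne_top i), ← ENNReal.div_eq_inv_mul]
      rw [ENNReal.le_div_iff_mul_le (Or.inl (Q.hp0 i).ne') (Or.inl (Q.p_ne_top i)), mul_comm]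
      exact h2.le
    refine lt_of_le_of_lt h3 ?_
    exact (ENNReal.ofReal_lt_ofReal_iff (by positivity)).2 hk2
  by_cases hE0 : Q.μ E = 0
  · have : ∀ᵐ x ∂Q.μ, x ∉ E := measure_eq_zero_iff_ae_notMem.1 hE0
    obtain ⟨m, hm⟩ := exists_nat_one_div_lt (show 0 < β - γ₀ by linarith)
    filter_upwards [this] with x hx
    by_contra hcon
    refine hx ⟨m, ?_⟩
    rw [not_eventually] at hcon
    refine hcon.mono fun k hk => (not_le.1 hk).trans_le (ENNReal.ofReal_le_ofReal ?_)
    refine Real.rpow_le_rpow_of_exponent_le (by norm_num) ?_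
    have : (k : ℝ) * (γ₀ + 1 / (m + 1)) ≤ k * β := by gcongr; linarith
    linarith
  · exfalso
    have hfull := Q.zero_one hEm hinv hE0
    have h1 : ENNReal.ofReal s ≤ mdim Q.μ := by
      refine Q.le_mdim_of_light hs0 (show s < γ₀ by linarith) ?_
      have : ∀ᵐ x ∂Q.μ, x ∈ E := by
        rw [ae_iff]; exact hfull
      filter_upwards [this] with x hx
      obtain ⟨m, hm⟩ := hx
      obtain ⟨j, hj⟩ := exists_le_two_pow (8 * Q.C)
      have hm0 : (0 : ℝ) < 1 / (m + 1) := by positivity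
      have hev := eventually_shift_lt 1 j (show γ₀ < γ₀ + 1 / (m + 1) by linarith)
      refine (frequently_atTop.2 fun N => ?_)
      obtain ⟨k, hk, hk1, hk2⟩ := frequently_atTop.1 (hm.and_eventually hev) N
      refine ⟨k + j, by omega, ?_⟩
      refine (measure_mono (closedBall_subset_closedBall (mul_two_rpow_neg_le hj k))).trans ?_
      refine hk1.le.trans (ENNReal.ofReal_le_ofReal ?_)
      rw [one_mul] at hk2
      exact hk2.le
    exact absurd hs1 (not_lt.2 h1)

end QSS

/-! ### Doubling at most scales -/

lemma tele_sum {ℓ : ℕ → ℝ} (h0 : ∀ t, 0 ≤ ℓ t) (hm : Monotone ℓ) (n T : ℕ) :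
    ∑ t ∈ Finset.range T, (ℓ (t + n) - ℓ t) ≤ n * ℓ (T + n) := by
  induction n with
  | zero => simp
  | succ n ih =>
    have e : ∑ t ∈ Finset.range T, (ℓ (t + (n + 1)) - ℓ t) =
        ∑ t ∈ Finset.range T, (ℓ (t + n) - ℓ t) + (ℓ (T + n) - ℓ (0 + n)) := by
      rw [← Finset.sum_range_sub (fun t => ℓ (t + n)), ← Finset.sum_add_distrib]
      refine Finset.sum_congr rfl fun t _ => ?_
      rw [show t + (n + 1) = t + 1 + n by ring]; ring
    rw [e]
    have h1 : ℓ (T + n) ≤ ℓ (T + (n + 1)) := hm (by omega)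
    have h2 := h0 (0 + n)
    have h3 : (n : ℝ) * ℓ (T + n) ≤ n * ℓ (T + (n + 1)) := by gcongr
    push_cast
    linarith

open Classical in
/-- Let `ℓ` be nonnegative, increasing and of linear growth of rate `β`. If the increments
`ℓ (t + n) - ℓ t`, which average to at most `n β`, are at least `a` most of the time, then they
exceed `b` only rarely. -/
lemma freq_tele {ℓ : ℕ → ℝ} (h0 : ∀ t, 0 ≤ ℓ t) (hm : Monotone ℓ) {β : ℝ}
    (hβ : ∀ᶠ T : ℕ in atTop, ℓ T ≤ β * T) (n : ℕ) {a b q₁ q : ℝ} (ha : 0 ≤ a) (hab : a < b)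
    (h1 : FreqLE {t | ℓ (t + n) - ℓ t < a} q₁) (hq : n * β - a + a * q₁ < (b - a) * q) :
    FreqLE {t | b < ℓ (t + n) - ℓ t} q := by
  obtain ⟨N, hN⟩ := exists_nat_ge (n * β * n / ((b - a) * q - (n * β - a + a * q₁)))
  filter_upwards [h1, (tendsto_add_atTop_nat n).eventually hβ, eventually_ge_atTop N]
    with T hT1 hT2 hT3
  have hN' : n * β * n ≤ T * ((b - a) * q - (n * β - a + a * q₁)) := by
    rw [← div_le_iff₀ (by linarith)]
    exact hN.trans (by exact_mod_cast hT3)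
  have hs := tele_sum h0 hm n T
  have h4 : a * T - a * ((Finset.range T).filter (fun t => t ∈ {t | ℓ (t + n) - ℓ t < a})).card +
      (b - a) * ((Finset.range T).filter (fun t => t ∈ {t | b < ℓ (t + n) - ℓ t})).card ≤
      ∑ t ∈ Finset.range T, (ℓ (t + n) - ℓ t) := by
    rw [Finset.card_filter, Finset.card_filter]; push_cast
    have : a * T = ∑ t ∈ Finset.range T, a := by simp [mul_comm]
    rw [this, Finset.mul_sum, Finset.mul_sum, ← Finset.sum_sub_distrib, ← Finset.sum_add_distrib]
    refine Finset.sum_le_sum fun t _ => ?_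
    have h5 : 0 ≤ ℓ (t + n) - ℓ t := sub_nonneg.2 (hm (by omega))
    simp only [mem_ofPred_eq]
    split_ifs with h1 h2 h2
    · linarith
    · linarith
    · linarith
    · linarith
  have h5 : (n : ℝ) * ℓ (T + n) ≤ n * (β * ((T : ℝ) + n)) := by
    have : ((T + n : ℕ) : ℝ) = (T : ℝ) + n := by push_cast; ring
    rw [← this]; gcongr
  have h6 : a * ((Finset.range T).filter (fun t => t ∈ {t | ℓ (t + n) - ℓ t < a})).card ≤
    a * (q₁ * T) := mul_le_mul_of_nonneg_left hT1 ha
  have h7 : (b - a) * ((Finset.range T).filter (fun t => t ∈ {t | b < ℓ (t + n) - ℓ t})).card ≤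
      (b - a) * (q * T) := by nlinarith
  exact le_of_mul_le_mul_left h7 (by linarith)

namespace QSS
variable {d : ℕ} (Q : QSS d)

lemma mdim_le : mdim Q.μ ≤ d := by
  unfold mdim
  refine (iInf_le _ univ).trans ?_
  refine (iInf_le _ MeasurableSet.univ).trans ?_
  refine (iInf_le _ (by simp)).trans ?_
  rw [Real.dimH_univ_pi_fin]

/-- The growth of `-log μ (B x (2 ^ (-t)))`. -/
lemma eventually_neg_log_le {β : ℝ} (hβ : 0 < β) (h : mdim Q.μ < ENNReal.ofReal β) :
    ∀ᵐ x ∂Q.μ, ∀ᶠ k : ℕ in atTop, -Real.logb 2 (Q.μ.real (closedBall x (2 ^ (-(k : ℝ))))) ≤ β * k := by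
  filter_upwards [Q.eventually_heavy hβ h] with x hx
  filter_upwards [hx] with k hk
  have h1 : (2 : ℝ) ^ (-(k * β : ℝ)) ≤ Q.μ.real (closedBall x (2 ^ (-(k : ℝ)))) :=
    (ENNReal.ofReal_le_iff_le_toReal (measure_ne_top _ _)).1 hk
  have h2 := Real.logb_le_logb_of_le (b := 2) (by norm_num) (by positivity) h1
  rw [Real.logb_rpow (by norm_num) (by norm_num)] at h2
  linarith

/-- Almost surely, balls are doubling at most scales. -/
theorem ball_doubling : ∀ᵐ x ∂Q.μ, ∀ j₀ j : ℕ, ∀ q : ℝ, 0 < q → ∃ M : ℝ, 0 < M ∧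
    FreqLE {t : ℕ | M * Q.μ.real (closedBall x (2 ^ (-((t + j : ℕ) : ℝ)))) <
      Q.μ.real (closedBall x (2 ^ ((j₀ : ℝ) - t)))} q := by
  have hd : mdim Q.μ < ENNReal.ofReal (d + 1) := by
    refine Q.mdim_le.trans_lt ?_
    rw [← ENNReal.ofReal_natCast]
    exact (ENNReal.ofReal_lt_ofReal_iff (by positivity)).2 (by linarith)
  filter_upwards [Q.eventually_neg_log_le (by positivity) hd, ae_closedBall_pos (μ := Q.μ)]
    with x hx hpos j₀ j q hq
  have hpos' : ∀ r > 0, 0 < Q.μ.real (closedBall x r) := fun r hr =>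
    ENNReal.toReal_pos (hpos r hr).ne' (measure_ne_top _ _)
  set ℓ : ℕ → ℝ := fun t => -Real.logb 2 (Q.μ.real (closedBall x (2 ^ ((j₀ : ℝ) - t)))) with hℓ
  have h0 : ∀ t, 0 ≤ ℓ t := fun t => by
    have := Real.logb_nonpos (b := 2) (by norm_num)
      (measureReal_nonneg (μ := Q.μ) (s := closedBall x (2 ^ ((j₀ : ℝ) - t)))) measureReal_le_one
    simp only [hℓ]; linarith
  have hmono : Monotone ℓ := fun s t hst => by
    simp only [hℓ, neg_le_neg_iff]
    refine Real.logb_le_logb_of_le (by norm_num) (hpos' _ (by positivity))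
      (measureReal_mono (closedBall_subset_closedBall ?_))
    refine Real.rpow_le_rpow_of_exponent_le (by norm_num) ?_
    have : (s : ℝ) ≤ t := by exact_mod_cast hst
    linarith
  have hβ : ∀ᶠ T : ℕ in atTop, ℓ T ≤ (d + 1 : ℝ) * T := by
    filter_upwards [hx] with T hT
    refine le_trans ?_ hT
    simp only [hℓ, neg_le_neg_iff]
    refine Real.logb_le_logb_of_le (by norm_num) (hpos' _ (by positivity))
      (measureReal_mono (closedBall_subset_closedBall ?_))
    refine Real.rpow_le_rpow_of_exponent_le (by norm_num) ?_
    have : (0 : ℝ) ≤ j₀ := by positivity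
    linarith
  set b : ℝ := ((j₀ + j : ℕ) * (d + 1) + 1) / q with hb
  have hbp : 0 < b := by positivity
  have hbq : b * q = (j₀ + j : ℕ) * (d + 1) + 1 := by rw [hb]; field_simp
  have h1 : FreqLE {t | ℓ (t + (j₀ + j)) - ℓ t < 0} 0 := by
    have : {t | ℓ (t + (j₀ + j)) - ℓ t < 0} = ∅ := by
      ext t
      simp only [mem_ofPred_eq, mem_empty_iff_false, iff_false, not_lt, sub_nonneg]
      exact hmono (by omega)
    rw [this]
    simp [FreqLE]
  have := freq_tele h0 hmono hβ (j₀ + j) (q := q) (b := b) le_rfl hbp h1 (by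
    simp only [sub_zero, zero_mul, add_zero, hbq]; linarith)
  refine ⟨2 ^ b, by positivity, this.mono ?_ le_rfl⟩
  intro t ht
  simp only [mem_ofPred_eq, hℓ] at ht ⊢
  have e : (j₀ : ℝ) - ((t + (j₀ + j) : ℕ) : ℝ) = -((t + j : ℕ) : ℝ) := by push_cast; ring
  rw [e]
  have p1 := hpos' ((2 : ℝ) ^ (-((t + j : ℕ) : ℝ))) (by positivity)
  have := Real.logb_lt_logb (b := 2) (by norm_num) (by positivity) ht
  rw [Real.logb_mul (by positivity) p1.ne', Real.logb_rpow (by norm_num) (by norm_num)] at this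
  linarith

end QSS

lemma list_sum_measure_apply {X ι : Type*} [MeasurableSpace X] (l : List ι) (f : ι → Measure X)
    (A : Set X) : (l.map f).sum A = (l.map fun u => f u A).sum := by
  induction l with
  | nil => simp
  | cons a l ih => simp [ih]

namespace QSS
variable {d : ℕ} (Q : QSS d)

lemma dist_gw_le_R {u : Q.Word} {R : ℝ} (h : Q.r u ≤ R) {x y : Euc d} (hx : x ∈ Q.K)
    (hy : y ∈ Q.K) : dist (Q.gw u x) (Q.gw u y) ≤ 2 * Q.C * R := by
  refine (Q.dist_gw_le u hx hy).trans ?_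
  have := Q.C_pos
  gcongr

open Classical in
/-- Up to an error which is a small proportion of the mass of a neighbourhood `F` of `E`, at every
scale `R` the restriction of `μ` to `E` is dominated by a measure `ρ` with Frostman exponent `s`,
uniformly after rescaling by `R`. It is assembled from copies of a Frostman piece of `μ` in
cylinders of size about `R`. -/
theorem local_frostman {s : ℝ} (hs : s = 0 ∨ 0 < s ∧ ENNReal.ofReal s < mdim Q.μ) {δ : ℝ≥0∞}
    (hδ : 0 < δ) : ∃ C' : ℝ, 0 < C' ∧ ∀ R : ℝ, 0 < R → R ≤ 1 → ∀ E F : Set (Euc d),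
      MeasurableSet F → (∀ e ∈ E, closedBall e (2 * Q.C * R) ⊆ F) →
      ∃ ρ : Measure (Euc d), (∀ A ⊆ E, MeasurableSet A → Q.μ A ≤ ρ A + δ * Q.μ F) ∧
        ∀ y r, 0 < r → ρ (closedBall y r) ≤ ENNReal.ofReal (C' * (r / R) ^ s) * Q.μ F := by
  obtain ⟨G, hG, hGδ, Cf, hCf, hF⟩ := exists_frostman Q.μ hs hδ
  have hs0 : 0 ≤ s := by rcases hs with h | h; exacts [h.ge, h.1.le]
  have hC := Q.C_pos
  have hκ := Q.κ_pos
  refine ⟨Cf * (2 * Q.C * Q.C / Q.κ) ^ s, by positivity, fun R hR0 hR1 E F hFm hEF => ?_⟩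
  obtain ⟨W, M, hW, hWμ, -⟩ := Q.exists_section hR0 hR1
  set m : Q.Word → Prop := fun u => ∃ x ∈ Q.K, Q.gw u x ∈ E with hm
  have hpF : (W.map fun u => if m u then Q.pw u else 0).sum ≤ Q.μ F := by
    rw [hWμ F hFm]
    refine List.sum_le_sum fun u hu => ?_
    split_ifs with h
    · obtain ⟨x, hx, hxE⟩ := h
      have h1 : Q.μ (Q.gw u ⁻¹' F) = 1 := by
        refine (prob_compl_eq_zero_iff (Q.gw_meas u hFm)).1
          (measure_mono_null (t := Q.Kᶜ) (fun z hz (hzK : z ∈ Q.K) => hz ?_) Q.hμK)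
        exact hEF _ hxE (Q.dist_gw_le_R (hW u hu).2.1 hzK hx)
      rw [h1, mul_one]
    · exact zero_le
  refine ⟨(W.map fun u => if m u then Q.pw u • (Q.μ.restrict G).map (Q.gw u) else 0).sum, ?_, ?_⟩
  · intro A hAE hA
    rw [list_sum_measure_apply, hWμ A hA]
    refine le_trans ?_ (add_le_add le_rfl (mul_le_mul_right hpF δ))
    rw [← List.sum_map_mul_left, ← List.sum_map_add]
    refine List.sum_le_sum fun u hu => ?_
    split_ifs with h
    · rw [Measure.smul_apply, smul_eq_mul, Measure.map_apply (Q.gw_meas u) hA,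
        Measure.restrict_apply (Q.gw_meas u hA), mul_comm δ, ← mul_add]
      refine mul_le_mul_right ?_ _
      calc Q.μ (Q.gw u ⁻¹' A) ≤ Q.μ (Q.gw u ⁻¹' A ∩ G ∪ Gᶜ) := by
            refine measure_mono fun z hz => ?_
            by_cases hzG : z ∈ G
            · exact Or.inl ⟨hz, hzG⟩
            · exact Or.inr hzG
        _ ≤ _ := (measure_union_le _ _).trans (add_le_add le_rfl hGδ)
    · have : Q.μ (Q.gw u ⁻¹' A) = 0 :=
        measure_mono_null (t := Q.Kᶜ) (fun z hz (hzK : z ∈ Q.K) => h ⟨z, hzK, hAE hz⟩) Q.hμK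
      rw [this]; simp
  · intro y r hr
    rw [list_sum_measure_apply]
    refine le_trans ?_ (mul_le_mul_right hpF _)
    rw [← List.sum_map_mul_left]
    refine List.sum_le_sum fun u hu => ?_
    have hb : MeasurableSet (closedBall y r) := isClosed_closedBall.measurableSet
    split_ifs with h
    · rw [Measure.smul_apply, smul_eq_mul, Measure.map_apply (Q.gw_meas u) hb,
        Measure.restrict_apply (Q.gw_meas u hb), mul_comm]
      refine mul_le_mul_left ?_ _
      by_cases hz : ∃ z ∈ Q.K, Q.gw u z ∈ closedBall y r
      · obtain ⟨z, hzK, hz⟩ := hz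
        rw [← Q.measure_inter_K]
        have hru := Q.r_pos u
        refine (measure_mono (t := G ∩ closedBall z (2 * Q.C * r / Q.r u)) ?_).trans
          ((hF z _ (by positivity)).trans (ENNReal.ofReal_le_ofReal ?_))
        · rintro w ⟨⟨hw, hwG⟩, hwK⟩
          exact ⟨hwG, Q.dist_le_of_gw u hwK hzK hw hz⟩
        · rw [mul_assoc Cf, ← Real.mul_rpow (by positivity) (by positivity)]
          gcongr
          have h1 := (hW u hu).1
          rw [div_mul_div_comm, div_le_div_iff₀ hru (by positivity)]
          have h2 : Q.κ * R ≤ Q.C * Q.r u := by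
            have := mul_le_mul_of_nonneg_left h1 hC.le
            rwa [mul_assoc, mul_inv_cancel_left₀ hC.ne'] at this
          calc 2 * Q.C * r * (Q.κ * R) ≤ 2 * Q.C * r * (Q.C * Q.r u) := by gcongr
            _ = _ := by ring
      · have : Q.μ (Q.gw u ⁻¹' closedBall y r ∩ G) = 0 :=
          measure_mono_null (t := Q.Kᶜ) (fun w hw (hwK : w ∈ Q.K) => hz ⟨w, hwK, hw.1⟩) Q.hμK
        rw [this]; simp
    · simp

end QSS
namespace QSS
variable {d : ℕ} (Q : QSS d)

/-! ### Lower bound for the dimension of tangent measures -/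

/-- If `μ` is doubling at `x` around scale `2 ^ (-t)`, the magnification `μ_{x,t}` inherits the
uniform content estimate of `local_frostman`. -/
lemma contentLE_rescPM {s δ M C' t : ℝ} {x : Euc d} (hx : ∀ r > 0, 0 < Q.μ (closedBall x r))
    (hM : 0 < M) (hC' : 0 < C') {ρ : Measure (Euc d)} {F : Set (Euc d)}
    (hρ1 : ∀ A ⊆ closedBall x (2 ^ (-t)), MeasurableSet A →
      Q.μ A ≤ ρ A + ENNReal.ofReal (δ / M) * Q.μ F)
    (hρ2 : ∀ y r, 0 < r → ρ (closedBall y r) ≤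
      ENNReal.ofReal (C' * (r / 2 ^ (-t)) ^ s) * Q.μ F)
    (hF : Q.μ F ≤ ENNReal.ofReal M * Q.μ (closedBall x (2 ^ (-t)))) :
    ContentLE (rescPM Q.μ x t : Measure (Euc d)) s δ (C' * M) := by
  intro S hS
  have hm : MeasurableSet (⋃ p ∈ S, ball p.1 p.2) :=
    (isOpen_biUnion fun p _ => isOpen_ball).measurableSet
  rw [rescPM_coe hx, resc_apply t hm]
  set R : ℝ := 2 ^ (-t) with hR
  have hR0 : 0 < R := by positivity
  have h2t : (2 : ℝ) ^ t = R⁻¹ := by rw [hR, Real.rpow_neg (by norm_num), inv_inv]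
  set A := closedBall x R ∩ {y | (2 : ℝ) ^ t • (y - x) ∈ ⋃ p ∈ S, ball p.1 p.2} with hA
  have hAm : MeasurableSet A :=
    isClosed_closedBall.measurableSet.inter
      ((show Measurable fun y : Euc d => (2 : ℝ) ^ t • (y - x) by fun_prop) hm)
  have hAsub : A ⊆ ⋃ p ∈ S, closedBall (x + R • p.1) (R * p.2) := by
    rintro y ⟨-, hy⟩
    simp only [mem_ofPred_eq, mem_iUnion, exists_prop, mem_ball] at hy ⊢
    obtain ⟨p, hp, hy⟩ := hy
    refine ⟨p, hp, ?_⟩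
    rw [h2t] at hy
    rw [mem_closedBall, dist_eq_norm]
    have e : y - (x + R • p.1) = R • (R⁻¹ • (y - x) - p.1) := by
      rw [smul_sub, smul_smul, mul_inv_cancel₀ hR0.ne', one_smul]; abel
    rw [e, norm_smul, Real.norm_of_nonneg hR0.le, ← dist_eq_norm]
    gcongr
  have h1 : Q.μ A ≤ (ENNReal.ofReal C' * ∑ p ∈ S, ENNReal.ofReal (p.2 ^ s) +
      ENNReal.ofReal (δ / M)) * Q.μ F := by
    refine (hρ1 A inter_subset_left hAm).trans ?_
    rw [add_mul]
    gcongr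
    refine (measure_mono hAsub).trans ((measure_biUnion_finset_le _ _).trans ?_)
    rw [Finset.mul_sum, Finset.sum_mul]
    refine Finset.sum_le_sum fun p hp => ?_
    refine (hρ2 _ _ (mul_pos hR0 (hS p hp))).trans (le_of_eq ?_)
    rw [mul_div_cancel_left₀ _ hR0.ne', ENNReal.ofReal_mul hC'.le]
  have hB := hx R hR0
  calc (Q.μ (closedBall x R))⁻¹ * Q.μ A
      ≤ (Q.μ (closedBall x R))⁻¹ * ((ENNReal.ofReal C' * ∑ p ∈ S, ENNReal.ofReal (p.2 ^ s) +
      ENNReal.ofReal (δ / M)) * (ENNReal.ofReal M * Q.μ (closedBall x R))) := by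
        gcongr
        exact h1.trans (by gcongr)
    _ = ((Q.μ (closedBall x R))⁻¹ * Q.μ (closedBall x R)) *
        ((ENNReal.ofReal C' * ∑ p ∈ S, ENNReal.ofReal (p.2 ^ s) +
      ENNReal.ofReal (δ / M)) * ENNReal.ofReal M) := by ring
    _ = ENNReal.ofReal δ + ENNReal.ofReal (C' * M) * ∑ p ∈ S, ENNReal.ofReal (p.2 ^ s) := by
      rw [ENNReal.inv_mul_cancel hB.ne' (measure_ne_top _ _), one_mul, add_mul,
        ← ENNReal.ofReal_mul' hM.le, div_mul_cancel₀ _ hM.ne', ENNReal.ofReal_mul hC'.le]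
      ring

/-- Almost surely all tangent distributions are carried by measures of dimension at least `s`, for
each `s` below the dimension of `μ`. -/
theorem tangent_lower {s : ℝ} (hs : s = 0 ∨ 0 < s ∧ ENNReal.ofReal s < mdim Q.μ) :
    ∀ᵐ x ∂Q.μ, ∀ P : Measure (ProbabilityMeasure (Euc d)), IsTangentDistribution Q.μ x P →
      ∀ᵐ η : ProbabilityMeasure (Euc d) ∂P, ENNReal.ofReal s ≤ mdim η.toMeasure := by
  filter_upwards [Q.ball_doubling, ae_closedBall_pos (μ := Q.μ)] with x hdoub hx P hP
  obtain ⟨j₀, hj₀⟩ := exists_le_two_pow (1 + 2 * Q.C)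
  have key : ∀ δ : ℝ, 0 < δ → ∀ᵐ η : ProbabilityMeasure (Euc d) ∂P,
      ∃ C : ℝ, ContentLE η.toMeasure s δ C := by
    intro δ hδ
    refine le_antisymm (ENNReal.le_of_forall_pos_le_add fun q hq _ => ?_) zero_le
    rw [zero_add]
    obtain ⟨M, hM, hfreq⟩ := hdoub j₀ 1 q (by exact_mod_cast hq)
    obtain ⟨C', hC', hloc⟩ := Q.local_frostman hs (δ := ENNReal.ofReal (δ / M))
      (ENNReal.ofReal_pos.2 (by positivity))
    have := tangent_compl_le hx hP (isClosed_contentLE s δ (C' * M)) (q := q)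
      (hfreq.mono ?_ le_rfl)
    · refine (measure_mono fun η hη => ?_).trans (this.trans (by simp))
      exact fun h => hη ⟨_, h⟩
    · rintro k ⟨t, hkt, htk, hbad⟩
      rw [mem_ofPred_eq]
      by_contra hcon
      push Not at hcon
      refine hbad ?_
      have hk0 : (0 : ℝ) ≤ k := by positivity
      have ht1 : (2 : ℝ) ^ (-t) ≤ 2 ^ (-(k : ℝ)) :=
        Real.rpow_le_rpow_of_exponent_le (by norm_num) (by linarith)
      obtain ⟨ρ, hρ1, hρ2⟩ := hloc (2 ^ (-t)) (by positivity)
        (ht1.trans (Real.rpow_le_one_of_one_le_of_nonpos (by norm_num) (by linarith)))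
        (closedBall x (2 ^ (-t))) (closedBall x (2 ^ ((j₀ : ℝ) - k)))
        isClosed_closedBall.measurableSet (by
          intro e he
          refine closedBall_subset_closedBall' ?_
          rw [mem_closedBall] at he
          have hC := Q.C_pos
          calc 2 * Q.C * 2 ^ (-t) + dist e x ≤ 2 * Q.C * 2 ^ (-t) + 2 ^ (-t) := by gcongr
            _ = (1 + 2 * Q.C) * 2 ^ (-t) := by ring
            _ ≤ 2 ^ j₀ * 2 ^ (-(k : ℝ)) := by gcongr
            _ = 2 ^ ((j₀ : ℝ) - k) := by
              rw [← Real.rpow_natCast, ← Real.rpow_add (by norm_num)]; rfl)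
      refine Q.contentLE_rescPM hx hM hC' hρ1 hρ2 ?_
      rw [← ofReal_measureReal, ← ofReal_measureReal (s := closedBall x (2 ^ (-t))),
        ← ENNReal.ofReal_mul hM.le]
      refine ENNReal.ofReal_le_ofReal (hcon.trans ?_)
      have : Q.μ.real (closedBall x (2 ^ (-((k + 1 : ℕ) : ℝ)))) ≤
          Q.μ.real (closedBall x (2 ^ (-t))) :=
        measureReal_mono (closedBall_subset_closedBall
          (Real.rpow_le_rpow_of_exponent_le (by norm_num) (by push_cast; linarith)))
      gcongr
  have key' := ae_all_iff.2 fun m : ℕ => key (1 / ((m : ℝ) + 1)) (by positivity)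
  filter_upwards [key'] with η hη
  refine le_mdim_of_contentLE fun δ hδ => ?_
  obtain ⟨m, hm⟩ := exists_nat_one_div_lt hδ
  obtain ⟨C, hC⟩ := hη m
  refine ⟨C, fun F hF => (hC F hF).trans ?_⟩
  gcongr

end QSS

/-! ### A randomly shifted dyadic grid -/

lemma floor_two_pow_div (m : ℕ) (w : ℝ) : ⌊(2 : ℝ) ^ m * w⌋ / 2 ^ m = ⌊w⌋ := by
  have := Int.cast_mul_floor_div_cancel_of_pos (n := (2 : ℤ) ^ m) (by positivity) w
  push_cast at this
  exact this

/-- In each dyadic cell of side `2 ^ (-t)`, the points whose rescaled position in the cell is within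
`2 ^ (-k)` of its ends have proportion at most `2 * 2 ^ (-k)`. -/
lemma cellAvg_fract_le (a : ℤ) (k t : ℕ) (j : ℤ) :
    cellAvg (volume.restrict (Ico (a : ℝ) (a + 1))) (fun z : ℝ => ⌊(2 : ℝ) ^ t * z⌋)
      {z | Int.fract ((2 : ℝ) ^ t * z) < (2 ^ k)⁻¹ ∨ 1 - (2 ^ k)⁻¹ ≤ Int.fract ((2 : ℝ) ^ t * z)} j ≤
        2 * (2 ^ k)⁻¹ := by
  set P : Measure ℝ := volume.restrict (Ico (a : ℝ) (a + 1)) with hP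
  have : IsProbabilityMeasure P := ⟨by simp [hP]⟩
  set e : ℝ := (2 ^ k)⁻¹ with he
  have he0 : 0 < e := by positivity
  set J : ℝ → ℤ := fun z => ⌊(2 : ℝ) ^ t * z⌋ with hJ
  have hJm : ∀ j, MeasurableSet (J ⁻¹' {j}) := fun j =>
    (show Measurable J from Int.measurable_floor.comp (by fun_prop)) (MeasurableSet.singleton j)
  set Y : Set ℝ := {z | Int.fract ((2 : ℝ) ^ t * z) < e ∨
    1 - e ≤ Int.fract ((2 : ℝ) ^ t * z)} with hY
  have h2 : (0 : ℝ) < 2 ^ t := by positivity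
  have hcell : J ⁻¹' {j} = Ico ((j : ℝ) / 2 ^ t) ((j + 1) / 2 ^ t) := by
    ext y
    simp only [hJ, mem_preimage, mem_singleton_iff, Int.floor_eq_iff, mem_Ico]
    rw [div_le_iff₀ h2, lt_div_iff₀ h2, mul_comm y]
  by_cases hne : (J ⁻¹' {j} ∩ Ico (a : ℝ) (a + 1)).Nonempty
  · obtain ⟨y, hy, hya⟩ := hne
    have hsub : J ⁻¹' {j} ⊆ Ico (a : ℝ) (a + 1) := by
      intro w hw
      have e1 : ⌊w⌋ = ⌊y⌋ := by
        rw [mem_preimage, mem_singleton_iff] at hw hy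
        rw [← floor_two_pow_div t w, ← floor_two_pow_div t y]
        exact congrArg (· / 2 ^ t) (hw.trans hy.symm)
      have e2 : ⌊y⌋ = a := Int.floor_eq_iff.2 hya
      rw [e2] at e1
      exact Int.floor_eq_iff.1 e1
    have hPc : P.real (J ⁻¹' {j}) = (2 ^ t)⁻¹ := by
      rw [hP, measureReal_restrict_apply (hJm j), inter_eq_left.2 hsub, hcell,
        Real.volume_real_Ico]
      rw [← sub_div, add_sub_cancel_left, one_div, max_eq_left (by positivity)]
    have hPY : P.real (Y ∩ J ⁻¹' {j}) ≤ 2 * e * (2 ^ t)⁻¹ := by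
      have hs : Y ∩ J ⁻¹' {j} ⊆ Ico ((j : ℝ) / 2 ^ t) ((j + e) / 2 ^ t) ∪
          Ico ((j + 1 - e) / 2 ^ t) ((j + 1) / 2 ^ t) := by
        rintro w ⟨hw, hwj⟩
        have hwj' := hwj
        rw [hcell] at hwj'
        have e1 : ⌊(2 : ℝ) ^ t * w⌋ = j := hwj
        simp only [hY, mem_ofPred_eq, Int.fract, e1] at hw
        rcases hw with hw | hw
        · refine Or.inl ⟨hwj'.1, ?_⟩
          rw [lt_div_iff₀ h2]; linarith
        · refine Or.inr ⟨?_, hwj'.2⟩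
          rw [div_le_iff₀ h2]; linarith
      have hle : P.real (Y ∩ J ⁻¹' {j}) ≤ volume.real
          (Ico ((j : ℝ) / 2 ^ t) ((j + e) / 2 ^ t) ∪
          Ico ((j + 1 - e) / 2 ^ t) ((j + 1) / 2 ^ t)) := by
        refine ENNReal.toReal_mono ?_ ((Measure.restrict_apply_le _ _).trans (measure_mono hs))
        exact (measure_union_lt_top (by simp) (by simp)).ne
      refine hle.trans ((measureReal_union_le _ _).trans (le_of_eq ?_))
      rw [Real.volume_real_Ico, Real.volume_real_Ico, ← sub_div, ← sub_div]
      rw [max_eq_left (by ring_nf; positivity), max_eq_left (by ring_nf; positivity)]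
      field_simp; ring
    rw [cellAvg, hPc, div_le_iff₀ (by positivity)]
    exact hPY
  · have : P.real (J ⁻¹' {j}) = 0 := by
      rw [hP, measureReal_restrict_apply (hJm j), not_nonempty_iff_eq_empty.1 hne]; simp
    rw [cellAvg, this, div_zero]
    positivity

lemma ae_freq_fract_aux (a : ℤ) (k : ℕ) : ∀ᵐ z ∂(volume.restrict (Ico (a : ℝ) (a + 1))),
    FreqLE {t : ℕ | Int.fract ((2 : ℝ) ^ t * z) < (2 ^ k)⁻¹ ∨
      1 - (2 ^ k)⁻¹ ≤ Int.fract ((2 : ℝ) ^ t * z)} (3 * (2 ^ k)⁻¹) := by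
  set P : Measure ℝ := volume.restrict (Ico (a : ℝ) (a + 1)) with hP
  have : IsProbabilityMeasure P := ⟨by simp [hP]⟩
  set e : ℝ := (2 ^ k)⁻¹ with he
  have he0 : 0 < e := by positivity
  have he1 : (2 : ℝ) ^ k * e = 1 := by rw [he]; field_simp
  set J : ℕ → ℝ → ℤ := fun t z => ⌊(2 : ℝ) ^ t * z⌋ with hJ
  have hJm : ∀ t j, MeasurableSet (J t ⁻¹' {j}) := fun t j =>
    (show Measurable (J t) from Int.measurable_floor.comp (by fun_prop)) (MeasurableSet.singleton j)
  have href' : ∀ s t z, s ≤ t → J s z = J t z / 2 ^ (t - s) := fun s t z hst => by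
    simp only [hJ]
    rw [← floor_two_pow_div (t - s) ((2 : ℝ) ^ s * z), ← mul_assoc, ← pow_add,
      Nat.sub_add_cancel hst]
  set Y : ℕ → Set ℝ := fun t => {z | Int.fract ((2 : ℝ) ^ t * z) < e ∨
    1 - e ≤ Int.fract ((2 : ℝ) ^ t * z)} with hY
  have hYB : ∀ t, Y t = J (t + k) ⁻¹' {m | m < 2 ^ k * (m / 2 ^ k) + 1 ∨
      2 ^ k * (m / 2 ^ k) + 2 ^ k - 1 ≤ m} := fun t => by
    ext z
    have e1 : J (t + k) z = ⌊(2 : ℝ) ^ k * (2 ^ t * z)⌋ := by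
      simp only [hJ]; rw [← mul_assoc, ← pow_add, add_comm]
    simp only [hY, mem_preimage, mem_ofPred_eq, e1]
    rw [floor_two_pow_div, Int.floor_lt, Int.le_floor]
    set w := (2 : ℝ) ^ t * z
    rw [Int.fract]
    push_cast
    have h2 : (0 : ℝ) < 2 ^ k := by positivity
    refine or_congr ?_ ?_
    · rw [← mul_lt_mul_iff_right₀ h2, mul_sub, he1, sub_lt_iff_lt_add']
    · rw [← mul_le_mul_iff_right₀ h2, mul_sub, mul_sub, he1, mul_one]
      constructor <;> intro h <;> linarith
  have hlln := lln_sets P J hJm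
    (fun s t hst => ⟨fun m => m / 2 ^ (t - s), fun z => href' s t z hst⟩) k Y (fun _ => _) hYB
  filter_upwards [hlln] with z hz
  have hemp : {t | 2 * e < cellAvg P (J t) (Y t) (J t z)} = ∅ :=
    eq_empty_of_forall_notMem fun t ht => (cellAvg_fract_le a k t (J t z)).not_gt ht
  have hq : FreqLE {t | 2 * e < cellAvg P (J t) (Y t) (J t z)} 0 := by
    rw [hemp]
    exact Filter.Eventually.of_forall fun T => by simp
  have h3 := freq_of_cellAvg (c := fun t ω => cellAvg P (J t) (Y t) (J t ω)) (ω := z) hz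
    (fun t => cellAvg_le_one P (J t) (Y t) (J t z)) (δ := 2 * e) (q := 0)
    (ε := e) (by positivity) he0 hq
  exact h3.mono (fun t ht => ht) (by linarith)

/-- For Lebesgue-almost every `z`, the fractional part of `2 ^ t * z` is rarely close to `0` or
`1`. -/
lemma ae_freq_fract : ∀ᵐ z : ℝ, ∀ k : ℕ, FreqLE {t : ℕ | Int.fract ((2 : ℝ) ^ t * z) < (2 ^ k)⁻¹ ∨
    1 - (2 ^ k)⁻¹ ≤ Int.fract ((2 : ℝ) ^ t * z)} (3 * (2 ^ k)⁻¹) := by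
  refine ae_all_iff.2 fun k => ?_
  rw [← Measure.restrict_univ (μ := (volume : Measure ℝ)), ← iUnion_Ico_intCast ℝ,
    ae_restrict_iUnion_iff]
  exact fun a => ae_freq_fract_aux a k

/-- The index of the cell containing `x` of the grid of cubes of side `2 ^ (-t)`, the grid being
shifted by `-θ` in each coordinate. -/
noncomputable def gridIdx {d : ℕ} (θ : ℝ) (t : ℕ) (x : Euc d) : Fin d → ℤ :=
  fun i => ⌊(2 : ℝ) ^ t * (x i + θ)⌋

section grid
variable {d : ℕ} (θ : ℝ)

lemma measurable_gridIdx (t : ℕ) : Measurable (gridIdx (d := d) θ t) :=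
  measurable_pi_lambda _ fun i => Int.measurable_floor.comp (by fun_prop)

lemma gridIdx_ref {s t : ℕ} (hst : s ≤ t) (x : Euc d) :
    gridIdx θ s x = fun i => gridIdx θ t x i / 2 ^ (t - s) := by
  ext i
  simp only [gridIdx]
  rw [← floor_two_pow_div (t - s) ((2 : ℝ) ^ s * (x i + θ)), ← mul_assoc, ← pow_add,
      Nat.sub_add_cancel hst]

/-- The cell containing `x` of the shifted grid of side `2 ^ (-t)`. -/
def gridCell (t : ℕ) (x : Euc d) : Set (Euc d) := gridIdx θ t ⁻¹' {gridIdx θ t x}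

lemma measurableSet_gridCell (t : ℕ) (x : Euc d) : MeasurableSet (gridCell θ t x) :=
  measurable_gridIdx θ t (MeasurableSet.singleton _)

lemma mem_gridCell (t : ℕ) (x : Euc d) : x ∈ gridCell θ t x := rfl

lemma gridCell_anti {s t : ℕ} (hst : s ≤ t) (x : Euc d) : gridCell θ t x ⊆ gridCell θ s x := by
  intro y hy
  have : gridIdx θ t y = gridIdx θ t x := hy
  change gridIdx θ s y = gridIdx θ s x
  rw [gridIdx_ref θ hst, gridIdx_ref θ hst, this]

lemma gridCell_eq {t : ℕ} {x y : Euc d} (h : y ∈ gridCell θ t x) :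
    gridCell θ t y = gridCell θ t x := by
  have : gridIdx θ t y = gridIdx θ t x := h
  rw [gridCell, this]; rfl

lemma gridCell_subset (t : ℕ) (x : Euc d) : gridCell θ t x ⊆ closedBall x (2 ^ (-(t : ℝ))) := by
  intro y hy
  have : gridIdx θ t y = gridIdx θ t x := hy
  rw [mem_closedBall, dist_pi_le_iff (by positivity)]
  intro i
  have h1 := Int.abs_sub_lt_one_of_floor_eq_floor (congrFun this i)
  have h2 : (0 : ℝ) < 2 ^ t := by positivity
  rw [← mul_sub, abs_mul, abs_of_pos h2, add_sub_add_right_eq_sub] at h1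
  rw [Real.dist_eq, Real.rpow_neg (by norm_num), Real.rpow_natCast, ← one_div, le_div_iff₀ h2,
    mul_comm]
  exact h1.le

lemma subset_gridCell {t k : ℕ} {x : Euc d}
    (h : ∀ i, (2 ^ k)⁻¹ ≤ Int.fract ((2 : ℝ) ^ t * (x i + θ)) ∧
      Int.fract ((2 : ℝ) ^ t * (x i + θ)) < 1 - (2 ^ k)⁻¹) :
    closedBall x (2 ^ (-((t + k : ℕ) : ℝ))) ⊆ gridCell θ t x := by
  intro y hy
  rw [mem_closedBall, dist_pi_le_iff (by positivity)] at hy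
  change gridIdx θ t y = gridIdx θ t x
  ext i
  have h1 := hy i
  have h2 : (0 : ℝ) < 2 ^ t := by positivity
  rw [Real.dist_eq, Real.rpow_neg (by norm_num), Real.rpow_natCast, pow_add, mul_inv, abs_le] at h1
  have h3 := mul_le_mul_of_nonneg_left h1.1 h2.le
  have h4 := mul_le_mul_of_nonneg_left h1.2 h2.le
  rw [mul_neg, mul_inv_cancel_left₀ h2.ne'] at h3
  rw [mul_inv_cancel_left₀ h2.ne'] at h4
  obtain ⟨h5, h6⟩ := h i
  rw [Int.fract] at h5 h6
  simp only [gridIdx]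
  rw [Int.floor_eq_iff]
  constructor <;> nlinarith

/-- For almost every shift, almost every point is rarely close to the boundary of its cell. -/
lemma exists_shift (μ : Measure (Euc d)) [SFinite μ] : ∃ θ : ℝ, ∀ᵐ x ∂μ, ∀ q : ℝ, 0 < q →
    ∃ k : ℕ, FreqLE {t : ℕ | ¬ closedBall x (2 ^ (-((t + k : ℕ) : ℝ))) ⊆ gridCell θ t x} q := by
  set G := {z : ℝ | ∀ k : ℕ, FreqLE {t : ℕ | Int.fract ((2 : ℝ) ^ t * z) < (2 ^ k)⁻¹ ∨
    1 - (2 ^ k)⁻¹ ≤ Int.fract ((2 : ℝ) ^ t * z)} (3 * (2 ^ k)⁻¹)} with hG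
  set N := toMeasurable volume Gᶜ with hN
  have hN0 : volume N = 0 := by rw [hN, measure_toMeasurable]; exact ae_freq_fract
  have hNm : MeasurableSet N := measurableSet_toMeasurable _ _
  have h1 : ∀ᵐ z ∂(μ.prod (volume : Measure ℝ)), ∀ i : Fin d, z.1 i + z.2 ∉ N := by
    refine (Measure.ae_prod_iff_ae_ae ?_).2 ?_
    · have : {z : Euc d × ℝ | ∀ i : Fin d, z.1 i + z.2 ∉ N} =
          ⋂ i, (fun z : Euc d × ℝ => z.1 i + z.2) ⁻¹' Nᶜ := by ext; simp
      rw [this]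
      exact MeasurableSet.iInter fun i =>
        (show Measurable fun z : Euc d × ℝ => z.1 i + z.2 by fun_prop) hNm.compl
    · filter_upwards with x
      refine ae_all_iff.2 fun i => ?_
      have := (measurePreserving_add_left (volume : Measure ℝ) (x i)).quasiMeasurePreserving.ae
        (p := fun z => z ∉ N) (by simpa [ae_iff] using hN0)
      exact this
  have h2 := Measure.ae_ae_of_ae_prod ((Measure.measurePreserving_swap (μ := (volume : Measure ℝ)) (ν := μ)).quasiMeasurePreserving.ae h1)
  obtain ⟨θ, hθ⟩ := h2.exists
  refine ⟨θ, ?_⟩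
  filter_upwards [hθ] with x hx q hq
  have hxG : ∀ i, x i + θ ∈ G := fun i => by
    by_contra h
    exact hx i (subset_toMeasurable _ _ h)
  obtain ⟨k, hk⟩ : ∃ k : ℕ, d * (3 * ((2 : ℝ) ^ k)⁻¹) ≤ q := by
    obtain ⟨k, hk⟩ := exists_le_two_pow (d * 3 / q)
    refine ⟨k, ?_⟩
    rw [div_le_iff₀ hq] at hk
    rw [← mul_assoc, ← div_eq_mul_inv, div_le_iff₀ (by positivity)]
    linarith
  refine ⟨k, (FreqLE.iUnion (Finset.univ : Finset (Fin d)) fun i _ => hxG i k).mono ?_ (by simpa using hk)⟩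
  intro t ht
  by_contra hcon
  refine ht (subset_gridCell θ fun i => ?_)
  simp only [Finset.mem_univ, iUnion_true, mem_iUnion, mem_ofPred_eq, not_exists, not_or, not_lt,
    not_le] at hcon
  exact hcon i

end grid

/-! ### Masses of grid cells -/

section gridmass
variable {d : ℕ} (μ : Measure (Euc d)) [IsProbabilityMeasure μ] (θ : ℝ)

/-- The mass of the cell of side `2 ^ (-t)` around `x`. -/
noncomputable def cellMass (t : ℕ) (x : Euc d) : ℝ := μ.real (gridCell θ t x)

lemma ae_cellMass_pos : ∀ᵐ x ∂μ, ∀ t, 0 < cellMass μ θ t x := by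
  refine ae_all_iff.2 fun t => ?_
  have h : μ (⋃ j ∈ {j | μ (gridIdx (d := d) θ t ⁻¹' {j}) = 0}, gridIdx θ t ⁻¹' {j}) = 0 :=
    (measure_biUnion_null_iff (to_countable _)).2 fun j hj => hj
  refine measure_mono_null (fun x hx => ?_) h
  simp only [mem_compl_iff, mem_ofPred_eq, cellMass, not_lt] at hx
  have h0 : μ (gridCell θ t x) = 0 :=
    (measureReal_eq_zero_iff).1 (le_antisymm hx measureReal_nonneg)
  exact mem_biUnion (x := gridIdx θ t x) h0 rfl

lemma cellMass_anti {s t : ℕ} (hst : s ≤ t) (x : Euc d) : cellMass μ θ t x ≤ cellMass μ θ s x :=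
  measureReal_mono (gridCell_anti θ hst x)

omit [IsProbabilityMeasure μ] in
lemma cellMass_eq {t : ℕ} {x y : Euc d} (h : y ∈ gridCell θ t x) :
    cellMass μ θ t y = cellMass μ θ t x := by rw [cellMass, gridCell_eq θ h, cellMass]

/-- The law of large numbers for events described by the relative masses of the cells of times `t`
and `t + n`. -/
lemma grid_lln (n : ℕ) (H : ℝ → ℝ → Prop) : ∀ᵐ ω ∂μ, Tendsto (fun T : ℕ =>
    (∑ t ∈ Finset.range T,
      (({x | H (cellMass μ θ t x) (cellMass μ θ (t + n) x)}).indicator (fun _ => (1 : ℝ)) ω -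
        cellAvg μ (gridIdx θ t) {x | H (cellMass μ θ t x) (cellMass μ θ (t + n) x)}
          (gridIdx θ t ω))) / T) atTop (𝓝 0) := by
  refine lln_sets μ (fun t => gridIdx (d := d) θ t)
    (fun t j => measurable_gridIdx θ t (MeasurableSet.singleton _))
    (fun s t hst => ⟨fun m i => m i / 2 ^ (t - s), fun z => gridIdx_ref θ hst z⟩) n
    (fun t => {x | H (cellMass μ θ t x) (cellMass μ θ (t + n) x)})
    (fun t => {j | H (μ.real (gridIdx θ t ⁻¹' {fun i => j i / 2 ^ n}))
      (μ.real (gridIdx θ (t + n) ⁻¹' {j}))}) fun t => ?_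
  ext x
  have := gridIdx_ref θ (Nat.le_add_right t n) x
  rw [Nat.add_sub_cancel_left] at this
  simp only [mem_ofPred_eq, mem_preimage, cellMass, gridCell, this]

omit [IsProbabilityMeasure μ] in
lemma measurableSet_cellEvent (t n : ℕ) (H : ℝ → ℝ → Prop) :
    MeasurableSet {x | H (cellMass μ θ t x) (cellMass μ θ (t + n) x)} := by
  have : {x | H (cellMass μ θ t x) (cellMass μ θ (t + n) x)} =
    gridIdx θ (t + n) ⁻¹' {j | H (μ.real (gridIdx θ t ⁻¹' {fun i => j i / 2 ^ n}))
      (μ.real (gridIdx θ (t + n) ⁻¹' {j}))} := by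
    ext x
    have := gridIdx_ref θ (Nat.le_add_right t n) x
    rw [Nat.add_sub_cancel_left] at this
    simp only [mem_ofPred_eq, mem_preimage, cellMass, gridCell, this]
  rw [this]
  exact measurable_gridIdx θ (t + n) (to_countable _).measurableSet

/-- The property of the shift `θ` which makes the grid suitable for `μ`: around almost every point
most cells contain a ball of comparable size. -/
def GoodShift : Prop := ∀ᵐ x ∂μ, ∀ q : ℝ, 0 < q →
    ∃ k : ℕ, FreqLE {t : ℕ | ¬ closedBall x (2 ^ (-((t + k : ℕ) : ℝ))) ⊆ gridCell θ t x} q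

end gridmass

namespace QSS
variable {d : ℕ} (Q : QSS d) {θ : ℝ}

lemma cell_doubling (hθ : GoodShift Q.μ θ) : ∀ᵐ x ∂Q.μ, ∀ j₀ : ℕ, ∀ q : ℝ, 0 < q →
    ∃ M : ℝ, 0 < M ∧ FreqLE {t : ℕ | M * cellMass Q.μ θ t x <
      Q.μ.real (closedBall x (2 ^ ((j₀ : ℝ) - t)))} q := by
  filter_upwards [hθ, Q.ball_doubling] with x h1 h2 j₀ q hq
  obtain ⟨k, hk⟩ := h1 (q / 2) (by positivity)
  obtain ⟨M, hM, hM2⟩ := h2 j₀ k (q / 2) (by positivity)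
  refine ⟨M, hM, (hk.union hM2).mono (fun t ht => ?_) (by linarith)⟩
  by_contra hcon
  simp only [mem_union, mem_ofPred_eq, not_or, not_not, not_lt] at hcon ht
  refine absurd (hcon.2.trans ?_) ht.not_ge
  exact mul_le_mul_of_nonneg_left (measureReal_mono hcon.1) hM.le

open Classical in
/-- The growth of `-log` of the masses of the cells around a typical point. -/
lemma cell_growth (hθ : GoodShift Q.μ θ) {β : ℝ} (hβ : 0 < β)
    (h : mdim Q.μ < ENNReal.ofReal β) :
    ∀ᵐ x ∂Q.μ, ∀ᶠ T : ℕ in atTop, -Real.logb 2 (cellMass Q.μ θ T x) ≤ β * T := by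
  obtain ⟨β₁, hβ₁, h1, h2⟩ : ∃ β₁ : ℝ, 0 < β₁ ∧ β₁ < β ∧ mdim Q.μ < ENNReal.ofReal β₁ := by
    have hfin : mdim Q.μ ≠ ∞ := h.ne_top
    have hlt : (mdim Q.μ).toReal < β := by
      rw [← ENNReal.toReal_ofReal hβ.le]
      exact (ENNReal.toReal_lt_toReal hfin ENNReal.ofReal_ne_top).2 h
    have h0 : 0 ≤ (mdim Q.μ).toReal := ENNReal.toReal_nonneg
    refine ⟨((mdim Q.μ).toReal + β) / 2, by positivity, by linarith, ?_⟩
    conv_lhs => rw [← ENNReal.ofReal_toReal hfin]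
    exact (ENNReal.ofReal_lt_ofReal_iff (by positivity)).2 (by linarith)
  filter_upwards [hθ, Q.eventually_neg_log_le hβ₁ h2, ae_closedBall_pos (μ := Q.μ)]
    with x hx hgrow hpos
  set a : ℝ := (β - β₁) / (2 * β₁) with ha
  have ha0 : 0 < a := div_pos (by linarith) (by positivity)
  have ha1 : β₁ * (1 + a) = (β₁ + β) / 2 := by rw [ha]; field_simp; ring
  set q : ℝ := a / (2 * (1 + a)) with hq
  have hq0 : 0 < q := by positivity
  have hq1 : (1 - q) * (1 + a) = 1 + a / 2 := by rw [hq]; field_simp; ring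
  have hq2 : q < 1 := by rw [hq, div_lt_one (by positivity)]; linarith
  obtain ⟨k, hk⟩ := hx q hq0
  have hceil : Tendsto (fun T : ℕ => ⌈(1 + a) * T⌉₊) atTop atTop := by
    refine tendsto_atTop_mono (fun T => ?_) tendsto_id
    have : (T : ℝ) ≤ ⌈(1 + a) * T⌉₊ :=
      le_trans (by nlinarith [Nat.cast_nonneg (α := ℝ) T]) (Nat.le_ceil _)
    exact_mod_cast this
  obtain ⟨N₀, hN₀⟩ := eventually_atTop.1 hgrow
  obtain ⟨N₁, hN₁⟩ := exists_nat_ge (β₁ * (1 + k) / ((β - β₁) / 2))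
  filter_upwards [hceil.eventually hk, eventually_ge_atTop 1, eventually_ge_atTop N₀,
    eventually_ge_atTop N₁] with T hT hT1 hT2 hT3
  have hTpos : (0 : ℝ) < T := by exact_mod_cast hT1
  set N := ⌈(1 + a) * T⌉₊ with hN
  have hNle : (1 + a) * T ≤ N := Nat.le_ceil _
  have hNlt : (N : ℝ) < (1 + a) * T + 1 := Nat.ceil_lt_add_one (by positivity)
  obtain ⟨T', hT'1, hT'2, hT'3⟩ : ∃ T', T ≤ T' ∧ T' < N ∧
      closedBall x (2 ^ (-((T' + k : ℕ) : ℝ))) ⊆ gridCell θ T' x := by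
    by_contra hcon
    push Not at hcon
    have hsub : Finset.Ico T N ⊆ (Finset.range N).filter (fun t => t ∈
        {t : ℕ | ¬ closedBall x (2 ^ (-((t + k : ℕ) : ℝ))) ⊆ gridCell θ t x}) := by
      intro t ht
      rw [Finset.mem_Ico] at ht
      simp only [Finset.mem_filter, Finset.mem_range, mem_ofPred_eq]
      exact ⟨ht.2, hcon t ht.1 ht.2⟩
    have h3 := Finset.card_le_card hsub
    rw [Nat.card_Ico] at h3
    simp only [mem_ofPred_eq] at h3
    have h4 : (N : ℝ) - T ≤ q * N := by
      refine le_trans ?_ hT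
      refine le_trans ?_ ((Nat.cast_le.2 h3).trans (le_of_eq (by congr!)))
      rw [← Nat.cast_sub (by
        have : (T : ℝ) ≤ N := le_trans (by nlinarith) hNle
        exact_mod_cast this)]
    nlinarith [mul_le_mul_of_nonneg_left hNle (by linarith : 0 ≤ 1 - q)]
  have hb := hN₀ (T' + k) (by omega)
  have hball : 0 < Q.μ.real (closedBall x (2 ^ (-((T' + k : ℕ) : ℝ)))) :=
    ENNReal.toReal_pos (hpos _ (by positivity)).ne' (measure_ne_top _ _)
  have hle : Q.μ.real (closedBall x (2 ^ (-((T' + k : ℕ) : ℝ)))) ≤ cellMass Q.μ θ T x :=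
    (measureReal_mono hT'3).trans (cellMass_anti Q.μ θ hT'1 x)
  have hlog := Real.logb_le_logb_of_le (b := 2) (by norm_num) hball hle
  have hT'4 : (T' : ℝ) < N := by exact_mod_cast hT'2
  push_cast at hb hlog
  have h5 : β₁ * (T' + k) ≤ β₁ * ((1 + a) * T + 1 + k) := by gcongr; linarith
  have h6 : β₁ * (1 + k) ≤ (β - β₁) / 2 * T := by
    have : β₁ * (1 + k) / ((β - β₁) / 2) ≤ T := hN₁.trans (by exact_mod_cast hT3)
    rwa [div_le_iff₀' (by linarith)] at this
  have h7 : β₁ * ((1 + a) * T + 1 + k) = (β₁ * (1 + a)) * T + β₁ * (1 + k) := by ring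
  rw [ha1] at h7
  linarith

end QSS

/-! ### Growth of cell masses over a bounded number of scales -/

namespace QSS
variable {d : ℕ} (Q : QSS d) {θ : ℝ}

/-- At a doubling time `t`, few points of the cell around `x` lie in subcells of time `t + n` whose
relative mass exceeds `2 ^ (-n s')`, for `s'` below the Frostman exponent `s`. -/
lemma cellAvg_heavy_le {s s' C' M δ₀ : ℝ} {t n : ℕ} {x : Euc d} (hC' : 0 < C') (hM : 0 < M)
    (hδ₀ : 0 ≤ δ₀) {ρ : Measure (Euc d)} {F : Set (Euc d)}
    (hρ1 : ∀ A ⊆ gridCell θ t x, MeasurableSet A →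
      Q.μ A ≤ ρ A + ENNReal.ofReal δ₀ * Q.μ F)
    (hρ2 : ∀ y r, 0 < r → ρ (closedBall y r) ≤
      ENNReal.ofReal (C' * (r / 2 ^ (-(t : ℝ))) ^ s) * Q.μ F)
    (hF : Q.μ.real F ≤ M * cellMass Q.μ θ t x) :
    cellAvg Q.μ (gridIdx θ t)
      {x | 2 ^ (-(n * s' : ℝ)) * cellMass Q.μ θ t x < cellMass Q.μ θ (t + n) x} (gridIdx θ t x) ≤
      C' * M * 2 ^ (-(n * (s - s') : ℝ)) + δ₀ * M := by
  set Y := {x | 2 ^ (-(n * s' : ℝ)) * cellMass Q.μ θ t x < cellMass Q.μ θ (t + n) x} with hY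
  have hYm : MeasurableSet Y := measurableSet_cellEvent Q.μ θ t n
    (fun u v => 2 ^ (-(n * s' : ℝ)) * u < v)
  set A := Y ∩ gridCell θ t x with hA
  have hAm : MeasurableSet A := hYm.inter (measurableSet_gridCell θ t x)
  set J := gridIdx (d := d) θ (t + n) with hJ
  have hAeq : A = ⋃ j ∈ J '' A, J ⁻¹' {j} := by
    ext z
    simp only [mem_iUnion, mem_image, exists_prop, mem_preimage, mem_singleton_iff]
    constructor
    · exact fun hz => ⟨J z, ⟨z, hz, rfl⟩, rfl⟩
    · rintro ⟨j, ⟨y, hy, rfl⟩, hz⟩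
      have h1 : z ∈ gridCell θ (t + n) y := hz
      have h2 := gridCell_anti θ (Nat.le_add_right t n) y h1
      have hyc : y ∈ gridCell θ t x := hy.2
      refine ⟨?_, by rw [← gridCell_eq θ hyc]; exact h2⟩
      have h3 : 2 ^ (-(n * s' : ℝ)) * cellMass Q.μ θ t y < cellMass Q.μ θ (t + n) y := hy.1
      change 2 ^ (-(n * s' : ℝ)) * cellMass Q.μ θ t z < cellMass Q.μ θ (t + n) z
      rwa [cellMass_eq Q.μ θ h1, cellMass_eq Q.μ θ h2]
  set c : ℝ := C' * M * 2 ^ (-(n * (s - s') : ℝ)) with hc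
  have hc0 : 0 < c := by positivity
  have hFe : Q.μ F ≤ ENNReal.ofReal (M * cellMass Q.μ θ t x) := by
    rw [← ofReal_measureReal]; exact ENNReal.ofReal_le_ofReal hF
  have hcell : ∀ j ∈ J '' A, ρ (J ⁻¹' {j}) ≤ ENNReal.ofReal c * Q.μ (J ⁻¹' {j}) := by
    rintro j ⟨y, hy, rfl⟩
    have hsub : J ⁻¹' {J y} ⊆ closedBall y (2 ^ (-((t + n : ℕ) : ℝ))) :=
      gridCell_subset θ (t + n) y
    refine (measure_mono hsub).trans ((hρ2 _ _ (by positivity)).trans ?_)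
    have h3 : 2 ^ (-(n * s' : ℝ)) * cellMass Q.μ θ t y < cellMass Q.μ θ (t + n) y := hy.1
    rw [cellMass_eq Q.μ θ hy.2] at h3
    have e1 : ((2 : ℝ) ^ (-((t + n : ℕ) : ℝ)) / 2 ^ (-(t : ℝ))) ^ s = 2 ^ (-(n * s : ℝ)) := by
      rw [← Real.rpow_sub (by norm_num), ← Real.rpow_mul (by norm_num)]
      congr 1; push_cast; ring
    have e2 : (2 : ℝ) ^ (-(n * s : ℝ)) = 2 ^ (-(n * (s - s') : ℝ)) * 2 ^ (-(n * s' : ℝ)) := by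
      rw [← Real.rpow_add (by norm_num)]; congr 1; ring
    have e3 : Q.μ (J ⁻¹' {J y}) = ENNReal.ofReal (cellMass Q.μ θ (t + n) y) := by
      rw [cellMass, ofReal_measureReal]; rfl
    rw [e1, e3]
    refine (mul_le_mul_right hFe _).trans ?_
    rw [← ENNReal.ofReal_mul (by positivity), ← ENNReal.ofReal_mul hc0.le]
    refine ENNReal.ofReal_le_ofReal ?_
    rw [e2, hc]
    calc C' * (2 ^ (-(n * (s - s') : ℝ)) * 2 ^ (-(n * s' : ℝ))) * (M * cellMass Q.μ θ t x)
        = (C' * M * 2 ^ (-(n * (s - s') : ℝ))) * (2 ^ (-(n * s' : ℝ)) * cellMass Q.μ θ t x) := by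
          ring
      _ ≤ _ := by gcongr
  have hρA : ρ A ≤ ENNReal.ofReal c * Q.μ A := by
    have hcount : (J '' A).Countable := to_countable _
    calc ρ A = ρ (⋃ j ∈ J '' A, J ⁻¹' {j}) := by rw [← hAeq]
      _ ≤ ∑' j : J '' A, ρ (J ⁻¹' {(j : Fin d → ℤ)}) := measure_biUnion_le _ hcount _
      _ ≤ ∑' j : J '' A, ENNReal.ofReal c * Q.μ (J ⁻¹' {(j : Fin d → ℤ)}) :=
        ENNReal.tsum_le_tsum fun j => hcell j j.2
      _ = ENNReal.ofReal c * Q.μ (⋃ j ∈ J '' A, J ⁻¹' {j}) := by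
        rw [ENNReal.tsum_mul_left, measure_biUnion hcount]
        · intro i _ j _ hij
          exact Disjoint.preimage _ (by simpa using hij)
        · exact fun j _ => measurable_gridIdx θ (t + n) (MeasurableSet.singleton j)
      _ = _ := by rw [← hAeq]
  have hreal : Q.μ.real A ≤ (c + δ₀ * M) * cellMass Q.μ θ t x := by
    have hm0 : 0 ≤ cellMass Q.μ θ t x := measureReal_nonneg
    refine ENNReal.toReal_le_of_le_ofReal (by positivity) ?_
    refine (hρ1 A inter_subset_right hAm).trans ?_
    rw [add_mul, ENNReal.ofReal_add (by positivity) (by positivity)]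
    refine add_le_add (hρA.trans ?_) ?_
    · rw [ENNReal.ofReal_mul hc0.le]
      refine mul_le_mul_right ?_ _
      rw [cellMass, ofReal_measureReal]
      exact measure_mono inter_subset_right
    · rw [mul_assoc, ENNReal.ofReal_mul hδ₀]
      exact mul_le_mul_right hFe _
  unfold cellAvg
  refine div_le_of_le_mul₀ measureReal_nonneg (by positivity) ?_
  exact hreal

/-- For `s'` below the dimension of `μ`, the mass of cells around a typical point rarely decreases
by less than a factor `2 ^ (-n s')` over `n` generations. -/
lemma freq_heavy_le (hθ : GoodShift Q.μ θ) {s s' : ℝ} (hs0 : 0 < s)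
    (hs : ENNReal.ofReal s < mdim Q.μ) (hss : s' < s) :
    ∀ᵐ x ∂Q.μ, ∀ q : ℝ, 0 < q → ∃ N : ℕ, ∀ n ≥ N,
      FreqLE {t : ℕ | 2 ^ (-(n * s' : ℝ)) * cellMass Q.μ θ t x < cellMass Q.μ θ (t + n) x} q := by
  have hlln := ae_all_iff.2 fun n : ℕ => grid_lln Q.μ θ n
    (fun u v => 2 ^ (-(n * s' : ℝ)) * u < v)
  filter_upwards [hlln, Q.cell_doubling hθ] with x hx hdoub q hq
  obtain ⟨j₀, hj₀⟩ := exists_le_two_pow (1 + 2 * Q.C)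
  obtain ⟨M, hM, hfreq⟩ := hdoub j₀ (q / 4) (by positivity)
  obtain ⟨C', hC', hloc⟩ := Q.local_frostman (Or.inr ⟨hs0, hs⟩)
    (δ := ENNReal.ofReal (q / 8 / M)) (ENNReal.ofReal_pos.2 (by positivity))
  have htend : Tendsto (fun n : ℕ => C' * M * (2 : ℝ) ^ (-(n * (s - s') : ℝ))) atTop
      (𝓝 (C' * M * 0)) := by
    refine Tendsto.const_mul _ ?_
    have h1 : ∀ n : ℕ, (2 : ℝ) ^ (-(n * (s - s') : ℝ)) = (2 ^ (-(s - s'))) ^ n := fun n => by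
      rw [← Real.rpow_natCast, ← Real.rpow_mul (by norm_num)]; congr 1; ring
    simp_rw [h1]
    exact tendsto_pow_atTop_nhds_zero_of_lt_one (by positivity)
      (Real.rpow_lt_one_of_one_lt_of_neg (by norm_num) (by linarith))
  rw [mul_zero] at htend
  obtain ⟨N, hN⟩ := eventually_atTop.1 (htend.eventually (gt_mem_nhds (show 0 < q / 8 by positivity)))
  refine ⟨N, fun n hn => ?_⟩
  have hcell : FreqLE {t : ℕ | q / 4 < cellAvg Q.μ (gridIdx θ t)
      {x | 2 ^ (-(n * s' : ℝ)) * cellMass Q.μ θ t x < cellMass Q.μ θ (t + n) x}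
        (gridIdx θ t x)} (q / 4) := by
    refine hfreq.mono (fun t ht => ?_) le_rfl
    by_contra hcon
    simp only [mem_ofPred_eq, not_lt] at hcon ht
    have hC := Q.C_pos
    have ht0 : (2 : ℝ) ^ (-(t : ℝ)) ≤ 1 :=
      Real.rpow_le_one_of_one_le_of_nonpos (by norm_num) (by simp)
    obtain ⟨ρ, hρ1, hρ2⟩ := hloc (2 ^ (-(t : ℝ))) (by positivity) ht0 (gridCell θ t x)
      (closedBall x (2 ^ ((j₀ : ℝ) - t))) isClosed_closedBall.measurableSet (by
        intro e he
        refine closedBall_subset_closedBall' ?_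
        have he' := gridCell_subset θ t x he
        rw [mem_closedBall] at he'
        calc 2 * Q.C * 2 ^ (-(t : ℝ)) + dist e x
            ≤ 2 * Q.C * 2 ^ (-(t : ℝ)) + 2 ^ (-(t : ℝ)) := by gcongr
          _ = (1 + 2 * Q.C) * 2 ^ (-(t : ℝ)) := by ring
          _ ≤ 2 ^ j₀ * 2 ^ (-(t : ℝ)) := by gcongr
          _ = 2 ^ ((j₀ : ℝ) - t) := by
            rw [← Real.rpow_natCast, ← Real.rpow_add (by norm_num)]; rfl)
    have h1 := Q.cellAvg_heavy_le (s' := s') (n := n) hC' hM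
      (show 0 ≤ q / 8 / M by positivity) hρ1 hρ2 hcon
    rw [div_mul_cancel₀ _ hM.ne'] at h1
    have h2 := hN n hn
    linarith
  have h3 := freq_of_cellAvg (c := fun t ω => cellAvg Q.μ (gridIdx θ t)
      {x | 2 ^ (-(n * s' : ℝ)) * cellMass Q.μ θ t x < cellMass Q.μ θ (t + n) x}
        (gridIdx θ t ω)) (ω := x) (hx n)
    (fun t => cellAvg_le_one Q.μ (gridIdx θ t) _ _) (δ := q / 4) (q := q / 4)
    (ε := q / 4) (by positivity) (by positivity) hcell
  exact h3.mono (fun t ht => ht) (by linarith)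

/-- The mass of cells around a typical point rarely decreases by more than a factor
`2 ^ (-n (α + κ))` over `n` generations, where `α` is the dimension of `μ`. -/
lemma freq_light_le (hθ : GoodShift Q.μ θ) {κ q : ℝ} (hκ : 0 < κ) (hq : 0 < q) :
    ∀ᵐ x ∂Q.μ, ∃ N : ℕ, ∀ n ≥ N,
      FreqLE {t : ℕ | cellMass Q.μ θ (t + n) x <
        2 ^ (-(n * ((mdim Q.μ).toReal + κ) : ℝ)) * cellMass Q.μ θ t x} q := by
  set α := (mdim Q.μ).toReal with hα
  have hα0 : 0 ≤ α := ENNReal.toReal_nonneg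
  have hfin : mdim Q.μ ≠ ∞ := (Q.mdim_le.trans_lt (ENNReal.natCast_lt_top d)).ne
  have hαe : mdim Q.μ = ENNReal.ofReal α := (ENNReal.ofReal_toReal hfin).symm
  have hκq : 0 < κ * q := by positivity
  set q₁ : ℝ := κ * q / (4 * (α + 1)) with hq₁
  have hq₁0 : 0 < q₁ := by positivity
  have hq₁α : α * q₁ ≤ κ * q / 4 := by
    rw [hq₁, mul_div_assoc', div_le_div_iff₀ (by positivity) (by positivity)]
    nlinarith
  -- an exponent slightly below the dimension (zero if the dimension is zero)
  obtain ⟨s', hs'0, hs'1, hs'2, hheavy⟩ : ∃ s' : ℝ, 0 ≤ s' ∧ s' ≤ α ∧ α - s' ≤ κ * q / 4 ∧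
      ∀ᵐ x ∂Q.μ, ∃ N : ℕ, ∀ n ≥ N, FreqLE {t : ℕ | 2 ^ (-(n * s' : ℝ)) * cellMass Q.μ θ t x <
        cellMass Q.μ θ (t + n) x} q₁ := by
    rcases hα0.eq_or_lt with h0 | h0
    · refine ⟨0, le_rfl, hα0, by rw [← h0]; linarith, Eventually.of_forall fun x => ⟨0, fun n _ => ?_⟩⟩
      refine Eventually.of_forall fun T => ?_
      rw [Finset.filter_false_of_mem]
      · simp; positivity
      · intro t _ ht
        simp only [mul_zero, neg_zero, Real.rpow_zero, one_mul, mem_ofPred_eq] at ht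
        exact absurd (cellMass_anti Q.μ θ (Nat.le_add_right t n) x) (not_le.2 ht)
    · set s' := max (α / 2) (α - κ * q / 4) with hs'
      have h1 : s' < α := max_lt (by linarith) (by linarith)
      have h2 : α / 2 ≤ s' := le_max_left _ _
      have h3 : α - κ * q / 4 ≤ s' := le_max_right _ _
      refine ⟨s', by linarith, h1.le, by linarith, ?_⟩
      filter_upwards [Q.freq_heavy_le hθ (s := (s' + α) / 2) (s' := s') (by linarith) (by
        rw [hαe]; exact (ENNReal.ofReal_lt_ofReal_iff h0).2 (by linarith)) (by linarith)]
        with x hx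
      exact hx q₁ hq₁0
  have hgrow := Q.cell_growth hθ (β := α + κ * q / 4) (by positivity) (by
    rw [hαe]; exact (ENNReal.ofReal_lt_ofReal_iff (by positivity)).2 (by linarith))
  filter_upwards [hheavy, hgrow, ae_cellMass_pos Q.μ θ] with x ⟨N, hN⟩ hx hpos
  refine ⟨max N 1, fun n hn => ?_⟩
  have hn0 : (0 : ℝ) < n := by exact_mod_cast (le_max_right N 1).trans hn
  have hlog : ∀ (a : ℝ) (u v : ℝ), 0 < u → 0 < v → (2 ^ (-a) * u < v ↔
      -Real.logb 2 v - -Real.logb 2 u < a) := by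
    intro a u v hu hv
    rw [← Real.logb_lt_logb_iff (b := 2) (by norm_num) (by positivity) hv,
      Real.logb_mul (by positivity) hu.ne', Real.logb_rpow (by norm_num) (by norm_num)]
    constructor <;> intro h <;> linarith
  have hlog' : ∀ (a : ℝ) (u v : ℝ), 0 < u → 0 < v → (v < 2 ^ (-a) * u ↔
      a < -Real.logb 2 v - -Real.logb 2 u) := by
    intro a u v hu hv
    rw [← Real.logb_lt_logb_iff (b := 2) (by norm_num) hv (by positivity),
      Real.logb_mul (by positivity) hu.ne', Real.logb_rpow (by norm_num) (by norm_num)]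
    constructor <;> intro h <;> linarith
  refine (freq_tele (ℓ := fun t => -Real.logb 2 (cellMass Q.μ θ t x)) (fun t => ?_) (fun s t hst => ?_)
    hx n (a := n * s') (b := n * (α + κ)) (q₁ := q₁) (q := q) (by positivity) ?_ ?_ ?_).mono
      (fun t ht => ?_) le_rfl
  · have := Real.logb_nonpos (b := 2) (by norm_num) (hpos t).le measureReal_le_one
    change 0 ≤ -Real.logb 2 (cellMass Q.μ θ t x)
    linarith
  · have := Real.logb_le_logb_of_le (b := 2) (by norm_num) (hpos t) (cellMass_anti Q.μ θ hst x)
    change -Real.logb 2 (cellMass Q.μ θ s x) ≤ -Real.logb 2 (cellMass Q.μ θ t x)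
    linarith
  · exact mul_lt_mul_of_pos_left (by linarith) hn0
  · exact (hN n ((le_max_left _ _).trans hn)).mono
      (fun t ht => (hlog _ _ _ (hpos t) (hpos _)).2 ht) le_rfl
  · have h1 : s' * q₁ ≤ κ * q / 4 := (mul_le_mul_of_nonneg_right hs'1 hq₁0.le).trans hq₁α
    have h2 : κ * q ≤ (α + κ - s') * q := mul_le_mul_of_nonneg_right (by linarith) hq.le
    have : (α + κ * q / 4) - s' + s' * q₁ < (α + κ - s') * q := by linarith
    nlinarith [mul_lt_mul_of_pos_left this hn0]
  · exact (hlog' _ _ _ (hpos t) (hpos _)).1 ht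

end QSS

/-! ### Upper bound for the dimension of tangent measures -/

namespace QSS
variable {d : ℕ} (Q : QSS d) {θ : ℝ}

lemma le_rescPM {s v : ℝ} {x : Euc d} (hx : ∀ r > 0, 0 < Q.μ (closedBall x r))
    {A D : Set (Euc d)} (hA : MeasurableSet A) (hD : D ⊆ closedBall x (2 ^ (-s)))
    (hDA : ∀ y ∈ D, (2 : ℝ) ^ s • (y - x) ∈ A)
    (hv : v * Q.μ.real (closedBall x (2 ^ (-s))) ≤ Q.μ.real D) :
    ENNReal.ofReal v ≤ (rescPM Q.μ x s : Measure (Euc d)) A := by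
  have hb : 0 < Q.μ.real (closedBall x (2 ^ (-s))) :=
    ENNReal.toReal_pos (hx _ (by positivity)).ne' (measure_ne_top _ _)
  rw [rescPM_coe hx, resc_apply s hA, ← ofReal_measureReal (s := closedBall x (2 ^ (-s))),
    ← ENNReal.ofReal_inv_of_pos hb]
  have hsub : D ⊆ closedBall x ((2 : ℝ) ^ (-s)) ∩ {y | (2 : ℝ) ^ s • (y - x) ∈ A} :=
    fun y hy => ⟨hD hy, hDA y hy⟩
  refine le_trans ?_ (mul_le_mul_right (measure_mono hsub) _)
  rw [← ofReal_measureReal (s := D), ← ENNReal.ofReal_mul (by positivity)]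
  refine ENNReal.ofReal_le_ofReal ?_
  rw [inv_mul_eq_div, le_div_iff₀ hb]
  exact hv

/-- If at least half of the cell of time `t` around `x` consists of points whose cell of time
`t + n` is not too light, then the magnifications around time `t` have many heavy balls of radius
`2 ^ (-n)`. -/
lemma rescPM_heavy {s σ M : ℝ} {t n : ℕ} {x : Euc d}
    (hx : ∀ r > 0, 0 < Q.μ (closedBall x r)) (hM : 0 < M) (hst : s ≤ t)
    (hpos : 0 < cellMass Q.μ θ t x)
    (hdoub : Q.μ.real (closedBall x (2 ^ (-s))) ≤ M * cellMass Q.μ θ t x)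
    (hhalf : cellAvg Q.μ (gridIdx θ t) {x | cellMass Q.μ θ (t + n) x <
        2 ^ (-(n * σ : ℝ)) * cellMass Q.μ θ t x} (gridIdx θ t x) ≤ 1 / 2) :
    rescPM Q.μ x s ∈ {η : ProbabilityMeasure (Euc d) | ENNReal.ofReal (1 / (2 * M)) ≤
      (η : Measure (Euc d)) {y | ENNReal.ofReal (1 / M * (2 : ℝ) ^ (-(n * σ : ℝ))) ≤
        (η : Measure (Euc d)) (closedBall y (2 ^ (-(n : ℝ))))}} := by
  set Y := {x | cellMass Q.μ θ (t + n) x < 2 ^ (-(n * σ : ℝ)) * cellMass Q.μ θ t x} with hY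
  have hYm : MeasurableSet Y := measurableSet_cellEvent Q.μ θ t n
    (fun u v => v < 2 ^ (-(n * σ : ℝ)) * u)
  have hts : (2 : ℝ) ^ (-(t : ℝ)) ≤ 2 ^ (-s) :=
    Real.rpow_le_rpow_of_exponent_le (by norm_num) (by linarith)
  have hDB : gridCell θ t x ⊆ closedBall x (2 ^ (-s)) :=
    (gridCell_subset θ t x).trans (closedBall_subset_closedBall hts)
  rw [mem_ofPred_eq]
  refine Q.le_rescPM hx (D := gridCell θ t x \ Y) ?_ (sdiff_subset.trans hDB) ?_ ?_
  · exact measurableSet_le measurable_const (measurable_measure_closedBall _ _)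
  · intro z hz
    refine Q.le_rescPM hx (D := gridCell θ (t + n) z) isClosed_closedBall.measurableSet ?_ ?_ ?_
    · refine (gridCell_anti θ (Nat.le_add_right t n) z).trans ?_
      rw [gridCell_eq θ hz.1]
      exact hDB
    · intro w hw
      have h1 := gridCell_subset θ (t + n) z hw
      rw [mem_closedBall, dist_eq_norm] at h1
      rw [mem_closedBall, dist_eq_norm, ← smul_sub, sub_sub_sub_cancel_right, norm_smul,
        Real.norm_of_nonneg (by positivity)]
      calc (2 : ℝ) ^ s * ‖w - z‖ ≤ 2 ^ s * 2 ^ (-((t + n : ℕ) : ℝ)) := by gcongr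
        _ = 2 ^ (s - (t + n)) := by
          rw [← Real.rpow_add (by norm_num)]; congr 1; push_cast; ring
        _ ≤ 2 ^ (-(n : ℝ)) := Real.rpow_le_rpow_of_exponent_le (by norm_num) (by linarith)
    · have h1 : 2 ^ (-(n * σ : ℝ)) * cellMass Q.μ θ t z ≤ cellMass Q.μ θ (t + n) z :=
        not_lt.1 hz.2
      rw [cellMass_eq Q.μ θ hz.1] at h1
      refine le_trans ?_ h1
      calc 1 / M * 2 ^ (-(n * σ : ℝ)) * Q.μ.real (closedBall x (2 ^ (-s)))
          ≤ 1 / M * 2 ^ (-(n * σ : ℝ)) * (M * cellMass Q.μ θ t x) := by gcongr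
        _ = _ := by field_simp
  · have h1 : Q.μ.real (Y ∩ gridCell θ t x) ≤ 1 / 2 * cellMass Q.μ θ t x := by
      exact (div_le_iff₀ hpos).1 hhalf
    have h2 : Q.μ.real (gridCell θ t x) = Q.μ.real (gridCell θ t x ∩ Y) +
        Q.μ.real (gridCell θ t x \ Y) := (measureReal_inter_add_sdiff hYm).symm
    rw [inter_comm] at h2
    change cellMass Q.μ θ t x = _ at h2
    calc 1 / (2 * M) * Q.μ.real (closedBall x (2 ^ (-s)))
        ≤ 1 / (2 * M) * (M * cellMass Q.μ θ t x) := by gcongr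
      _ = 1 / 2 * cellMass Q.μ θ t x := by field_simp
      _ ≤ _ := by linarith

/-- Almost surely all tangent distributions are carried by measures of dimension at most
`dim μ + κ`. -/
theorem tangent_upper {κ : ℝ} (hκ : 0 < κ) :
    ∀ᵐ x ∂Q.μ, ∀ P : Measure (ProbabilityMeasure (Euc d)), IsTangentDistribution Q.μ x P →
      ∀ᵐ η : ProbabilityMeasure (Euc d) ∂P,
        mdim η.toMeasure ≤ ENNReal.ofReal ((mdim Q.μ).toReal + κ) := by
  obtain ⟨θ, hθ⟩ := exists_shift Q.μ
  have hθ : GoodShift Q.μ θ := hθ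
  set σ := (mdim Q.μ).toReal + κ with hσ
  have hσ0 : 0 ≤ σ := add_nonneg ENNReal.toReal_nonneg hκ.le
  have hlight := ae_all_iff.2 fun m : ℕ =>
    Q.freq_light_le hθ hκ (q := 1 / ((m : ℝ) + 1)) (by positivity)
  have hlln := ae_all_iff.2 fun n : ℕ => grid_lln Q.μ θ n
    (fun u v => v < 2 ^ (-(n * σ : ℝ)) * u)
  filter_upwards [hlight, hlln, Q.cell_doubling hθ, ae_closedBall_pos (μ := Q.μ),
    ae_cellMass_pos Q.μ θ] with x hlight hlln hdoub hx hpos P hP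
  refine le_antisymm (ENNReal.le_of_forall_pos_le_add fun q hq _ => ?_) zero_le
  rw [zero_add]
  obtain ⟨m, hm⟩ := exists_nat_one_div_lt (show (0 : ℝ) < q / 5 from by positivity)
  set q' : ℝ := 1 / ((m : ℝ) + 1) with hq'
  have hq'0 : 0 < q' := by positivity
  obtain ⟨M, hM, hfreq⟩ := hdoub 1 q' hq'0
  obtain ⟨N, hN⟩ := hlight m
  set E : ℕ → Set (ProbabilityMeasure (Euc d)) := fun n =>
    {η : ProbabilityMeasure (Euc d) | ENNReal.ofReal (1 / (2 * M)) ≤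
      (η : Measure (Euc d)) {y | ENNReal.ofReal (1 / M * (2 : ℝ) ^ (-(n * σ : ℝ))) ≤
        (η : Measure (Euc d)) (closedBall y (2 ^ (-(n : ℝ))))}} with hE
  have hPE : ∀ n ≥ N, P (E n)ᶜ ≤ q := by
    intro n hn
    have h1 := cellAvg_of_freq (c := fun t ω => cellAvg Q.μ (gridIdx θ t)
      {x | cellMass Q.μ θ (t + n) x < 2 ^ (-(n * σ : ℝ)) * cellMass Q.μ θ t x}
        (gridIdx θ t ω)) (ω := x) (hlln n)
      (fun t => cellAvg_nonneg Q.μ (gridIdx θ t) _ _) (q := q') (ε := q') hq'0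
      ((hN n hn).mono (fun t ht => ht) le_rfl)
    have h2 := tangent_compl_le hx hP (isClosed_heavy (ENNReal.ofReal (1 / M * (2 : ℝ) ^ (-(n * σ : ℝ))))
      (ENNReal.ofReal (1 / (2 * M))) (2 ^ (-(n : ℝ)))) (q := q)
      (((hfreq.union h1).succ hq'0).mono (fun k hk => ?_) (by linarith))
    · exact h2.trans (by simp)
    · obtain ⟨s, hks, hsk, hbad⟩ := hk
      by_contra hcon
      simp only [mem_union, mem_ofPred_eq, not_or, not_lt] at hcon
      refine hbad (Q.rescPM_heavy (θ := θ) hx hM (t := k + 1) (by push_cast; exact hsk) (hpos _)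
        (le_trans ?_ hcon.1) hcon.2)
      refine measureReal_mono (closedBall_subset_closedBall ?_)
      exact Real.rpow_le_rpow_of_exponent_le (by norm_num) (by push_cast; linarith)
  have hsub : {η : ProbabilityMeasure (Euc d) | mdim η.toMeasure ≤ ENNReal.ofReal σ}ᶜ ⊆
      ⋃ i : ℕ, ⋂ n ≥ i, (E n)ᶜ := by
    intro η hη
    by_contra hcon
    refine hη (mdim_le_of_heavy (c₁ := 1 / M) (c₂ := ENNReal.ofReal (1 / (2 * M))) (by positivity)
      hσ0 (ENNReal.ofReal_pos.2 (by positivity)) ?_)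
    rw [frequently_atTop]
    intro i
    simp only [mem_iUnion, mem_iInter, not_exists, not_forall, mem_compl_iff, not_not] at hcon
    obtain ⟨n, hn, h⟩ := hcon i
    exact ⟨n, hn, h⟩
  refine (measure_mono hsub).trans ?_
  rw [Monotone.measure_iUnion]
  · refine iSup_le fun i => ?_
    exact (measure_mono (biInter_subset_of_mem (show max i N ≥ i from le_max_left _ _))).trans
      (hPE _ (le_max_right _ _))
  · intro i j hij
    exact biInter_subset_biInter_left fun n (hn : n ≥ j) => hij.trans hn

theorem tangentRegular : TangentRegular Q.μ := by
  set α := (mdim Q.μ).toReal with hα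
  have hα0 : 0 ≤ α := ENNReal.toReal_nonneg
  have hfin : mdim Q.μ ≠ ∞ := (Q.mdim_le.trans_lt (ENNReal.natCast_lt_top d)).ne
  have hαe : mdim Q.μ = ENNReal.ofReal α := (ENNReal.ofReal_toReal hfin).symm
  have hup := ae_all_iff.2 fun m : ℕ => Q.tangent_upper (κ := 1 / ((m : ℝ) + 1)) (by positivity)
  have hlow := ae_all_iff.2 fun m : ℕ => Q.tangent_lower (s := max 0 (α - 1 / ((m : ℝ) + 1))) (by
    rcases le_or_gt (α - 1 / ((m : ℝ) + 1)) 0 with h | h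
    · exact Or.inl (max_eq_left h)
    · rw [max_eq_right h.le]
      refine Or.inr ⟨h, ?_⟩
      have : (0 : ℝ) < 1 / ((m : ℝ) + 1) := by positivity
      rw [hαe]
      exact (ENNReal.ofReal_lt_ofReal_iff (by linarith)).2 (by linarith))
  have hlim := tendsto_one_div_add_atTop_nhds_zero_nat (𝕜 := ℝ)
  filter_upwards [hup, hlow] with x hx1 hx2 P hP
  have h1 := ae_all_iff.2 fun m => hx1 m P hP
  have h2 := ae_all_iff.2 fun m => hx2 m P hP
  filter_upwards [h1, h2] with η h1 h2
  rw [hαe]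
  refine le_antisymm ?_ ?_
  · refine ge_of_tendsto' (f := fun m : ℕ => ENNReal.ofReal (α + 1 / ((m : ℝ) + 1)))
      (x := (atTop : Filter ℕ)) ?_ h1
    have := (ENNReal.continuous_ofReal.tendsto (α + 0)).comp (hlim.const_add α)
    rwa [add_zero] at this
  · refine le_of_tendsto' (f := fun m : ℕ => ENNReal.ofReal (max 0 (α - 1 / ((m : ℝ) + 1))))
      (x := (atTop : Filter ℕ)) ?_ h2
    have h3 := (tendsto_const_nhds (x := (0 : ℝ))).max (hlim.const_sub α)
    rw [sub_zero, max_eq_right hα0] at h3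
    exact (ENNReal.continuous_ofReal.tendsto α).comp h3

end QSS

/-! ### Injective maps with controlled derivative expand balls -/

/-- An injective local diffeomorphism whose inverse derivative is bounded by `Λ` on a ball of radius
`r` moves points outside of this ball at least `r / Λ` away from the image of the centre. -/
lemma le_mul_dist_of_injOn {E : Type*} [NormedAddCommGroup E] [NormedSpace ℝ E]
    [FiniteDimensional ℝ E] [Nontrivial E] {f : E → E} {f' : E → (E ≃L[ℝ] E)} {U : Set E}
    (hinj : InjOn f U) {z w : E} {r Λ : ℝ} (hr : 0 < r) (hΛ : 0 ≤ Λ) (hzU : closedBall z r ⊆ U)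
    (hf : ∀ x ∈ closedBall z r, HasStrictFDerivAt f (f' x : E →L[ℝ] E) x)
    (hf' : ∀ x ∈ ball z r, ‖((f' x).symm : E →L[ℝ] E)‖ ≤ Λ)
    (hw : w ∈ U) (hzw : r ≤ dist w z) : r ≤ Λ * dist (f w) (f z) := by
  have : CompleteSpace E := FiniteDimensional.complete ℝ E
  have : ProperSpace E := FiniteDimensional.proper ℝ E
  have hcont : ContinuousOn f (closedBall z r) := fun x hx =>
    (hf x hx).hasFDerivAt.continuousAt.continuousWithinAt
  have hzz : z ∈ closedBall z r := mem_closedBall_self hr.le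
  -- `y` is a point of the sphere whose image is closest to `f z`
  obtain ⟨y, hy, hmin⟩ := (isCompact_sphere z r).exists_isMinOn
    (NormedSpace.sphere_nonempty.2 hr.le) (f := fun y => dist (f y) (f z))
    (fun x hx => Filter.Tendsto.dist (hcont.mono sphere_subset_closedBall x hx) tendsto_const_nhds)
  set R := dist (f y) (f z) with hR
  have hyc : y ∈ closedBall z r := sphere_subset_closedBall hy
  have hyz : y ≠ z := by
    rintro rfl
    rw [mem_sphere, dist_self] at hy
    exact hr.ne hy
  have hR0 : 0 < R := dist_pos.2 fun h => hyz (hinj (hzU hyc) (hzU hzz) h)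
  set V := f '' ball z r with hV
  have hVopen : IsOpen V := by
    rw [isOpen_iff_mem_nhds]
    rintro _ ⟨x, hx, rfl⟩
    rw [← (hf x (ball_subset_closedBall hx)).map_nhds_eq_of_equiv]
    exact image_mem_map (isOpen_ball.mem_nhds hx)
  have hsub : ball (f z) R ⊆ V := by
    refine IsPreconnected.subset_of_closure_inter_subset (convex_ball _ _).isPreconnected hVopen
      ⟨f z, mem_ball_self hR0, z, mem_ball_self hr, rfl⟩ ?_
    rintro b ⟨hb1, hb2⟩
    have hcl : closure V ⊆ f '' closedBall z r :=
      closure_minimal (image_mono ball_subset_closedBall)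
        ((isCompact_closedBall z r).image_of_continuousOn hcont).isClosed
    obtain ⟨x, hx, rfl⟩ := hcl hb1
    refine ⟨x, ?_, rfl⟩
    rw [mem_closedBall] at hx
    rw [mem_ball]
    refine lt_of_le_of_ne hx fun h => ?_
    have := hmin (show x ∈ sphere z r from h)
    rw [mem_ball] at hb2
    exact absurd this (not_le.2 hb2)
  have hwR : R ≤ dist (f w) (f z) := by
    by_contra hcon
    obtain ⟨x, hx, hxw⟩ := hsub (mem_ball.2 (not_le.1 hcon))
    have := hinj (hzU (ball_subset_closedBall hx)) hw hxw
    rw [this, mem_ball] at hx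
    linarith
  suffices h : r ≤ Λ * R from h.trans (by gcongr)
  by_contra hcon
  push Not at hcon
  set g := Function.invFunOn f (ball z r) with hg
  have hgV : ∀ b ∈ V, g b ∈ ball z r ∧ f (g b) = b := fun b hb =>
    ⟨Function.invFunOn_mem hb, Function.invFunOn_eq hb⟩
  have hgf : ∀ x ∈ ball z r, g (f x) = x := fun x hx =>
    hinj (hzU (ball_subset_closedBall (hgV _ ⟨x, hx, rfl⟩).1)) (hzU (ball_subset_closedBall hx))
      (hgV _ ⟨x, hx, rfl⟩).2
  have hgd : ∀ b ∈ V, HasFDerivAt g ((f' (g b)).symm : E →L[ℝ] E) b := by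
    intro b hb
    obtain ⟨hb1, hb2⟩ := hgV b hb
    have hs := hf (g b) (ball_subset_closedBall hb1)
    refine HasFDerivAt.of_local_left_inverse ?_ hs.hasFDerivAt ?_
    · rw [ContinuousAt]
      nth_rewrite 1 [← hb2]
      rw [← hs.map_nhds_eq_of_equiv, tendsto_map'_iff]
      refine tendsto_id.congr' ?_
      filter_upwards [isOpen_ball.mem_nhds hb1] with x hx
      exact (hgf x hx).symm
    · filter_upwards [hVopen.mem_nhds hb] with b' hb' using (hgV b' hb').2
  have hlip : ∀ b ∈ ball (f z) R, g b ∈ closedBall z (Λ * R) := by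
    intro b hb
    have h1 := (convex_ball (f z) R).norm_image_sub_le_of_norm_hasFDerivWithin_le
      (f := g) (fun b hb => (hgd b (hsub hb)).hasFDerivWithinAt)
      (fun b hb => hf' _ (hgV b (hsub hb)).1) (mem_ball_self hR0) hb
    rw [hgf z (mem_ball_self hr)] at h1
    rw [mem_closedBall, dist_eq_norm]
    refine h1.trans ?_
    rw [mem_ball, dist_eq_norm] at hb
    gcongr
  have hΛr : closedBall z (Λ * R) ⊆ ball z r := closedBall_subset_ball hcon
  have h2 : ball (f z) R ⊆ f '' closedBall z (Λ * R) := fun b hb =>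
    ⟨g b, hlip b hb, (hgV b (hsub hb)).2⟩
  have h3 : closedBall (f z) R ⊆ f '' closedBall z (Λ * R) := by
    rw [← closure_ball _ hR0.ne']
    exact closure_minimal h2 ((isCompact_closedBall _ _).image_of_continuousOn
      (hcont.mono (hΛr.trans ball_subset_closedBall))).isClosed
  obtain ⟨x, hx, hxy⟩ := h3 (mem_closedBall.2 hR.ge)
  have hxb := hΛr hx
  have := hinj (hzU (ball_subset_closedBall hxb)) (hzU hyc) hxy
  rw [this, mem_ball] at hxb
  rw [mem_sphere] at hy
  linarith

/-! ### The Euclidean norm and conformal linear maps -/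

section euclid
variable {d : ℕ}

/-- The Euclidean norm on `Euc d`, which carries the maximum norm by default. -/
noncomputable def euNorm (v : Euc d) : ℝ := Real.sqrt (v ⬝ᵥ v)

lemma dotProduct_self_nonneg' (v : Euc d) : 0 ≤ v ⬝ᵥ v :=
  Finset.sum_nonneg fun i _ => mul_self_nonneg (v i)

lemma norm_le_euNorm (v : Euc d) : ‖v‖ ≤ euNorm v := by
  refine (pi_norm_le_iff_of_nonneg (Real.sqrt_nonneg _)).2 fun i => ?_
  refine Real.le_sqrt_of_sq_le ?_
  rw [Real.norm_eq_abs, sq_abs, sq]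
  exact Finset.single_le_sum (f := fun i => v i * v i) (fun i _ => mul_self_nonneg (v i))
    (Finset.mem_univ i)

lemma euNorm_le (v : Euc d) : euNorm v ≤ d * ‖v‖ := by
  refine Real.sqrt_le_iff.2 ⟨by positivity, ?_⟩
  calc v ⬝ᵥ v = ∑ i, v i * v i := rfl
    _ ≤ ∑ i : Fin d, ‖v‖ * ‖v‖ := Finset.sum_le_sum fun i _ => by
      have := norm_le_pi_norm v i
      rw [Real.norm_eq_abs] at this
      nlinarith [abs_mul_abs_self (v i), abs_nonneg (v i)]
    _ = d * (‖v‖ * ‖v‖) := by simp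
    _ ≤ (d * d : ℝ) * (‖v‖ * ‖v‖) := by
      refine mul_le_mul_of_nonneg_right ?_ (by positivity)
      exact_mod_cast Nat.le_mul_self d
    _ = (d * ‖v‖) ^ 2 := by ring

lemma euNorm_smul {c : ℝ} (hc : 0 ≤ c) (v : Euc d) : euNorm (c • v) = c * euNorm v := by
  rw [euNorm, smul_dotProduct, dotProduct_smul, smul_eq_mul, smul_eq_mul, ← mul_assoc,
    Real.sqrt_mul (mul_nonneg hc hc), Real.sqrt_mul_self hc, euNorm]

lemma euNorm_mulVec {O : Matrix (Fin d) (Fin d) ℝ} (hO : O ∈ Matrix.orthogonalGroup (Fin d) ℝ)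
    (v : Euc d) : euNorm (O.mulVec v) = euNorm v := by
  have h : O.transpose * O = 1 := (Matrix.mem_orthogonalGroup_iff' (Fin d) ℝ).1 hO
  rw [euNorm, euNorm, Matrix.dotProduct_mulVec, ← Matrix.vecMul_transpose, Matrix.vecMul_vecMul, h,
    Matrix.vecMul_one]

lemma euNorm_eq_zero {v : Euc d} (h : euNorm v = 0) : v = 0 :=
  norm_le_zero_iff.1 ((norm_le_euNorm v).trans h.le)

/-- The scaling factor of a conformal derivative. -/
lemma confScale_eq (hd : 1 ≤ d) {f : Euc d → Euc d} {x : Euc d} {c : ℝ} (hc : 0 < c)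
    {O : Matrix (Fin d) (Fin d) ℝ} (hO : O ∈ Matrix.orthogonalGroup (Fin d) ℝ)
    (h : (fderiv ℝ f x : Euc d →ₗ[ℝ] Euc d) = c • O.mulVecLin) : confScale f x = c := by
  have hdet : |O.det| = 1 := by
    have h1 : O.transpose * O = 1 := (Matrix.mem_orthogonalGroup_iff' (Fin d) ℝ).1 hO
    have h2 := congrArg Matrix.det h1
    rw [Matrix.det_mul, Matrix.det_transpose, Matrix.det_one, ← abs_mul_abs_self] at h2
    nlinarith [abs_nonneg O.det]
  have hd0 : (d : ℝ) ≠ 0 := by positivity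
  rw [confScale, h, LinearMap.det_smul]
  rw [← Matrix.toLin'_apply', LinearMap.det_toLin', abs_mul, hdet, mul_one, Module.finrank_fin_fun,
    abs_of_pos (by positivity), ← Real.rpow_natCast, ← Real.rpow_mul hc.le, mul_inv_cancel₀ hd0,
    Real.rpow_one]

end euclid

/-! ### Bounded distortion for conformal iterated function systems -/

section conf
variable {d : ℕ}

lemma euNorm_eq_toLp (v : Euc d) : euNorm v = ‖WithLp.toLp 2 v‖ := by
  rw [EuclideanSpace.norm_eq, euNorm]
  congr 1
  exact Finset.sum_congr rfl fun i _ => by simp [sq]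

lemma euNorm_add_le (v w : Euc d) : euNorm (v + w) ≤ euNorm v + euNorm w := by
  simp only [euNorm_eq_toLp]
  exact norm_add_le (WithLp.toLp 2 v) (WithLp.toLp 2 w)

variable (hd : 1 ≤ d) (Φ : ConformalIFS d)
include hd

lemma confScale_spec (i : Fin Φ.n) {x : Euc d} (hx : x ∈ ball (0 : Euc d) 1) :
    0 < confScale (Φ.funs i) x ∧
      ∀ v, euNorm (fderiv ℝ (Φ.funs i) x v) = confScale (Φ.funs i) x * euNorm v := by
  obtain ⟨c, hc, O, hO, h⟩ := (Φ.conf i).2.2.2.1 x hx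
  rw [confScale_eq hd hc hO h]
  refine ⟨hc, fun v => ?_⟩
  have : fderiv ℝ (Φ.funs i) x v = c • O.mulVec v := by
    have := LinearMap.congr_fun h v
    simpa using this
  rw [this, euNorm_smul hc.le, euNorm_mulVec hO]

lemma exists_strictDeriv (i : Fin Φ.n) {x : Euc d} (hx : x ∈ ball (0 : Euc d) 1) :
    ∃ L : Euc d ≃L[ℝ] Euc d, HasStrictFDerivAt (Φ.funs i) (L : Euc d →L[ℝ] Euc d) x ∧
      ∀ v, euNorm (L v) = confScale (Φ.funs i) x * euNorm v := by
  obtain ⟨hc, hv⟩ := confScale_spec hd Φ i hx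
  have hinj : Function.Injective (fderiv ℝ (Φ.funs i) x : Euc d →ₗ[ℝ] Euc d) := by
    rw [← LinearMap.ker_eq_bot, LinearMap.ker_eq_bot']
    intro v h0
    have h1 := hv v
    have h2 : fderiv ℝ (Φ.funs i) x v = 0 := h0
    rw [h2] at h1
    have h3 : euNorm (0 : Euc d) = 0 := by simp [euNorm]
    rw [h3] at h1
    exact euNorm_eq_zero ((mul_eq_zero.1 h1.symm).resolve_left hc.ne')
  refine ⟨(LinearEquiv.ofInjectiveEndo _ hinj).toContinuousLinearEquiv, ?_, fun v => hv v⟩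
  have e : (((LinearEquiv.ofInjectiveEndo _ hinj).toContinuousLinearEquiv : Euc d ≃L[ℝ] Euc d) :
      Euc d →L[ℝ] Euc d) = fderiv ℝ (Φ.funs i) x := by ext v; rfl
  rw [e]
  obtain ⟨C, α, hα, hH⟩ := (Φ.conf i).2.2.2.2
  refine hasStrictFDerivAt_of_hasFDerivAt_of_continuousAt ?_
    ((hH.continuousOn hα).continuousAt (isOpen_ball.mem_nhds hx))
  filter_upwards [isOpen_ball.mem_nhds hx] with y hy
  exact ((Φ.conf i).2.2.1 y hy).hasFDerivAt

omit hd in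
lemma exists_contr : ∃ θ : ℝ, 0 < θ ∧ θ < 1 ∧
    ∀ i, ∀ x ∈ ball (0 : Euc d) 1, confScale (Φ.funs i) x ≤ θ := by
  choose r hr hrx using Φ.contr
  have hne : (Finset.univ : Finset (Fin Φ.n)).Nonempty :=
    ⟨⟨0, by have := Φ.two_le; omega⟩, Finset.mem_univ _⟩
  refine ⟨max (1 / 2) (Finset.univ.sup' hne r), by positivity, ?_, fun i x hx => ?_⟩
  · rw [max_lt_iff]
    exact ⟨by norm_num, (Finset.sup'_lt_iff hne).2 fun i _ => hr i⟩
  · exact (hrx i x hx).trans ((Finset.le_sup' r (Finset.mem_univ i)).trans (le_max_right _ _))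

omit hd in
lemma exists_radius : ∃ ρ : ℝ, 0 < ρ ∧ ρ < 1 ∧
    ∀ i, ∀ x ∈ ball (0 : Euc d) 1, Φ.funs i x ∈ closedBall (0 : Euc d) ρ := by
  have h : ∀ i, ∃ ρ : ℝ, ρ < 1 ∧ ∀ x ∈ ball (0 : Euc d) 1,
      Φ.funs i x ∈ closedBall (0 : Euc d) ρ := by
    intro i
    have hcl := (Φ.conf i).2.1
    have hcomp : IsCompact (closure (Φ.funs i '' ball (0 : Euc d) 1)) :=
      (isCompact_closedBall (0 : Euc d) 1).of_isClosed_subset isClosed_closure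
        (hcl.trans ball_subset_closedBall)
    have hne : (closure (Φ.funs i '' ball (0 : Euc d) 1)).Nonempty :=
      ⟨_, subset_closure ⟨0, by simp, rfl⟩⟩
    obtain ⟨y, hy, hmax⟩ := hcomp.exists_isMaxOn hne continuous_norm.continuousOn
    refine ⟨‖y‖, by simpa using hcl hy, fun x hx => ?_⟩
    rw [mem_closedBall, dist_zero_right]
    exact hmax (subset_closure ⟨x, hx, rfl⟩)
  choose r hr hrx using h
  have hne : (Finset.univ : Finset (Fin Φ.n)).Nonempty :=
    ⟨⟨0, by have := Φ.two_le; omega⟩, Finset.mem_univ _⟩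
  refine ⟨max (1 / 2) (Finset.univ.sup' hne r), by positivity, ?_, fun i x hx => ?_⟩
  · rw [max_lt_iff]
    exact ⟨by norm_num, (Finset.sup'_lt_iff hne).2 fun i _ => hr i⟩
  · exact closedBall_subset_closedBall
      ((Finset.le_sup' r (Finset.mem_univ i)).trans (le_max_right _ _)) (hrx i x hx)

omit hd in
/-- The scaling factor of the derivative of a composition along a word, by the chain rule. -/
noncomputable def wScale : List (Fin Φ.n) → Euc d → ℝ
  | [], _ => 1
  | i :: u, x => confScale (Φ.funs i) (u.foldr Φ.funs x) * wScale u x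

omit hd in
lemma foldr_mem (u : List (Fin Φ.n)) {x : Euc d} (hx : x ∈ ball (0 : Euc d) 1) :
    u.foldr Φ.funs x ∈ ball (0 : Euc d) 1 := by
  induction u with
  | nil => exact hx
  | cons i u ih => exact (Φ.conf i).2.1 (subset_closure ⟨_, ih, rfl⟩)

omit hd in
lemma foldr_injOn (u : List (Fin Φ.n)) : InjOn (fun x => u.foldr Φ.funs x) (ball (0 : Euc d) 1) := by
  induction u with
  | nil => exact fun x _ y _ h => h
  | cons i u ih =>
    intro x hx y hy h
    exact ih hx hy ((Φ.conf i).1 (foldr_mem Φ u hx) (foldr_mem Φ u hy) h)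

lemma wScale_pos (u : List (Fin Φ.n)) {x : Euc d} (hx : x ∈ ball (0 : Euc d) 1) :
    0 < wScale Φ u x := by
  induction u with
  | nil => exact one_pos
  | cons i u ih => exact mul_pos (confScale_spec hd Φ i (foldr_mem Φ u hx)).1 ih

lemma wScale_le {θ : ℝ} (hθ0 : 0 < θ) (hθ : ∀ i, ∀ x ∈ ball (0 : Euc d) 1, confScale (Φ.funs i) x ≤ θ)
    (u : List (Fin Φ.n)) {x : Euc d} (hx : x ∈ ball (0 : Euc d) 1) :
    wScale Φ u x ≤ θ ^ u.length := by
  induction u with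
  | nil => simp [wScale]
  | cons i u ih =>
    rw [List.length_cons, pow_succ']
    exact mul_le_mul (hθ i _ (foldr_mem Φ u hx)) ih (wScale_pos hd Φ u hx).le hθ0.le

lemma exists_strictDeriv_word (u : List (Fin Φ.n)) {x : Euc d} (hx : x ∈ ball (0 : Euc d) 1) :
    ∃ L : Euc d ≃L[ℝ] Euc d,
      HasStrictFDerivAt (fun x => u.foldr Φ.funs x) (L : Euc d →L[ℝ] Euc d) x ∧
      ∀ v, euNorm (L v) = wScale Φ u x * euNorm v := by
  induction u with
  | nil =>
    exact ⟨ContinuousLinearEquiv.refl ℝ _, hasStrictFDerivAt_id x, fun v => by simp [wScale]⟩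
  | cons i u ih =>
    obtain ⟨L, hL, hLv⟩ := ih
    obtain ⟨L', hL', hLv'⟩ := exists_strictDeriv hd Φ i (foldr_mem Φ u hx)
    refine ⟨L.trans L', hL'.comp x hL, fun v => ?_⟩
    rw [ContinuousLinearEquiv.trans_apply, hLv', hLv, wScale, mul_assoc]

/-- The mean value inequality for the maps of words. -/
lemma dist_foldr_le (u : List (Fin Φ.n)) {S : Set (Euc d)} (hS : Convex ℝ S)
    (hSU : S ⊆ ball (0 : Euc d) 1) {c : ℝ} (hc : ∀ x ∈ S, wScale Φ u x ≤ c) {x y : Euc d}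
    (hx : x ∈ S) (hy : y ∈ S) :
    dist (u.foldr Φ.funs x) (u.foldr Φ.funs y) ≤ d * c * dist x y := by
  have hc0 : 0 ≤ c := (wScale_pos hd Φ u (hSU hx)).le.trans (hc x hx)
  choose! L hL hLv using fun (x : Euc d) (hx : x ∈ ball (0 : Euc d) 1) =>
    exists_strictDeriv_word hd Φ u hx
  rw [dist_eq_norm, dist_eq_norm]
  refine hS.norm_image_sub_le_of_norm_hasFDerivWithin_le
    (f := fun x => u.foldr Φ.funs x) (f' := fun x => (L x : Euc d →L[ℝ] Euc d))
    (fun x hx => (hL x (hSU hx)).hasFDerivAt.hasFDerivWithinAt) (fun x hx => ?_) hy hx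
  refine ContinuousLinearMap.opNorm_le_bound _ (by positivity) fun v => ?_
  calc ‖L x v‖ ≤ euNorm (L x v) := norm_le_euNorm _
    _ = wScale Φ u x * euNorm v := hLv x (hSU hx) v
    _ ≤ c * (d * ‖v‖) :=
      mul_le_mul (hc x hx) (euNorm_le v) (Real.sqrt_nonneg _) hc0
    _ = d * c * ‖v‖ := by ring

/-- The lower counterpart of `dist_foldr_le`. -/
lemma le_dist_foldr (u : List (Fin Φ.n)) {z w : Euc d} {r c : ℝ} (hr : 0 < r)
    (hz : closedBall z r ⊆ ball (0 : Euc d) 1) (hc0 : 0 < c)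
    (hc : ∀ x ∈ closedBall z r, c ≤ wScale Φ u x) (hw : w ∈ ball (0 : Euc d) 1)
    (hzw : r ≤ dist w z) :
    c * r ≤ d * dist (u.foldr Φ.funs w) (u.foldr Φ.funs z) := by
  have : Nonempty (Fin d) := ⟨⟨0, hd⟩⟩
  choose! L hL hLv using fun (x : Euc d) (hx : x ∈ ball (0 : Euc d) 1) =>
    exists_strictDeriv_word hd Φ u hx
  have h := le_mul_dist_of_injOn (f' := L) (Λ := d / c) (foldr_injOn Φ u) hr (by positivity) hz
    (fun x hx => hL x (hz hx)) (fun x hx => ?_) hw hzw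
  · rw [div_mul_eq_mul_div, le_div_iff₀ hc0] at h
    linarith
  · refine ContinuousLinearMap.opNorm_le_bound _ (by positivity) fun v => ?_
    have hxb := ball_subset_closedBall hx
    have h1 := hLv x (hz hxb) ((L x).symm v)
    rw [ContinuousLinearEquiv.apply_symm_apply] at h1
    have h2 : c * ‖(L x).symm v‖ ≤ d * ‖v‖ := by
      calc c * ‖(L x).symm v‖ ≤ wScale Φ u x * euNorm ((L x).symm v) :=
            mul_le_mul (hc x hxb) (norm_le_euNorm _) (norm_nonneg _)
              (wScale_pos hd Φ u (hz hxb)).le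
        _ = euNorm v := h1.symm
        _ ≤ d * ‖v‖ := euNorm_le v
    change ‖(L x).symm v‖ ≤ _
    rw [div_mul_eq_mul_div, le_div_iff₀ hc0]
    linarith

/-- The scaling factors vary by a bounded ratio between points which are exponentially close. -/
lemma confScale_ratio (i : Fin Φ.n) {ρ : ℝ} (hρ0 : 0 < ρ) (hρ : ρ < 1) {B θ : ℝ} (hB : 0 ≤ B)
    (hθ0 : 0 < θ) (hθ1 : θ < 1) : ∃ A q : ℝ, 0 ≤ A ∧ 0 < q ∧ q < 1 ∧
      ∀ k : ℕ, ∀ x ∈ closedBall (0 : Euc d) ρ, ∀ y ∈ closedBall (0 : Euc d) ρ,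
        dist x y ≤ B * θ ^ k →
        confScale (Φ.funs i) x ≤ confScale (Φ.funs i) y * Real.exp (A * q ^ k) := by
  have hsub : closedBall (0 : Euc d) ρ ⊆ ball 0 1 := closedBall_subset_ball hρ
  obtain ⟨C, α, hα, hH⟩ := (Φ.conf i).2.2.2.2
  have hα' : (0 : ℝ) < α := hα
  have hcont : ContinuousOn (confScale (Φ.funs i)) (closedBall (0 : Euc d) ρ) := by
    have h1 : ContinuousOn (fun x => fderiv ℝ (Φ.funs i) x) (closedBall (0 : Euc d) ρ) :=
      (hH.continuousOn hα).mono hsub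
    have h2 : Continuous fun L : Euc d →L[ℝ] Euc d => |L.det| ^ ((d : ℝ)⁻¹) :=
      (ContinuousLinearMap.continuous_det.abs).rpow_const fun _ => Or.inr (by positivity)
    exact h2.comp_continuousOn h1
  obtain ⟨x₀, hx₀, hmin⟩ := (isCompact_closedBall (0 : Euc d) ρ).exists_isMinOn
    ⟨0, mem_closedBall_self hρ0.le⟩ hcont
  set m := confScale (Φ.funs i) x₀ with hm
  have hm0 : 0 < m := (confScale_spec hd Φ i (hsub hx₀)).1
  refine ⟨d * C * B ^ (α : ℝ) / m, θ ^ (α : ℝ), by positivity, by positivity,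
    Real.rpow_lt_one hθ0.le hθ1 hα', fun k x hx y hy hxy => ?_⟩
  obtain ⟨hcx, hvx⟩ := confScale_spec hd Φ i (hsub hx)
  obtain ⟨hcy, hvy⟩ := confScale_spec hd Φ i (hsub hy)
  set e : Euc d := fun _ => 1 with he
  have hen : ‖e‖ = 1 := by
    have : Nonempty (Fin d) := ⟨⟨0, hd⟩⟩
    rw [he, pi_norm_const]; simp
  have he1 : 1 ≤ euNorm e := hen ▸ norm_le_euNorm e
  have hdist : ‖fderiv ℝ (Φ.funs i) x - fderiv ℝ (Φ.funs i) y‖ ≤ C * (dist x y) ^ (α : ℝ) := by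
    rw [← dist_eq_norm]
    exact hH.dist_le (hsub hx) (hsub hy)
  have h1 : confScale (Φ.funs i) x * euNorm e ≤ confScale (Φ.funs i) y * euNorm e +
      d * (C * (dist x y) ^ (α : ℝ)) := by
    rw [← hvx, ← hvy]
    have e1 : fderiv ℝ (Φ.funs i) x e = fderiv ℝ (Φ.funs i) y e +
        (fderiv ℝ (Φ.funs i) x - fderiv ℝ (Φ.funs i) y) e := by simp
    rw [e1]
    refine (euNorm_add_le _ _).trans ?_
    gcongr
    refine (euNorm_le _).trans ?_
    gcongr
    refine (ContinuousLinearMap.le_opNorm _ _).trans ?_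
    rw [hen, mul_one]
    exact hdist
  have h2 : (dist x y) ^ (α : ℝ) ≤ B ^ (α : ℝ) * (θ ^ (α : ℝ)) ^ k := by
    calc (dist x y) ^ (α : ℝ) ≤ (B * θ ^ k) ^ (α : ℝ) :=
          Real.rpow_le_rpow dist_nonneg hxy hα'.le
      _ = B ^ (α : ℝ) * (θ ^ (α : ℝ)) ^ k := by
        rw [Real.mul_rpow hB (by positivity), ← Real.rpow_natCast, ← Real.rpow_natCast,
          ← Real.rpow_mul hθ0.le, ← Real.rpow_mul hθ0.le, mul_comm (k : ℝ)]
  set X := (d : ℝ) * C * B ^ (α : ℝ) * (θ ^ (α : ℝ)) ^ k with hX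
  have hX0 : 0 ≤ X := by positivity
  have h3 : (d : ℝ) * (C * (dist x y) ^ (α : ℝ)) ≤ X := by
    calc (d : ℝ) * (C * (dist x y) ^ (α : ℝ))
        ≤ d * (C * (B ^ (α : ℝ) * (θ ^ (α : ℝ)) ^ k)) := by gcongr
      _ = X := by rw [hX]; ring
  have h4 : confScale (Φ.funs i) x ≤ confScale (Φ.funs i) y + X := by
    have : confScale (Φ.funs i) x * euNorm e ≤ (confScale (Φ.funs i) y + X) * euNorm e := by
      nlinarith
    exact le_of_mul_le_mul_right this (by linarith)
  have hmy : m ≤ confScale (Φ.funs i) y := hmin hy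
  have h5 : X ≤ confScale (Φ.funs i) y * (X / m) := by
    rw [mul_div_assoc', le_div_iff₀ hm0, mul_comm]
    gcongr
  calc confScale (Φ.funs i) x ≤ confScale (Φ.funs i) y + X := h4
    _ ≤ confScale (Φ.funs i) y * (X / m + 1) := by linarith
    _ ≤ confScale (Φ.funs i) y * Real.exp (X / m) := by gcongr; exact Real.add_one_le_exp _
    _ = _ := by
      congr 2
      rw [hX]; ring

/-- Bounded distortion of the scaling factors of words. -/
lemma wScale_ratio {ρ : ℝ} (hρ0 : 0 < ρ) (hρ : ρ < 1)
    (hmaps : ∀ i, ∀ x ∈ ball (0 : Euc d) 1, Φ.funs i x ∈ closedBall (0 : Euc d) ρ) :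
    ∃ D : ℝ, 1 ≤ D ∧ ∀ u, ∀ x ∈ closedBall (0 : Euc d) ρ, ∀ y ∈ closedBall (0 : Euc d) ρ,
      wScale Φ u x ≤ D * wScale Φ u y := by
  have hsub : closedBall (0 : Euc d) ρ ⊆ ball 0 1 := closedBall_subset_ball hρ
  obtain ⟨θ, hθ0, hθ1, hθ⟩ := exists_contr Φ
  choose A q hA hq0 hq1 hAq using fun i =>
    confScale_ratio hd Φ i hρ0 hρ (B := d * 2) (by positivity) hθ0 hθ1
  have hne : (Finset.univ : Finset (Fin Φ.n)).Nonempty :=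
    ⟨⟨0, by have := Φ.two_le; omega⟩, Finset.mem_univ _⟩
  set A' := Finset.univ.sup' hne A with hA'
  set q' := Finset.univ.sup' hne q with hq'
  have hAle : ∀ i, A i ≤ A' := fun i => Finset.le_sup' A (Finset.mem_univ i)
  have hqle : ∀ i, q i ≤ q' := fun i => Finset.le_sup' q (Finset.mem_univ i)
  have hA'0 : 0 ≤ A' := (hA hne.choose).trans (hAle _)
  have hq'0 : 0 < q' := (hq0 hne.choose).trans_le (hqle _)
  have hq'1 : q' < 1 := (Finset.sup'_lt_iff hne).2 fun i _ => hq1 i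
  have hmem : ∀ (u : List (Fin Φ.n)), ∀ x ∈ closedBall (0 : Euc d) ρ,
      u.foldr Φ.funs x ∈ closedBall (0 : Euc d) ρ := by
    intro u x hx
    cases u with
    | nil => exact hx
    | cons i u => exact hmaps i _ (foldr_mem Φ u (hsub hx))
  have key : ∀ u, ∀ x ∈ closedBall (0 : Euc d) ρ, ∀ y ∈ closedBall (0 : Euc d) ρ,
      wScale Φ u x ≤ wScale Φ u y * Real.exp (A' * ∑ k ∈ Finset.range u.length, q' ^ k) := by
    intro u x hx y hy
    induction u with
    | nil => simp [wScale]
    | cons i u ih =>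
      have hdist : dist (u.foldr Φ.funs x) (u.foldr Φ.funs y) ≤ d * 2 * θ ^ u.length := by
        have h1 := dist_foldr_le hd Φ u (convex_closedBall 0 ρ) hsub
          (fun x hx => wScale_le hd Φ hθ0 hθ u (hsub hx)) hx hy
        have h2 : dist x y ≤ 2 := by
          have := dist_triangle_right x y 0
          rw [mem_closedBall] at hx hy
          linarith
        calc _ ≤ _ := h1
          _ ≤ d * θ ^ u.length * 2 := by gcongr
          _ = _ := by ring
      have h3 := hAq i u.length _ (hmem u x hx) _ (hmem u y hy) hdist
      have hcy := (confScale_spec hd Φ i (foldr_mem Φ u (hsub hy))).1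
      have h4 : confScale (Φ.funs i) (u.foldr Φ.funs x) ≤
          confScale (Φ.funs i) (u.foldr Φ.funs y) * Real.exp (A' * q' ^ u.length) := by
        refine h3.trans ?_
        have : A i * q i ^ u.length ≤ A' * q' ^ u.length :=
          mul_le_mul (hAle i) (pow_le_pow_left₀ (hq0 i).le (hqle i) _)
            (pow_nonneg (hq0 i).le _) hA'0
        gcongr
      rw [List.length_cons, Finset.sum_range_succ, mul_add, Real.exp_add, wScale, wScale]
      calc _ ≤ (confScale (Φ.funs i) (u.foldr Φ.funs y) * Real.exp (A' * q' ^ u.length)) *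
            (wScale Φ u y * Real.exp (A' * ∑ k ∈ Finset.range u.length, q' ^ k)) :=
            mul_le_mul h4 ih (wScale_pos hd Φ u (hsub hx)).le (by positivity)
        _ = _ := by ring
  refine ⟨Real.exp (A' * (1 - q')⁻¹), Real.one_le_exp ?_, fun u x hx y hy => ?_⟩
  · have : 0 < 1 - q' := by linarith
    positivity
  · rw [mul_comm]
    refine (key u x hx y hy).trans ?_
    have h1 : ∑ k ∈ Finset.range u.length, q' ^ k ≤ (1 - q')⁻¹ := by
      rw [← tsum_geometric_of_lt_one hq'0.le hq'1]
      exact (summable_geometric_of_lt_one hq'0.le hq'1).sum_le_tsum _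
        (fun k _ => by positivity)
    have h2 := (wScale_pos hd Φ u (hsub hy)).le
    gcongr

end conf

/-! ### From self-conformal measures to quasi-self-similar systems -/

section final
variable {d : ℕ}

/-- The coordinatewise retraction of `ℝ^d` onto the cube of radius `ρ`. It turns maps that are
only controlled on `(-1,1)^d` into globally continuous ones. -/
noncomputable def clamp (ρ : ℝ) (x : Euc d) : Euc d := fun j => max (-ρ) (min ρ (x j))

lemma continuous_clamp (ρ : ℝ) : Continuous (clamp (d := d) ρ) := by
  unfold clamp; fun_prop

lemma clamp_mem {ρ : ℝ} (hρ : 0 ≤ ρ) (x : Euc d) : clamp ρ x ∈ closedBall (0 : Euc d) ρ := by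
  rw [mem_closedBall_zero_iff, pi_norm_le_iff_of_nonneg hρ]
  intro j
  rw [Real.norm_eq_abs, abs_le, clamp]
  exact ⟨le_max_left _ _, max_le (by linarith) (min_le_left _ _)⟩

lemma clamp_eq {ρ : ℝ} (hρ : 0 ≤ ρ) {x : Euc d} (hx : x ∈ closedBall (0 : Euc d) ρ) :
    clamp ρ x = x := by
  rw [mem_closedBall_zero_iff, pi_norm_le_iff_of_nonneg hρ] at hx
  funext j
  have := abs_le.1 (Real.norm_eq_abs (x j) ▸ hx j)
  rw [clamp, min_eq_right this.2, max_eq_right this.1]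

variable (hd : 1 ≤ d) (Φ : ConformalIFS d)

lemma continuousOn_funs (i : Fin Φ.n) : ContinuousOn (Φ.funs i) (ball (0 : Euc d) 1) :=
  fun x hx => ((Φ.conf i).2.2.1 x hx).continuousAt.continuousWithinAt

lemma foldr_clamp_eq {ρ : ℝ} (hρ0 : 0 ≤ ρ) (hρ : ρ < 1)
    (hmaps : ∀ i, ∀ x ∈ ball (0 : Euc d) 1, Φ.funs i x ∈ closedBall (0 : Euc d) ρ)
    (u : List (Fin Φ.n)) {x : Euc d} (hx : x ∈ closedBall (0 : Euc d) ρ) :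
    u.foldr (fun i y => Φ.funs i (clamp ρ y)) x = u.foldr Φ.funs x ∧
      u.foldr Φ.funs x ∈ closedBall (0 : Euc d) ρ := by
  induction u with
  | nil => exact ⟨rfl, hx⟩
  | cons i u ih =>
    refine ⟨?_, hmaps i _ (closedBall_subset_ball hρ ih.2)⟩
    simp only [List.foldr_cons]
    rw [ih.1, clamp_eq hρ0 ih.2]

include hd in
/-- Two-sided bounded distortion: all compositions of maps of the system are, up to a uniform
constant, similarities on a slightly smaller cube. -/
lemma dist_distortion {ρ : ℝ} (hρ0 : 0 < ρ) (hρ : ρ < 1)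
    (hmaps : ∀ i, ∀ x ∈ ball (0 : Euc d) 1, Φ.funs i x ∈ closedBall (0 : Euc d) ρ) :
    ∃ C : ℝ, ∀ (u : List (Fin Φ.n)), ∀ x ∈ closedBall (0 : Euc d) ρ,
      ∀ y ∈ closedBall (0 : Euc d) ρ, ∀ z ∈ closedBall (0 : Euc d) ρ,
      ∀ w ∈ closedBall (0 : Euc d) ρ,
      dist (u.foldr Φ.funs x) (u.foldr Φ.funs y) * dist z w ≤
        C * dist (u.foldr Φ.funs z) (u.foldr Φ.funs w) * dist x y := by
  set ρ' : ℝ := (1 + ρ) / 2 with hρ'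
  have h1 : ρ < ρ' := by rw [hρ']; linarith
  have h2 : ρ' < 1 := by rw [hρ']; linarith
  have hsub : closedBall (0 : Euc d) ρ ⊆ closedBall 0 ρ' := closedBall_subset_closedBall h1.le
  have hsub' : closedBall (0 : Euc d) ρ' ⊆ ball 0 1 := closedBall_subset_ball h2
  obtain ⟨D, hD1, hD⟩ := wScale_ratio hd Φ (hρ0.trans h1) h2 fun i x hx => hsub (hmaps i x hx)
  have hD0 : 0 < D := by linarith
  set r₀ : ℝ := ρ' - ρ with hr₀
  have hr0 : 0 < r₀ := by linarith
  refine ⟨d * D * (2 / r₀) * (d * D), fun u x hx y hy z hz w hw => ?_⟩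
  rcases eq_or_ne z w with rfl | hzw
  · simp
  have hs : 0 < wScale Φ u z := wScale_pos hd Φ u (hsub' (hsub hz))
  have hup := dist_foldr_le hd Φ u (convex_closedBall (0 : Euc d) ρ') hsub'
    (fun y hy => hD u y hy z (hsub hz)) (hsub hx) (hsub hy)
  have hpos : 0 < dist z w := dist_pos.2 hzw
  have hball : closedBall z (min (dist w z) r₀) ⊆ closedBall (0 : Euc d) ρ' := by
    refine closedBall_subset_closedBall' ?_
    have := mem_closedBall.1 hz
    have := min_le_right (dist w z) r₀
    linarith
  have hlow := le_dist_foldr hd Φ u (z := z) (w := w) (r := min (dist w z) r₀)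
    (c := wScale Φ u z / D) (lt_min (by rwa [dist_comm]) hr0) (hball.trans hsub')
    (div_pos hs hD0)
    (fun y hy => (div_le_iff₀ hD0).2 (by rw [mul_comm]; exact hD u z (hsub hz) y (hball hy)))
    (hsub' (hsub hw)) (min_le_left _ _)
  have hr : r₀ / 2 * dist z w ≤ min (dist w z) r₀ := by
    have hdist : dist z w ≤ 2 := by
      have := dist_triangle_right z w 0
      have := mem_closedBall.1 hz
      have := mem_closedBall.1 hw
      linarith
    refine le_min ?_ ?_
    · rw [dist_comm w z]; nlinarith
    · nlinarith
  have hlow' : wScale Φ u z * dist z w ≤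
      2 / r₀ * (d * D) * dist (u.foldr Φ.funs z) (u.foldr Φ.funs w) := by
    rw [dist_comm (u.foldr Φ.funs w)] at hlow
    have h3 : wScale Φ u z / D * (r₀ / 2 * dist z w) ≤
        d * dist (u.foldr Φ.funs z) (u.foldr Φ.funs w) :=
      (mul_le_mul_of_nonneg_left hr (div_pos hs hD0).le).trans hlow
    calc wScale Φ u z * dist z w
        = 2 / r₀ * D * (wScale Φ u z / D * (r₀ / 2 * dist z w)) := by field_simp
      _ ≤ 2 / r₀ * D * (d * dist (u.foldr Φ.funs z) (u.foldr Φ.funs w)) := by gcongr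
      _ = _ := by ring
  calc dist (u.foldr Φ.funs x) (u.foldr Φ.funs y) * dist z w
      ≤ d * (D * wScale Φ u z) * dist x y * dist z w := by gcongr
    _ = d * D * dist x y * (wScale Φ u z * dist z w) := by ring
    _ ≤ d * D * dist x y *
        (2 / r₀ * (d * D) * dist (u.foldr Φ.funs z) (u.foldr Φ.funs w)) := by gcongr
    _ = _ := by ring

include hd in
/-- A self-conformal measure is the measure of a quasi-self-similar system. -/
theorem exists_qss {μ : Measure (Euc d)} (hμ : IsSelfConformal Φ μ) : ∃ Q : QSS d, Q.μ = μ := by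
  obtain ⟨hprob, hU, p, hp0, hp1, hstat⟩ := hμ
  obtain ⟨ρ, hρ0, hρ, hmaps⟩ := exists_radius Φ
  obtain ⟨θ, hθ0, hθ1, hθ⟩ := exists_contr Φ
  obtain ⟨C, hC⟩ := dist_distortion hd Φ hρ0 hρ hmaps
  have hsub : closedBall (0 : Euc d) ρ ⊆ ball 0 1 := closedBall_subset_ball hρ
  have hae : ∀ᵐ x ∂μ, x ∈ ball (0 : Euc d) 1 := hU
  have hmeas : ∀ i, AEMeasurable (Φ.funs i) μ := fun i => by
    rw [← Measure.restrict_eq_self_of_ae_mem hae]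
    exact (continuousOn_funs Φ i).aemeasurable measurableSet_ball
  have hμK : μ (closedBall (0 : Euc d) ρ)ᶜ = 0 := by
    rw [hstat]
    simp only [Measure.coe_finsetSum, Finset.sum_apply, Measure.smul_apply, smul_eq_mul]
    refine Finset.sum_eq_zero fun i _ => ?_
    rw [Measure.map_apply_of_aemeasurable (hmeas i) isClosed_closedBall.measurableSet.compl]
    have : μ (Φ.funs i ⁻¹' (closedBall (0 : Euc d) ρ)ᶜ) = 0 :=
      measure_mono_null (fun x hx hx' => hx (hmaps i x hx')) hU
    rw [this, mul_zero]
  have ha : (0 : Euc d) ∈ closedBall (0 : Euc d) ρ := by simp [hρ0.le]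
  have hb : (fun _ => ρ : Euc d) ∈ closedBall (0 : Euc d) ρ := by
    rw [mem_closedBall_zero_iff, pi_norm_le_iff_of_nonneg hρ0.le]
    intro j
    rw [Real.norm_eq_abs, abs_of_pos hρ0]
  have hab : (0 : Euc d) ≠ fun _ => ρ := fun h => hρ0.ne (congrFun h ⟨0, hd⟩)
  have hfold := fun (u : List (Fin Φ.n)) (x : Euc d) (hx : x ∈ closedBall (0 : Euc d) ρ) =>
    (foldr_clamp_eq Φ hρ0.le hρ hmaps u hx).1
  refine ⟨{
    n := Φ.n, g := fun i y => Φ.funs i (clamp ρ y), cont := fun i => ?_,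
    K := closedBall 0 ρ, hKc := isClosed_closedBall,
    hK1 := closedBall_subset_closedBall hρ.le,
    maps := fun i x => hmaps i _ (hsub (clamp_mem hρ0.le x)),
    a := 0, b := fun _ => ρ, ha := ha, hb := hb, hab := hab,
    C := max 1 (max C (2 * d)), hC := le_max_left _ _,
    bd := fun u x y z w hx hy hz hw => ?_,
    θ := θ, hθ0 := hθ0, hθ1 := hθ1, contr := fun u x y hx hy => ?_, ne := fun u => ?_,
    p := p, hp0 := hp0, hp1 := hp1, μ := μ, prob := hprob, hμK := hμK, stat := ?_ }, rfl⟩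
  · exact (continuousOn_funs Φ i).comp_continuous (continuous_clamp ρ)
      fun x => hsub (clamp_mem hρ0.le x)
  · rw [hfold u x hx, hfold u y hy, hfold u z hz, hfold u w hw]
    refine (hC u x hx y hy z hz w hw).trans ?_
    gcongr
    exact (le_max_left _ _).trans (le_max_right _ _)
  · rw [hfold u x hx, hfold u y hy]
    have h1 := dist_foldr_le hd Φ u (convex_closedBall (0 : Euc d) ρ) hsub
      (fun y hy => wScale_le hd Φ hθ0 hθ u (hsub hy)) hx hy
    have h2 : dist x y ≤ 2 := by
      have := dist_triangle_right x y 0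
      have := mem_closedBall.1 hx
      have := mem_closedBall.1 hy
      linarith
    calc dist (u.foldr Φ.funs x) (u.foldr Φ.funs y) ≤ d * θ ^ u.length * dist x y := h1
      _ ≤ d * θ ^ u.length * 2 := by gcongr
      _ = 2 * d * θ ^ u.length := by ring
      _ ≤ _ := by
        gcongr
        exact (le_max_right _ _).trans (le_max_right _ _)
  · rw [hfold u _ ha, hfold u _ hb]
    exact fun h => hab (foldr_injOn Φ u (hsub ha) (hsub hb) h)
  · refine hstat.trans (Finset.sum_congr rfl fun i _ => ?_)
    congr 1
    refine Measure.map_congr ?_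
    have : ∀ᵐ x ∂μ, x ∈ closedBall (0 : Euc d) ρ := hμK
    filter_upwards [this] with x hx
    rw [clamp_eq hρ0.le hx]

end final
end TangentReg

theorem selfconformal_is_tangentRegular
    {d : ℕ} (hd : 1 ≤ d) (Φ : ConformalIFS d)
    (μ : Measure (Euc d)) (hμ : IsSelfConformal Φ μ) :
    TangentRegular μ := by
  obtain ⟨Q, rfl⟩ := TangentReg.exists_qss hd Φ hμ
  exact Q.tangentRegular
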